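/- Let n ≥ 1, let K ⊆ ℂⁿ be a compact O(ℂⁿ)-convex set, let D ⊆ ℂ be an open neighborhood of the closed unit disk 𝔻̄ = {z ∈ ℂ : |z| ≤ 1}, and let g : D → ℂⁿ be an injective holomorphic map with nowhere-vanishing derivative (a holomorphic embedding of a neighborhood of the closed disk) such that g(D) ∩ K = ∅. Then the compact set K ∪ g(𝔻̄) is O(ℂⁿ)-convex, i.e. Ĥ(K ∪ g(𝔻̄)) = K ∪ g(𝔻̄). (This is the claim established in the proof of Lemma 4.4 of the paper, specialized to X = ℂⁿ.) -/

import Mathlib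

/-- The holomorphically convex hull of a set `K ⊆ ℂⁿ`: the set of points `z`
with `‖f z‖ ≤ sup_{w ∈ K} ‖f w‖` for every entire function `f : ℂⁿ → ℂ`. -/
def holomorphicHull {n : ℕ} (K : Set (EuclideanSpace ℂ (Fin n))) :
    Set (EuclideanSpace ℂ (Fin n)) :=
  {z | ∀ f : EuclideanSpace ℂ (Fin n) → ℂ, Differentiable ℂ f →
    ‖f z‖ ≤ sSup ((fun w => ‖f w‖) '' K)}

/-!
Write `A r` for the image under `g` of the closed disc of radius `r`, let `X` be the hull of
`K ∪ A 1`, and let `R > 1` be close to `1`. Call a set dominated near a point if entire functions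
satisfy the maximum principle on it there. A compact set dominated near each of its points off `K`
lies in the hull of `K`.

By Rossi's local maximum modulus principle, a consequence of the solution of Cousin's problem near
polynomially convex sets, `X` is dominated near each point off `K ∪ A 1`, and the closure of
`X \ A R` is dominated even near points of the disc. If the set of parameters `z` with `g z ∈ X`
has an interior point in the annulus `1 < ‖z‖ < R`, it contains the whole annulus: the interior is
closed there, because the number of sheets of `X` over the values of an entire function is locally
bounded, which lets a holomorphic section with values in `X` continue to lie in `X`. Then `X` is
dominated near every point off `K`, by the maximum principle on the disc, and `X` lies in the hull
of `K`. Otherwise the points of `X` on the annulus are limits of `X \ A R`, so the closure of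
`X \ A 1` is dominated near every point off `K`, and `X \ A 1` lies in the hull of `K`.
-/

open Set Filter Topology MeasureTheory Metric Complex

open scoped Interval

section ParametricIntegral

variable {E F : Type*} [NormedAddCommGroup E] [NormedSpace ℂ E] [NormedAddCommGroup F]
  [NormedSpace ℂ F]

theorem norm_fderiv_le_of_forall_mem_ball_norm_le {f : E → F} {x : E} {r C : ℝ} (hr : 0 < r)
    (hf : DifferentiableOn ℂ f (ball x r)) (hC : ∀ y ∈ ball x r, ‖f y‖ ≤ C) :
    ‖fderiv ℂ f x‖ ≤ 2 * C / r := by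
  refine norm_fderiv_le_div_of_mapsTo_ball hf (fun y hy => ?_) hr
  rw [mem_closedBall, dist_eq_norm]
  linarith [norm_sub_le (f y) (f x), hC y hy, hC x (mem_ball_self hr)]

theorem continuousOn_fderiv_of_continuousOn_uncurry [ProperSpace E] {T : Type*}
    [TopologicalSpace T] {U : Set E} (hU : IsOpen U) {I : Set T} {h : T → E → F}
    (hc : ContinuousOn h.uncurry (I ×ˢ U)) (hd : ∀ s ∈ I, DifferentiableOn ℂ (h s) U)
    {x : E} (hx : x ∈ U) : ContinuousOn (fun s => fderiv ℂ (h s) x) I := by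
  obtain ⟨r, hr, hrU⟩ := nhds_basis_closedBall.mem_iff.1 (hU.mem_nhds hx)
  have hball : ball x r ⊆ U := ball_subset_closedBall.trans hrU
  refine fun t ht => continuousWithinAt_iff'.2 fun ε hε => ?_
  obtain ⟨v, hv, hclose⟩ := (isCompact_closedBall x r).mem_uniformity_of_prod
    (hc.mono (prod_mono_right hrU)) ht (dist_mem_uniformity (show 0 < ε * r / 4 by positivity))
  filter_upwards [hv, self_mem_nhdsWithin] with s hsv hs
  have hdiff : DifferentiableOn ℂ (h s - h t) (ball x r) :=
    ((hd s hs).sub (hd t ht)).mono hball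
  have hbound := norm_fderiv_le_of_forall_mem_ball_norm_le hr hdiff fun y hy =>
    (dist_eq_norm (h s y) (h t y)).symm.trans_le (hclose s hsv y (ball_subset_closedBall hy)).le
  rw [dist_eq_norm, ← fderiv_sub ((hd s hs).differentiableAt (hU.mem_nhds hx))
    ((hd t ht).differentiableAt (hU.mem_nhds hx))]
  calc ‖fderiv ℂ (h s - h t) x‖ ≤ 2 * (ε * r / 4) / r := hbound
    _ = ε / 2 := by field_simp; norm_num
    _ < ε := half_lt_self hε

theorem differentiableOn_intervalIntegral_of_continuousOn_uncurry [ProperSpace E] [CompleteSpace F]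
    {U : Set E} (hU : IsOpen U) {a b : ℝ} {h : ℝ → E → F}
    (hc : ContinuousOn h.uncurry (uIcc a b ×ˢ U))
    (hd : ∀ s ∈ uIcc a b, DifferentiableOn ℂ (h s) U) :
    DifferentiableOn ℂ (fun x => ∫ s in a..b, h s x) U := by
  intro x₀ hx₀
  obtain ⟨r, hr, hrU⟩ := nhds_basis_closedBall.mem_iff.1 (hU.mem_nhds hx₀)
  obtain ⟨C, hC⟩ := (isCompact_uIcc.prod (isCompact_closedBall x₀ r)).exists_bound_of_continuousOn
    (hc.mono (prod_mono_right hrU))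
  have hcont : ∀ x ∈ U, ContinuousOn (fun s => h s x) (uIcc a b) := fun x hx =>
    hc.comp (f := fun s => (s, x)) (by fun_prop) fun s hs => ⟨hs, hx⟩
  have hball : ∀ x ∈ ball x₀ (r / 2), ball x (r / 2) ⊆ closedBall x₀ r := fun x hx =>
    (ball_subset_ball' (by linarith [mem_ball.1 hx])).trans ball_subset_closedBall
  have hsub : uIoc a b ⊆ uIcc a b := uIoc_subset_uIcc
  refine (intervalIntegral.hasFDerivAt_integral_of_dominated_of_fderiv_le (μ := volume)
    (F' := fun x s => fderiv ℂ (h s) x) (bound := fun _ => 2 * C / (r / 2))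
    (ball_mem_nhds x₀ (half_pos hr)) ?_ (hcont x₀ hx₀).intervalIntegrable ?_ ?_
    intervalIntegrable_const ?_).differentiableAt.differentiableWithinAt
  · filter_upwards [hU.mem_nhds hx₀] with x hx
    exact ((hcont x hx).mono hsub).aestronglyMeasurable measurableSet_uIoc
  · exact ((continuousOn_fderiv_of_continuousOn_uncurry hU hc hd hx₀).mono
      hsub).aestronglyMeasurable measurableSet_uIoc
  · refine ae_of_all _ fun s hs x hx => norm_fderiv_le_of_forall_mem_ball_norm_le (half_pos hr)
      ((hd s (hsub hs)).mono ((hball x hx).trans hrU)) fun y hy => ?_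
    exact hC (s, y) ⟨hsub hs, hball x hx hy⟩
  · refine ae_of_all _ fun s hs x hx =>
      ((hd s (hsub hs)).differentiableAt (hU.mem_nhds (hrU ?_))).hasFDerivAt
    exact hball x hx (mem_ball_self (half_pos hr))

end ParametricIntegral

section RectangleIntegral

variable {E : Type*} [NormedAddCommGroup E] [NormedSpace ℂ E]

/-- The contour integral of `f` along the boundary of the rectangle with opposite corners `z` and
`w`, in the form used by `Complex.integral_boundary_rect_eq_zero_of_differentiableOn`. -/
noncomputable def rectIntegral (f : ℂ → E) (z w : ℂ) : E :=
  (∫ x : ℝ in z.re..w.re, f (x + z.im * I)) - (∫ x : ℝ in z.re..w.re, f (x + w.im * I)) +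
    I • (∫ y : ℝ in z.im..w.im, f (w.re + y * I)) - I • ∫ y : ℝ in z.im..w.im, f (z.re + y * I)

/-- The boundary of the rectangle with opposite corners `z` and `w`. -/
def rectBoundary (z w : ℂ) : Set ℂ :=
  {u ∈ [[z.re, w.re]] ×ℂ [[z.im, w.im]] | u.re = z.re ∨ u.re = w.re ∨ u.im = z.im ∨ u.im = w.im}

variable {f g : ℂ → E} {z w : ℂ}

theorem add_im_mul_I_mem_rectBoundary {x : ℝ} (hx : x ∈ [[z.re, w.re]]) :
    x + z.im * I ∈ rectBoundary z w ∧ x + w.im * I ∈ rectBoundary z w := by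
  simp [rectBoundary, mem_reProdIm, hx]

theorem re_add_mul_I_mem_rectBoundary {y : ℝ} (hy : y ∈ [[z.im, w.im]]) :
    z.re + y * I ∈ rectBoundary z w ∧ w.re + y * I ∈ rectBoundary z w := by
  simp [rectBoundary, mem_reProdIm, hy]

theorem rectIntegral_congr (h : EqOn f g (rectBoundary z w)) :
    rectIntegral f z w = rectIntegral g z w := by
  unfold rectIntegral
  congr 2
  · congr 1 <;> refine intervalIntegral.integral_congr fun x hx => h ?_
    exacts [(add_im_mul_I_mem_rectBoundary hx).1, (add_im_mul_I_mem_rectBoundary hx).2]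
  · congr 1; exact intervalIntegral.integral_congr fun y hy =>
      h (re_add_mul_I_mem_rectBoundary hy).2
  · exact intervalIntegral.integral_congr fun y hy => h (re_add_mul_I_mem_rectBoundary hy).1

theorem rectIntegral_add (hf : ContinuousOn f (rectBoundary z w))
    (hg : ContinuousOn g (rectBoundary z w)) :
    rectIntegral (fun u => f u + g u) z w = rectIntegral f z w + rectIntegral g z w := by
  have side : ∀ {γ : ℝ → ℂ} {p q : ℝ}, Continuous γ → MapsTo γ [[p, q]] (rectBoundary z w) →
      ∫ s in p..q, f (γ s) + g (γ s) = (∫ s in p..q, f (γ s)) + ∫ s in p..q, g (γ s) :=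
    fun hγ hm => intervalIntegral.integral_add (hf.comp hγ.continuousOn hm).intervalIntegrable
      (hg.comp hγ.continuousOn hm).intervalIntegrable
  unfold rectIntegral
  rw [side (by fun_prop) fun x hx => (add_im_mul_I_mem_rectBoundary hx).1,
    side (by fun_prop) fun x hx => (add_im_mul_I_mem_rectBoundary hx).2,
    side (by fun_prop) fun y hy => (re_add_mul_I_mem_rectBoundary hy).1,
    side (by fun_prop) fun y hy => (re_add_mul_I_mem_rectBoundary hy).2]
  simp only [smul_add]
  abel

theorem rectIntegral_smul_const [CompleteSpace E] (f : ℂ → ℂ) (v : E) :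
    rectIntegral (fun u => f u • v) z w = rectIntegral f z w • v := by
  simp only [rectIntegral, intervalIntegral.integral_smul_const, add_smul, sub_smul, smul_assoc]

theorem integral_inv_eq_log_sub_log {γ : ℝ → ℂ} {γ' : ℂ} {p q : ℝ}
    (hγ : ∀ s, HasDerivAt γ γ' s) (hm : ∀ s ∈ [[p, q]], γ s ∈ slitPlane) :
    γ' * ∫ s in p..q, (γ s)⁻¹ = log (γ q) - log (γ p) := by
  have hc : Continuous γ := continuous_iff_continuousAt.2 fun s => (hγ s).continuousAt
  rw [← intervalIntegral.integral_const_mul]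
  refine intervalIntegral.integral_eq_sub_of_hasDerivAt
    (fun s hs => ((hγ s).clog_real (hm s hs)).congr_deriv (div_eq_mul_inv _ _)) ?_
  exact (continuousOn_const.mul (hc.continuousOn.inv₀ fun s hs =>
    slitPlane_ne_zero (hm s hs))).intervalIntegrable

theorem rectIntegral_inv_sub {u : ℂ} (hu : u ∈ Ioo z.re w.re ×ℂ Ioo z.im w.im) :
    rectIntegral (fun ζ => (ζ - u)⁻¹) z w = 2 * Real.pi * I := by
  obtain ⟨⟨hzre, hwre⟩, hzim, hwim⟩ := hu
  have horizontal : ∀ c s, HasDerivAt (fun x : ℝ => (x : ℂ) + c - u) 1 s := fun c s =>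
    ((hasDerivAt_id s).ofReal_comp.add_const c).sub_const u
  have vertical : ∀ c s, HasDerivAt (fun y : ℝ => c + (y : ℂ) * I - u) I s := fun c s =>
    ((((hasDerivAt_id s).ofReal_comp.mul_const I).const_add c).sub_const u).congr_deriv (by simp)
  have bottom := integral_inv_eq_log_sub_log (p := z.re) (q := w.re) (horizontal (z.im * I))
    fun s _ => .inr (by simpa using (sub_neg.2 hzim).ne)
  have top := integral_inv_eq_log_sub_log (p := z.re) (q := w.re) (horizontal (w.im * I))
    fun s _ => .inr (by simpa using (sub_pos.2 hwim).ne')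
  have right := integral_inv_eq_log_sub_log (p := z.im) (q := w.im) (vertical w.re)
    fun s _ => .inl (by simpa using hwre)
  have left := integral_inv_eq_log_sub_log (p := z.im) (q := w.im)
    (fun s => (vertical z.re s).neg) fun s _ => .inl (by simpa using hzre)
  have log_neg_top : log (-(z.re + w.im * I - u)) = log (z.re + w.im * I - u) - Real.pi * I := by
    rw [log, log, norm_neg, arg_neg_eq_arg_sub_pi_of_im_pos (by simpa using hwim)]
    push_cast; ring
  have log_neg_bottom :
      log (-(z.re + z.im * I - u)) = log (z.re + z.im * I - u) + Real.pi * I := by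
    rw [log, log, norm_neg, arg_neg_eq_arg_add_pi_of_im_neg (by simpa using hzim)]
    push_cast; ring
  simp only [Pi.neg_apply, inv_neg, intervalIntegral.integral_neg, log_neg_top,
    log_neg_bottom] at left
  simp only [rectIntegral, smul_eq_mul]
  linear_combination bottom - top + right - left

theorem rectIntegral_inv_sub_smul [CompleteSpace E] {U : Set ℂ} (hU : IsOpen U)
    (hf : DifferentiableOn ℂ f U) (hzw : Icc z.re w.re ×ℂ Icc z.im w.im ⊆ U) {u : ℂ}
    (hu : u ∈ Ioo z.re w.re ×ℂ Ioo z.im w.im) :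
    rectIntegral (fun ζ => (ζ - u)⁻¹ • f ζ) z w = (2 * Real.pi * I) • f u := by
  obtain ⟨⟨hzre, hwre⟩, hzim, hwim⟩ := id hu
  rw [← uIcc_of_le (hzre.trans hwre).le, ← uIcc_of_le (hzim.trans hwim).le] at hzw
  have huU : u ∈ U := hzw ⟨Icc_subset_uIcc ⟨hzre.le, hwre.le⟩, Icc_subset_uIcc ⟨hzim.le, hwim.le⟩⟩
  have hne : ∀ ζ ∈ rectBoundary z w, ζ - u ≠ 0 := by
    rintro ζ ⟨-, h⟩ h0
    obtain rfl := sub_eq_zero.1 h0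
    rcases h with h | h | h | h <;> linarith
  have hslope : DifferentiableOn ℂ (dslope f u) U :=
    (differentiableOn_dslope (hU.mem_nhds huU)).2 hf
  calc rectIntegral (fun ζ => (ζ - u)⁻¹ • f ζ) z w
      = rectIntegral (fun ζ => dslope f u ζ + (ζ - u)⁻¹ • f u) z w := by
        refine rectIntegral_congr fun ζ hζ => ?_
        simp only [dslope_of_ne f (sub_ne_zero.1 (hne ζ hζ)), slope_def_module, smul_sub,
          sub_add_cancel]
    _ = rectIntegral (dslope f u) z w + rectIntegral (fun ζ => (ζ - u)⁻¹ • f u) z w :=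
        rectIntegral_add (hslope.continuousOn.mono fun ζ hζ => hzw hζ.1)
          ((ContinuousOn.inv₀ (by fun_prop) hne).smul continuousOn_const)
    _ = (2 * Real.pi * I) • f u := by
        rw [rectIntegral_smul_const, rectIntegral_inv_sub hu, add_eq_right]
        exact integral_boundary_rect_eq_zero_of_differentiableOn _ _ _ (hslope.mono hzw)

end RectangleIntegral

section Splitting

variable {E : Type*} [NormedAddCommGroup E] [NormedSpace ℂ E] {U V A B S : Set E} {φ : E → ℂ}

/-- A function `φ` on `U` splits across `A` and `B` if it is a difference of functions holomorphic
near `A` and near `B`, on the intersection of their domains, which lies inside `U`. -/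
def SplitsAcross (U : Set E) (φ : E → ℂ) (A B : Set E) : Prop :=
  ∃ (V₁ V₂ : Set E) (φ₁ φ₂ : E → ℂ), IsOpen V₁ ∧ IsOpen V₂ ∧
    A ⊆ V₁ ∧ B ⊆ V₂ ∧ V₁ ∩ V₂ ⊆ U ∧ DifferentiableOn ℂ φ₁ V₁ ∧ DifferentiableOn ℂ φ₂ V₂ ∧
    ∀ x ∈ V₁ ∩ V₂, φ x = φ₁ x - φ₂ x

theorem splitsAcross_empty_left (U : Set E) (φ : E → ℂ) (B : Set E) : SplitsAcross U φ ∅ B :=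
  ⟨∅, univ, 0, 0, isOpen_empty, isOpen_univ, by simp, by simp, by simp, by simp,
    differentiableOn_const _, by simp⟩

/-- The point obtained from `x` by moving in the direction `v` so that, when `ℓ v = 1`, the linear
form `ℓ` takes the value `μ` there. -/
noncomputable def slide (ℓ : E →L[ℂ] ℂ) (v x : E) (μ : ℂ) : E := x + (μ - ℓ x) • v

/-- The Cauchy integral of `φ` in the direction `v`, along the path `γ` over `[p, q]`. -/
noncomputable def sideIntegral (φ : E → ℂ) (ℓ : E →L[ℂ] ℂ) (v : E) (γ : ℝ → ℂ) (p q : ℝ) (x : E) :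
    ℂ :=
  ∫ s in p..q, (γ s - ℓ x)⁻¹ • φ (slide ℓ v x (γ s))

variable {ℓ : E →L[ℂ] ℂ} {v : E}

theorem slide_self (x : E) : slide ℓ v x (ℓ x) = x := by simp [slide]

theorem continuous_uncurry_slide : Continuous (slide ℓ v).uncurry := by
  unfold slide Function.uncurry; fun_prop

theorem differentiableOn_sideIntegral [FiniteDimensional ℂ E] (hV : IsOpen V)
    (hφ : DifferentiableOn ℂ φ U) {γ : ℝ → ℂ} (hγ : Continuous γ) {p q : ℝ}
    (hm : ∀ x ∈ V, ∀ s ∈ [[p, q]], slide ℓ v x (γ s) ∈ U ∧ γ s ≠ ℓ x) :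
    DifferentiableOn ℂ (sideIntegral φ ℓ v γ p q) V := by
  have := FiniteDimensional.proper_rclike ℂ E
  refine differentiableOn_intervalIntegral_of_continuousOn_uncurry hV ?_ fun s hs => ?_
  · refine ContinuousOn.smul (f := fun y : ℝ × E => (γ y.1 - ℓ y.2)⁻¹)
      (g := fun y => φ (slide ℓ v y.2 (γ y.1))) (ContinuousOn.inv₀ (by fun_prop)
      fun y hy => sub_ne_zero.2 (hm y.2 hy.2 y.1 hy.1).2) ?_
    refine hφ.continuousOn.comp (Continuous.continuousOn ?_) fun y hy => (hm y.2 hy.2 y.1 hy.1).1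
    exact continuous_uncurry_slide.comp (continuous_snd.prodMk (hγ.comp continuous_fst))
  · refine DifferentiableOn.smul (DifferentiableOn.inv (by fun_prop)
      fun x hx => sub_ne_zero.2 (hm x hx s hs).2) ?_
    refine hφ.comp (t := U) (Differentiable.differentiableOn ?_) fun x hx => (hm x hx s hs).1
    unfold slide; fun_prop

theorem eventually_Icc_sub_add_subset {α β : ℝ} (h : α ≤ β) {O : Set ℝ} (hO : IsOpen O)
    (hs : Icc α β ⊆ O) : ∀ᶠ δ in 𝓝[>] 0, Icc (α - δ) (β + δ) ⊆ O := by
  obtain ⟨δ₀, hδ₀, hsub⟩ := isCompact_Icc.exists_cthickening_subset_open hO hs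
  filter_upwards [Ioc_mem_nhdsGT hδ₀] with δ hδ
  refine Subset.trans ?_ ((cthickening_mono hδ.2 _).trans hsub)
  rw [Real.Icc_eq_closedBall α β, cthickening_closedBall hδ.1.le (by linarith),
    Real.Icc_eq_closedBall]
  exact closedBall_subset_closedBall' (by rw [dist_eq_norm]; ring_nf; simp)

theorem sideIntegral_boundary_eq (hU : IsOpen U) (hφ : DifferentiableOn ℂ φ U) {z w : ℂ} {x : E}
    (hmem : ∀ μ ∈ Icc z.re w.re ×ℂ Icc z.im w.im, slide ℓ v x μ ∈ U)
    (hx : ℓ x ∈ Ioo z.re w.re ×ℂ Ioo z.im w.im) :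
    sideIntegral φ ℓ v (fun s => s + z.im * I) z.re w.re x -
        sideIntegral φ ℓ v (fun s => s + w.im * I) z.re w.re x +
        I * sideIntegral φ ℓ v (fun s => w.re + s * I) z.im w.im x -
        I * sideIntegral φ ℓ v (fun s => z.re + s * I) z.im w.im x =
      2 * Real.pi * I * φ x := by
  have cauchy := rectIntegral_inv_sub_smul (f := fun μ => φ (slide ℓ v x μ))
    (hU.preimage (continuous_uncurry_slide.comp (by fun_prop : Continuous fun μ : ℂ => (x, μ))))
    (hφ.comp (by unfold slide; fun_prop) fun μ hμ => hμ) hmem hx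
  rwa [slide_self, smul_eq_mul] at cauchy

/- The Cauchy integral over the boundary of a rectangle is split into the contribution of the left
side, holomorphic to the right of it, and that of the other three sides. -/
theorem splitsAcross_of_slide_mem_rectangle [FiniteDimensional ℂ E] (hU : IsOpen U)
    (hφ : DifferentiableOn ℂ φ U) (hV : IsOpen V) {z w : ℂ} (hzw : z.re ≤ w.re)
    (hmem : ∀ x ∈ V, ∀ μ ∈ Icc z.re w.re ×ℂ Icc z.im w.im, slide ℓ v x μ ∈ U)
    (him : ∀ x ∈ V, (ℓ x).im ∈ Ioo z.im w.im)
    (hA : A ⊆ V ∩ {x | (ℓ x).re < w.re}) (hB : B ⊆ V ∩ {x | z.re < (ℓ x).re}) :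
    SplitsAcross U φ A B := by
  have horizontal : ∀ t, t = z.im ∨ t = w.im → ∀ x ∈ V, ∀ s ∈ [[z.re, w.re]],
      slide ℓ v x (s + t * I) ∈ U ∧ s + t * I ≠ ℓ x := by
    intro t ht x hx s hs
    obtain ⟨hz, hw⟩ := him x hx
    rw [uIcc_of_le hzw] at hs
    refine ⟨hmem x hx _ ⟨by simpa using hs, ?_⟩, fun h => ?_⟩
    · rcases ht with rfl | rfl <;> simpa using (hz.trans hw).le
    · rw [← h] at hz hw
      rcases ht with rfl | rfl <;> simp at hz hw
  have vertical : ∀ t ∈ Icc z.re w.re, ∀ x ∈ V, t ≠ (ℓ x).re → ∀ s ∈ [[z.im, w.im]],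
      slide ℓ v x (t + s * I) ∈ U ∧ t + s * I ≠ ℓ x := by
    intro t ht x hx htx s hs
    rw [uIcc_of_le ((him x hx).1.trans (him x hx).2).le] at hs
    exact ⟨hmem x hx _ ⟨by simpa using ht, by simpa using hs⟩, fun h => htx (by simp [← h])⟩
  have hV₁ : IsOpen (V ∩ {x | (ℓ x).re < w.re}) :=
    hV.inter (isOpen_lt (by fun_prop) (by fun_prop))
  have hV₂ : IsOpen (V ∩ {x | z.re < (ℓ x).re}) :=
    hV.inter (isOpen_lt (by fun_prop) (by fun_prop))
  refine ⟨_, _, fun x => (2 * Real.pi * I)⁻¹ *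
      (sideIntegral φ ℓ v (fun s => s + z.im * I) z.re w.re x -
      sideIntegral φ ℓ v (fun s => s + w.im * I) z.re w.re x +
      I * sideIntegral φ ℓ v (fun s => w.re + s * I) z.im w.im x),
    fun x => (2 * Real.pi * I)⁻¹ * (I * sideIntegral φ ℓ v (fun s => z.re + s * I) z.im w.im x),
    hV₁, hV₂, hA, hB, ?_, ?_, ?_, ?_⟩
  · rintro x ⟨⟨hx, hxw⟩, -, hxz⟩
    simpa only [slide_self] using
      hmem x hx (ℓ x) ⟨⟨le_of_lt hxz, le_of_lt hxw⟩, Ioo_subset_Icc_self (him x hx)⟩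
  · refine DifferentiableOn.const_mul (((?_ : DifferentiableOn _ _ _).sub ?_).add
      (DifferentiableOn.const_mul ?_ _)) _ <;>
        refine differentiableOn_sideIntegral hV₁ hφ (by fun_prop) fun x hx => ?_
    exacts [horizontal _ (.inl rfl) x hx.1, horizontal _ (.inr rfl) x hx.1,
      vertical _ ⟨hzw, le_rfl⟩ x hx.1 (ne_of_gt hx.2)]
  · exact ((differentiableOn_sideIntegral hV₂ hφ (by fun_prop) fun x hx =>
      vertical _ ⟨le_rfl, hzw⟩ x hx.1 (ne_of_lt hx.2)).const_mul _).const_mul _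
  · rintro x ⟨⟨hx, hxw⟩, -, hxz⟩
    rw [← mul_sub, eq_inv_mul_iff_mul_eq₀ two_pi_I_ne_zero]
    exact (sideIntegral_boundary_eq hU hφ (hmem x hx) ⟨⟨hxz, hxw⟩, him x hx⟩).symm

theorem splitsAcross_of_slide_mem [FiniteDimensional ℂ E] (hS : IsCompact S) (hU : IsOpen U)
    (hφ : DifferentiableOn ℂ φ U) {c α β : ℝ}
    (hSU : ∀ x ∈ S, ∀ t ∈ Icc α β, slide ℓ v x (c + t * I) ∈ U)
    (hSI : ∀ x ∈ S, (ℓ x).im ∈ Icc α β) :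
    SplitsAcross U φ (S ∩ {x | (ℓ x).re ≤ c}) (S ∩ {x | c ≤ (ℓ x).re}) := by
  rcases S.eq_empty_or_nonempty with rfl | ⟨x₀, hx₀⟩
  · simpa using splitsAcross_empty_left U φ ∅
  have hαβ : α ≤ β := (hSI x₀ hx₀).1.trans (hSI x₀ hx₀).2
  have hcont : Continuous fun y : E × ℝ × ℝ => slide ℓ v y.1 (y.2.1 + y.2.2 * I) :=
    continuous_uncurry_slide.comp
      (by fun_prop : Continuous fun y : E × ℝ × ℝ => (y.1, y.2.1 + y.2.2 * I))
  obtain ⟨W, Q, hW, hQ, hSW, hcQ, hWQ⟩ := generalized_tube_lemma hS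
    (isCompact_singleton.prod (isCompact_Icc (a := α) (b := β))) (hU.preimage hcont)
    (by rintro ⟨x, s, t⟩ ⟨hx, rfl, ht⟩; exact hSU x hx t ht)
  obtain ⟨O₁, O₂, hO₁, hO₂, hc, hO₂I, hO⟩ := generalized_tube_lemma isCompact_singleton
    isCompact_Icc hQ hcQ
  obtain ⟨δ, hδ : 0 < δ, hδ₁, hδ₂⟩ := (eventually_mem_nhdsWithin.and
    ((eventually_Icc_sub_add_subset le_rfl hO₁ (by simpa using hc)).and
      (eventually_Icc_sub_add_subset hαβ hO₂ hO₂I))).exists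
  refine splitsAcross_of_slide_mem_rectangle (ℓ := ℓ) (v := v) hU hφ
    (V := W ∩ {x | (ℓ x).im ∈ Ioo (α - δ) (β + δ)})
    (hW.inter (isOpen_Ioo.preimage (by fun_prop))) (z := ⟨c - δ, α - δ⟩) (w := ⟨c + δ, β + δ⟩)
    (by simp only; linarith) ?_ (fun x hx => hx.2) ?_ ?_
  · rintro x ⟨hx, -⟩ μ ⟨hre, him⟩
    simpa only [re_add_im, mem_preimage] using
      @hWQ (x, μ.re, μ.im) ⟨hx, hO (show (μ.re, μ.im) ∈ O₁ ×ˢ O₂ from ⟨hδ₁ hre, hδ₂ him⟩)⟩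
  all_goals
    rintro x ⟨hx, hxc⟩
    obtain ⟨hα, hβ⟩ := hSI x hx
    rw [mem_ofPred_eq] at hxc
    exact ⟨⟨hSW hx, by linarith, by linarith⟩, by simp only [mem_ofPred_eq]; linarith⟩

end Splitting

section Gluing

theorem exists_isOpen_inter_subset {X : Type*} [TopologicalSpace X] [T2Space X] {A B U : Set X}
    (hA : IsCompact A) (hB : IsCompact B) (hU : IsOpen U) (h : A ∩ B ⊆ U) :
    ∃ O₁ O₂ : Set X, IsOpen O₁ ∧ IsOpen O₂ ∧ A ⊆ O₁ ∧ B ⊆ O₂ ∧ O₁ ∩ O₂ ⊆ U := by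
  obtain ⟨P₁, P₂, h₁, h₂, hA₁, hB₂, hd⟩ := SeparatedNhds.of_isCompact_isCompact (hA.diff hU)
    (hB.diff hU) (disjoint_left.2 fun x hx hx' => hx.2 (h ⟨hx.1, hx'.1⟩))
  refine ⟨U ∪ P₁, U ∪ P₂, hU.union h₁, hU.union h₂, sdiff_subset_iff.1 hA₁,
    sdiff_subset_iff.1 hB₂, ?_⟩
  rw [← union_inter_distrib_left, hd.inter_eq, union_empty]

variable {E E' : Type*} [NormedAddCommGroup E] [NormedSpace ℂ E] [NormedAddCommGroup E']
  [NormedSpace ℂ E'] {U V₁ V₂ A B : Set E} {φ a₁ a₂ : E → ℂ}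

theorem exists_differentiableOn_union (hV₁ : IsOpen V₁) (hV₂ : IsOpen V₂)
    (h₁ : DifferentiableOn ℂ a₁ V₁) (h₂ : DifferentiableOn ℂ a₂ V₂) (h : EqOn a₁ a₂ (V₁ ∩ V₂)) :
    ∃ F : E → ℂ, DifferentiableOn ℂ F (V₁ ∪ V₂) ∧ EqOn F a₁ V₁ ∧ EqOn F a₂ V₂ := by
  classical
  have e₁ : EqOn (V₁.piecewise a₁ a₂) a₁ V₁ := piecewise_eqOn _ _ _
  have e₂ : EqOn (V₁.piecewise a₁ a₂) a₂ V₂ := fun x hx => by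
    by_cases hx₁ : x ∈ V₁
    · rw [e₁ hx₁, h ⟨hx₁, hx⟩]
    · exact piecewise_eq_of_notMem _ _ _ hx₁
  exact ⟨_, (h₁.congr e₁).union_of_isOpen (h₂.congr e₂) hV₁ hV₂, e₁, e₂⟩

theorem SplitsAcross.comp {ι : E → E'} (hι : Differentiable ℂ ι) {U' A' B' : Set E'} {F : E' → ℂ}
    (h : SplitsAcross U' F A' B') (hA : IsCompact A) (hB : IsCompact B) (hU : IsOpen U)
    (hAB : A ∩ B ⊆ U) (hA' : MapsTo ι A A') (hB' : MapsTo ι B B')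
    (hF : ∀ x ∈ U, ι x ∈ U' → F (ι x) = φ x) : SplitsAcross U φ A B := by
  obtain ⟨V₁, V₂, F₁, F₂, hV₁, hV₂, hAV, hBV, hVU, hF₁, hF₂, he⟩ := h
  obtain ⟨O₁, O₂, hO₁, hO₂, hAO, hBO, hO⟩ := exists_isOpen_inter_subset hA hB hU hAB
  refine ⟨O₁ ∩ ι ⁻¹' V₁, O₂ ∩ ι ⁻¹' V₂, F₁ ∘ ι, F₂ ∘ ι, hO₁.inter (hV₁.preimage hι.continuous),
    hO₂.inter (hV₂.preimage hι.continuous), fun x hx => ⟨hAO hx, hAV (hA' hx)⟩,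
    fun x hx => ⟨hBO hx, hBV (hB' hx)⟩, fun x hx => hO ⟨hx.1.1, hx.2.1⟩,
    hF₁.comp hι.differentiableOn fun x hx => hx.2, hF₂.comp hι.differentiableOn fun x hx => hx.2,
    ?_⟩
  rintro x ⟨⟨hx₁, hxV₁⟩, hx₂, hxV₂⟩
  rw [← hF x (hO ⟨hx₁, hx₂⟩) (hVU ⟨hxV₁, hxV₂⟩)]
  exact he _ ⟨hxV₁, hxV₂⟩

end Gluing

section Cousin

variable {E : Type*} [NormedAddCommGroup E] [NormedSpace ℂ E]
  {U₁ U₂ V V₁ V₂ S S₁ S₂ A B : Set E} {φ a₁ a₂ b₁ b₂ : E → ℂ}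

/-- The pair `a₁`, `a₂` solves on `V` the additive Cousin problem given by the function `φ` on
`U₁ ∩ U₂`. -/
structure IsCousinSolution (U₁ U₂ : Set E) (φ : E → ℂ) (V : Set E) (a₁ a₂ : E → ℂ) : Prop where
  differentiableOn_left : DifferentiableOn ℂ a₁ (U₁ ∩ V)
  differentiableOn_right : DifferentiableOn ℂ a₂ (U₂ ∩ V)
  eq_sub : ∀ x ∈ U₁ ∩ U₂ ∩ V, φ x = a₁ x - a₂ x

/-- The additive Cousin problem given by the function `φ` on `U₁ ∩ U₂` is solvable near `S`. -/
def CousinSolvable (S U₁ U₂ : Set E) (φ : E → ℂ) : Prop :=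
  ∃ (V : Set E) (a₁ a₂ : E → ℂ), IsOpen V ∧ S ⊆ V ∧ IsCousinSolution U₁ U₂ φ V a₁ a₂

theorem CousinSolvable.mono (h : CousinSolvable S₂ U₁ U₂ φ) (hS : S₁ ⊆ S₂) :
    CousinSolvable S₁ U₁ U₂ φ :=
  let ⟨V, a₁, a₂, hV, hSV, h⟩ := h
  ⟨V, a₁, a₂, hV, hS.trans hSV, h⟩

theorem cousinSolvable_of_subset (hU₁ : IsOpen U₁) (hU₂ : IsOpen U₂)
    (hφ : DifferentiableOn ℂ φ (U₁ ∩ U₂)) (h : S ⊆ U₁ ∨ S ⊆ U₂) : CousinSolvable S U₁ U₂ φ := by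
  rcases h with h | h
  · exact ⟨U₁, 0, -φ, hU₁, h, differentiableOn_const _, inter_comm U₁ U₂ ▸ hφ.neg, by simp⟩
  · exact ⟨U₂, φ, 0, hU₂, h, hφ, differentiableOn_const _, by simp⟩

theorem IsCousinSolution.sub_inter (h : IsCousinSolution U₁ U₂ φ V a₁ a₂) {W : Set E}
    {ψ : E → ℂ} (hψ : DifferentiableOn ℂ ψ W) :
    IsCousinSolution U₁ U₂ φ (V ∩ W) (fun x => a₁ x - ψ x) (fun x => a₂ x - ψ x) where
  differentiableOn_left := (h.1.mono (by gcongr; exact inter_subset_left)).sub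
    (hψ.mono fun x hx => hx.2.2)
  differentiableOn_right := (h.2.mono (by gcongr; exact inter_subset_left)).sub
    (hψ.mono fun x hx => hx.2.2)
  eq_sub x hx := by rw [h.eq_sub x ⟨hx.1, hx.2.1⟩, sub_sub_sub_cancel_right]

theorem IsCousinSolution.exists_sub (hU₁ : IsOpen U₁) (hU₂ : IsOpen U₂) (hV₁ : IsOpen V₁)
    (hV₂ : IsOpen V₂) (ha : IsCousinSolution U₁ U₂ φ V₁ a₁ a₂)
    (hb : IsCousinSolution U₁ U₂ φ V₂ b₁ b₂) :
    ∃ ψ : E → ℂ, DifferentiableOn ℂ ψ ((U₁ ∪ U₂) ∩ (V₁ ∩ V₂)) ∧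
      (∀ x ∈ U₁ ∩ (V₁ ∩ V₂), ψ x = a₁ x - b₁ x) ∧ ∀ x ∈ U₂ ∩ (V₁ ∩ V₂), ψ x = a₂ x - b₂ x := by
  rw [union_inter_distrib_right]
  refine exists_differentiableOn_union (hU₁.inter (hV₁.inter hV₂)) (hU₂.inter (hV₁.inter hV₂))
    ((ha.1.mono fun x hx => ⟨hx.1, hx.2.1⟩).sub (hb.1.mono fun x hx => ⟨hx.1, hx.2.2⟩))
    ((ha.2.mono fun x hx => ⟨hx.1, hx.2.1⟩).sub (hb.2.mono fun x hx => ⟨hx.1, hx.2.2⟩)) ?_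
  rintro x ⟨⟨hx₁, hxa, hxb⟩, hx₂, -⟩
  linear_combination hb.eq_sub x ⟨⟨hx₁, hx₂⟩, hxb⟩ - ha.eq_sub x ⟨⟨hx₁, hx₂⟩, hxa⟩

theorem IsCousinSolution.exists_union (hU₁ : IsOpen U₁) (hU₂ : IsOpen U₂) (hV₁ : IsOpen V₁)
    (hV₂ : IsOpen V₂) (ha : IsCousinSolution U₁ U₂ φ V₁ a₁ a₂)
    (hb : IsCousinSolution U₁ U₂ φ V₂ b₁ b₂) (h₁ : EqOn a₁ b₁ (U₁ ∩ (V₁ ∩ V₂)))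
    (h₂ : EqOn a₂ b₂ (U₂ ∩ (V₁ ∩ V₂))) :
    ∃ F₁ F₂ : E → ℂ, IsCousinSolution U₁ U₂ φ (V₁ ∪ V₂) F₁ F₂ := by
  rw [inter_inter_distrib_left] at h₁ h₂
  obtain ⟨F₁, hF₁, hFa₁, hFb₁⟩ :=
    exists_differentiableOn_union (hU₁.inter hV₁) (hU₁.inter hV₂) ha.1 hb.1 h₁
  obtain ⟨F₂, hF₂, hFa₂, hFb₂⟩ :=
    exists_differentiableOn_union (hU₂.inter hV₁) (hU₂.inter hV₂) ha.2 hb.2 h₂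
  rw [← inter_union_distrib_left] at hF₁ hF₂
  refine ⟨F₁, F₂, hF₁, hF₂, ?_⟩
  rintro x ⟨⟨hx₁, hx₂⟩, hx | hx⟩
  · rw [hFa₁ ⟨hx₁, hx⟩, hFa₂ ⟨hx₂, hx⟩, ha.eq_sub x ⟨⟨hx₁, hx₂⟩, hx⟩]
  · rw [hFb₁ ⟨hx₁, hx⟩, hFb₂ ⟨hx₂, hx⟩, hb.eq_sub x ⟨⟨hx₁, hx₂⟩, hx⟩]

theorem CousinSolvable.union (hU₁ : IsOpen U₁) (hU₂ : IsOpen U₂)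
    (hA : CousinSolvable A U₁ U₂ φ) (hB : CousinSolvable B U₁ U₂ φ) (hsub : A ∩ B ⊆ U₁ ∪ U₂)
    (hsplit : ∀ (U : Set E) (ψ : E → ℂ), IsOpen U → DifferentiableOn ℂ ψ U → A ∩ B ⊆ U →
      SplitsAcross U ψ A B) :
    CousinSolvable (A ∪ B) U₁ U₂ φ := by
  obtain ⟨Va, a₁, a₂, hVa, hAVa, ha⟩ := hA
  obtain ⟨Vb, b₁, b₂, hVb, hBVb, hb⟩ := hB
  obtain ⟨ψ, hψ, hψ₁, hψ₂⟩ := ha.exists_sub hU₁ hU₂ hVa hVb hb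
  obtain ⟨W₁, W₂, ψ₁, ψ₂, hW₁, hW₂, hAW, hBW, -, hd₁, hd₂, he⟩ := hsplit _ ψ
    ((hU₁.union hU₂).inter (hVa.inter hVb)) hψ
    (subset_inter hsub (inter_subset_inter hAVa hBVb))
  obtain ⟨F₁, F₂, hF⟩ := (ha.sub_inter hd₁).exists_union hU₁ hU₂ (hVa.inter hW₁) (hVb.inter hW₂)
    (hb.sub_inter hd₂)
    (by
      rintro x ⟨hx, ⟨hxa, hx₁⟩, hxb, hx₂⟩
      linear_combination he x ⟨hx₁, hx₂⟩ - hψ₁ x ⟨hx, hxa, hxb⟩)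
    (by
      rintro x ⟨hx, ⟨hxa, hx₁⟩, hxb, hx₂⟩
      linear_combination he x ⟨hx₁, hx₂⟩ - hψ₂ x ⟨hx, hxa, hxb⟩)
  exact ⟨_, F₁, F₂, (hVa.inter hW₁).union (hVb.inter hW₂),
    union_subset_union (subset_inter hAVa hAW) (subset_inter hBVb hBW), hF⟩

/- The Cousin problem solved is the one for `f / t` on the open sets `U` and `{t ≠ 0}`; then
`f - t a₁` and `-t a₂` agree on the overlap. -/
theorem exists_extension_of_cousinSolvable {U P : Set E} (hU : IsOpen U) {t f : E → ℂ}
    (ht : Differentiable ℂ t) (hf : DifferentiableOn ℂ f U) (hP : P ⊆ U ∪ {x | t x ≠ 0})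
    (h : CousinSolvable P U {x | t x ≠ 0} (fun x => f x / t x)) :
    ∃ (W : Set E) (F : E → ℂ), IsOpen W ∧ P ⊆ W ∧ DifferentiableOn ℂ F W ∧
      ∀ x ∈ U, x ∈ W → t x = 0 → F x = f x := by
  obtain ⟨V, a₁, a₂, hV, hPV, h₁, h₂, he⟩ := h
  have ht₀ : IsOpen {x | t x ≠ 0} := isOpen_ne_fun ht.continuous continuous_const
  obtain ⟨F, hF, hF₁, -⟩ := exists_differentiableOn_union (hU.inter hV) (ht₀.inter hV)
    (a₁ := fun x => f x - t x * a₁ x) (a₂ := fun x => -(t x * a₂ x))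
    ((hf.mono inter_subset_left).sub (ht.differentiableOn.mul h₁)) (ht.differentiableOn.mul h₂).neg
    (by
      rintro x ⟨⟨hx, hxV⟩, hx₀, -⟩
      linear_combination (div_eq_iff hx₀).1 (he x ⟨⟨hx, hx₀⟩, hxV⟩))
  rw [← union_inter_distrib_right] at hF
  refine ⟨_, F, (hU.union ht₀).inter hV, subset_inter hP hPV, hF, fun x hx hxW hx₀ => ?_⟩
  simp [hF₁ ⟨hx, hxW.2⟩, hx₀]

end Cousin

section BoxInduction

open Function

theorem box_induction {ι : Type*} [Finite ι] [DecidableEq ι] {P : (ι → ℝ) → (ι → ℝ) → Prop}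
    {η : ℝ} (hη : 0 < η) (small : ∀ lo hi, (∀ i, hi i - lo i ≤ η) → P lo hi)
    (glue : ∀ lo hi i, ∀ c ∈ Icc (lo i) (hi i), P lo (update hi i c) → P (update lo i c) hi →
      P lo hi) (lo hi : ι → ℝ) : P lo hi := by
  have := Fintype.ofFinite ι
  induction hN : ∑ i, ⌈(hi i - lo i) / η⌉₊ using Nat.strong_induction_on generalizing lo hi with
  | _ N ih =>
    subst hN
    by_cases hsmall : ∀ i, hi i - lo i ≤ η
    · exact small lo hi hsmall
    obtain ⟨i, hi_i⟩ := not_forall.1 hsmall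
    have one_lt : 1 < ⌈(hi i - lo i) / η⌉₊ :=
      Nat.lt_ceil.2 (by rw [Nat.cast_one, one_lt_div hη]; linarith)
    have decrease : ∀ lo' hi' : ι → ℝ, (∀ j ≠ i, hi' j - lo' j = hi j - lo j) →
        ⌈(hi' i - lo' i) / η⌉₊ < ⌈(hi i - lo i) / η⌉₊ → P lo' hi' := fun lo' hi' hne hlt =>
      ih _ (Finset.sum_lt_sum (fun j _ => by
        rcases eq_or_ne j i with rfl | hj
        exacts [hlt.le, (hne j hj ▸ le_rfl)]) ⟨i, Finset.mem_univ i, hlt⟩) lo' hi' rfl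
    refine glue lo hi i (lo i + η) ⟨by linarith, by linarith⟩ (decrease _ _ ?_ ?_)
      (decrease _ _ ?_ ?_)
    · intro j hj; rw [update_of_ne hj]
    · simpa [hη.ne'] using one_lt
    · intro j hj; rw [update_of_ne hj]
    · rw [update_self, ← sub_sub, sub_div, div_self hη.ne', Nat.ceil_sub_one]
      omega

end BoxInduction

section Taylor

open scoped NNReal

variable {E F : Type*} [NormedAddCommGroup E] [NormedSpace ℂ E] [NormedAddCommGroup F]
  [NormedSpace ℂ F]

theorem exists_differentiable_eqOn_of_homogeneous {P : E → F} {r : ℝ} (hr : 0 < r) {k : ℕ}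
    (hP : DifferentiableOn ℂ P (ball 0 r))
    (hom : ∀ x ∈ ball (0 : E) r, ∀ c : ℝ, 0 < c → c ≤ 1 → P ((c : ℂ) • x) = (c : ℂ) ^ k • P x) :
    ∃ Q : E → F, Differentiable ℂ Q ∧ EqOn Q P (ball 0 r) := by
  let s : E → ℝ := fun x => 1 + ‖x‖ / r
  have hs : ∀ x, 0 < s x := fun x => by positivity
  have mem_ball : ∀ x, ∀ t : ℝ, s x ≤ t → (t : ℂ)⁻¹ • x ∈ ball (0 : E) r := fun x t ht => by
    have ht₀ : 0 < t := (hs x).trans_le ht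
    have : s x * r ≤ t * r := by gcongr
    rw [add_mul, div_mul_cancel₀ _ hr.ne'] at this
    rw [mem_ball_zero_iff, norm_smul, norm_inv, norm_real, Real.norm_of_nonneg ht₀.le,
      inv_mul_lt_iff₀ ht₀]
    linarith
  have eq_of_le : ∀ x, ∀ t : ℝ, s x ≤ t →
      (s x : ℂ) ^ k • P ((s x : ℂ)⁻¹ • x) = (t : ℂ) ^ k • P ((t : ℂ)⁻¹ • x) := fun x t ht => by
    have ht₀ : (t : ℂ) ≠ 0 := ofReal_ne_zero.2 ((hs x).trans_le ht).ne'
    have hs₀ : (s x : ℂ) ≠ 0 := ofReal_ne_zero.2 (hs x).ne'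
    have := hom _ (mem_ball x _ le_rfl) (s x / t) (div_pos (hs x) ((hs x).trans_le ht))
      (div_le_one_of_le₀ ht ((hs x).le.trans ht))
    rw [smul_smul, ofReal_div, div_mul_eq_mul_div, mul_inv_cancel₀ hs₀, one_div] at this
    rw [this, smul_smul, ← mul_pow, mul_div_cancel₀ _ ht₀]
  refine ⟨fun x => (s x : ℂ) ^ k • P ((s x : ℂ)⁻¹ • x), fun x₀ => ?_, fun x hx => ?_⟩
  · obtain ⟨t, ht⟩ := exists_gt (s x₀)
    have near : ∀ᶠ x in 𝓝 x₀, s x < t :=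
      (show Continuous s by fun_prop).continuousAt.eventually (gt_mem_nhds ht)
    refine DifferentiableAt.congr_of_eventuallyEq ?_ (near.mono fun x hx => eq_of_le x t hx.le)
    exact ((hP.differentiableAt (isOpen_ball.mem_nhds (mem_ball x₀ t ht.le))).comp x₀
      (differentiableAt_id.const_smul (t : ℂ)⁻¹)).const_smul _
  · have hs₀ : (s x : ℂ) ≠ 0 := ofReal_ne_zero.2 (hs x).ne'
    have := hom x hx (s x)⁻¹ (inv_pos.2 (hs x)) (inv_le_one_of_one_le₀
      (le_add_of_nonneg_right (by positivity)))
    rw [ofReal_inv] at this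
    dsimp only
    rw [this, smul_smul, ← mul_pow, mul_inv_cancel₀ hs₀, one_pow, one_smul]

/-- The homogeneous term of degree `k` of the Taylor expansion of `f` at the origin, computed at
`x` by Cauchy's formula on the circle of radius `ρ` in the complex line through `x`. -/
noncomputable def taylorTerm (f : E → F) (ρ : ℝ) (k : ℕ) (x : E) : F :=
  cauchyPowerSeries (fun w : ℂ => f (w • x)) 0 ρ k fun _ => 1

variable {f : E → F} {ρ : ℝ≥0} {r R : ℝ} {x : E}

theorem smul_mem_ball_of_mem_closedBall (hρ : 0 < ρ) {w : ℂ} (hw : w ∈ closedBall 0 (ρ : ℝ))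
    (hx : x ∈ ball 0 r) : w • x ∈ ball 0 (ρ * r) := by
  rw [mem_closedBall_zero_iff] at hw
  rw [mem_ball_zero_iff] at hx ⊢
  rw [norm_smul]
  exact (mul_le_mul_of_nonneg_right hw (norm_nonneg x)).trans_lt (by gcongr)

theorem hasFPowerSeriesOnBall_comp_smul [CompleteSpace F] (hρ : 0 < ρ)
    (hf : DifferentiableOn ℂ f (ball 0 (ρ * r))) (hx : x ∈ ball 0 r) :
    HasFPowerSeriesOnBall (fun w : ℂ => f (w • x)) (cauchyPowerSeries (fun w => f (w • x)) 0 ρ)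
      0 ρ :=
  (hf.comp (f := fun w : ℂ => w • x) (by fun_prop) fun _ hw =>
    smul_mem_ball_of_mem_closedBall hρ hw hx).hasFPowerSeriesOnBall hρ

theorem hasSum_taylorTerm [CompleteSpace F] (hρ : 1 < ρ)
    (hf : DifferentiableOn ℂ f (ball 0 (ρ * r))) (hx : x ∈ ball 0 r) :
    HasSum (fun k => taylorTerm f ρ k x) (f x) := by
  simpa [taylorTerm] using
    (hasFPowerSeriesOnBall_comp_smul (zero_lt_one.trans hρ) hf hx).hasSum (y := 1) (by simpa)

theorem taylorTerm_smul [CompleteSpace F] (hρ : 0 < ρ)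
    (hf : DifferentiableOn ℂ f (ball 0 (ρ * r))) (hx : x ∈ ball 0 r) {c : ℂ} (hc : ‖c‖ ≤ 1)
    (k : ℕ) : taylorTerm f ρ k (c • x) = c ^ k • taylorTerm f ρ k x := by
  have hcx : c • x ∈ ball 0 r := by
    rw [mem_ball_zero_iff] at hx ⊢
    rw [norm_smul]
    exact (mul_le_of_le_one_left (norm_nonneg x) hc).trans_lt hx
  have hscaled : HasFPowerSeriesAt (fun w : ℂ => f (w • x))
      (cauchyPowerSeries (fun w => f (w • x)) 0 ρ) ((c • ContinuousLinearMap.id ℂ ℂ) 0) := by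
    rw [map_zero]
    exact (hasFPowerSeriesOnBall_comp_smul hρ hf hx).hasFPowerSeriesAt
  have heq := (hasFPowerSeriesOnBall_comp_smul hρ hf hcx).hasFPowerSeriesAt
    |>.eq_formalMultilinearSeries
      (hscaled.compContinuousLinearMap.congr (.of_forall fun w => by simp [smul_smul, mul_comm]))
  have := (cauchyPowerSeries (fun w : ℂ => f (w • x)) 0 ρ k).map_smul_univ
    (fun _ : Fin k => c) fun _ => 1
  rw [taylorTerm, heq, taylorTerm]
  rw [Finset.prod_const, Finset.card_univ, Fintype.card_fin] at this
  rw [FormalMultilinearSeries.compContinuousLinearMap_apply, ← this]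
  rfl

theorem differentiableOn_taylorTerm [ProperSpace E] [CompleteSpace F] (hρ : 0 < ρ)
    (hf : DifferentiableOn ℂ f (ball 0 (ρ * r))) (k : ℕ) :
    DifferentiableOn ℂ (taylorTerm f ρ k) (ball 0 r) := by
  have hmaps : ∀ θ : ℝ, MapsTo (circleMap 0 (ρ : ℝ) θ • · : E → E) (ball 0 r)
      (ball 0 (ρ * r)) := fun θ _ hx => smul_mem_ball_of_mem_closedBall hρ
    (sphere_subset_closedBall (circleMap_mem_sphere 0 ρ.coe_nonneg θ)) hx
  have hne : ∀ θ : ℝ, circleMap 0 (ρ : ℝ) θ ≠ 0 := fun θ =>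
    circleMap_ne_center (by exact_mod_cast hρ.ne')
  unfold taylorTerm
  simp only [cauchyPowerSeries_apply, circleIntegral, sub_zero, deriv_circleMap]
  refine (differentiableOn_intervalIntegral_of_continuousOn_uncurry isOpen_ball ?_
    fun θ _ => ?_).const_smul _
  · have hcont : Continuous fun p : ℝ × E => circleMap 0 (ρ : ℝ) p.1 :=
      (continuous_circleMap 0 ρ).comp continuous_fst
    have hfc : ContinuousOn (fun p : ℝ × E => f (circleMap 0 ρ p.1 • p.2))
        ([[0, 2 * Real.pi]] ×ˢ ball 0 r) :=
      hf.continuousOn.comp (by fun_prop) fun p hp => hmaps p.1 hp.2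
    have hinv : Continuous fun p : ℝ × E => (circleMap 0 (ρ : ℝ) p.1)⁻¹ :=
      hcont.inv₀ fun p => hne p.1
    simp only [Function.uncurry_def, one_div]
    exact (hcont.mul continuous_const).continuousOn.smul
      ((hinv.pow k).continuousOn.smul (hinv.continuousOn.smul hfc))
  · exact ((hf.comp (by fun_prop) (hmaps θ)).const_smul _).const_smul _ |>.const_smul _

theorem norm_taylorTerm_le {C : ℝ} (hρ : 0 < ρ)
    (hC : ∀ w : ℂ, ‖w‖ = ρ → ‖f (w • x)‖ ≤ C) (k : ℕ) :
    ‖taylorTerm f ρ k x‖ ≤ C * (ρ : ℝ)⁻¹ ^ k := by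
  rw [taylorTerm, cauchyPowerSeries_apply]
  have hρ' : (0 : ℝ) < ρ := hρ
  refine (circleIntegral.norm_two_pi_i_inv_smul_integral_le_of_norm_le_const
    (C := (ρ : ℝ)⁻¹ ^ k * ((ρ : ℝ)⁻¹ * C)) hρ'.le fun w hw => ?_).trans_eq (by field_simp)
  rw [mem_sphere_zero_iff_norm] at hw
  rw [norm_smul, norm_smul, norm_pow, norm_div, norm_one, sub_zero, norm_inv, hw, one_div]
  gcongr
  exact hC w hw

theorem exists_differentiable_forall_closedBall_dist_lt [ProperSpace E] [CompleteSpace F]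
    (hr : 0 < r) (hrR : r < R) (hf : DifferentiableOn ℂ f (ball 0 R)) {ε : ℝ} (hε : 0 < ε) :
    ∃ G : E → F, Differentiable ℂ G ∧ ∀ x ∈ closedBall 0 r, dist (f x) (G x) < ε := by
  obtain ⟨s, hrs, hsR⟩ := exists_between hrR
  have hs : 0 < s := hr.trans hrs
  lift R / s to ℝ≥0 using (div_pos (hs.trans hsR) hs).le with ρ hρR
  obtain rfl : ρ * s = R := by rw [hρR, div_mul_cancel₀ _ hs.ne']
  have hρ : 1 < ρ := by
    rw [← NNReal.one_lt_coe]; exact lt_of_mul_lt_mul_right (by rwa [one_mul]) hs.le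
  have hρ₀ : 0 < ρ := zero_lt_one.trans hρ
  obtain ⟨C, hC⟩ := (isCompact_closedBall (0 : E) (ρ * r)).exists_bound_of_continuousOn
    (hf.continuousOn.mono (closedBall_subset_ball (by gcongr)))
  have hsub : closedBall (0 : E) r ⊆ ball 0 s := closedBall_subset_ball hrs
  choose G hG hGeq using fun k => exists_differentiable_eqOn_of_homogeneous hs (k := k)
    (differentiableOn_taylorTerm hρ₀ hf k) fun x hx c hc₀ hc₁ =>
      taylorTerm_smul hρ₀ hf hx (by rwa [norm_real, Real.norm_of_nonneg hc₀.le]) k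
  have hunif := tendstoUniformlyOn_tsum_nat (s := closedBall (0 : E) r)
    (f := fun k => taylorTerm f ρ k) (u := fun k => C * (ρ : ℝ)⁻¹ ^ k)
    ((summable_geometric_of_lt_one (by positivity)
      (inv_lt_one_of_one_lt₀ (by exact_mod_cast hρ))).mul_left C)
    fun k x hx => norm_taylorTerm_le hρ₀ (fun w hw => hC _ (by
      rw [mem_closedBall_zero_iff] at hx ⊢
      rw [norm_smul, hw]
      gcongr)) k
  obtain ⟨N, hN⟩ := (Metric.tendstoUniformlyOn_iff.1 hunif ε hε).exists
  refine ⟨fun x => ∑ k ∈ Finset.range N, G k x, by fun_prop, fun x hx => ?_⟩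
  have := hN x hx
  rwa [(hasSum_taylorTerm hρ hf (hsub hx)).tsum_eq,
    ← Finset.sum_congr rfl fun k _ => hGeq k (hsub hx)] at this

end Taylor

theorem differentiableOn_fun_div {𝕜 E : Type*} [NontriviallyNormedField 𝕜] [NormedAddCommGroup E]
    [NormedSpace 𝕜 E] {U : Set E} {f h : E → 𝕜} (hf : DifferentiableOn 𝕜 f U)
    (hh : DifferentiableOn 𝕜 h U) (hne : ∀ x ∈ U, h x ≠ 0) :
    DifferentiableOn 𝕜 (fun x => f x / h x) U := by
  simp only [div_eq_mul_inv]
  exact hf.mul (hh.inv hne)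

section Polyhedron

open Function

variable {m : ℕ} {R : ℝ} {lo hi : Fin m × Bool → ℝ} {p : (Fin m → ℂ) → ℂ}
  {ps : List ((Fin m → ℂ) → ℂ)} {i : Fin m × Bool} {c : ℝ} {x : Fin m → ℂ}

/-- The real coordinates of `ℂᵐ`, indexed by `Fin m × Bool`: the flag `false` stands for the real
part of a complex coordinate and `true` for its imaginary part. -/
def realCoord (i : Fin m × Bool) (x : Fin m → ℂ) : ℝ :=
  if i.2 then (x i.1).im else (x i.1).re

theorem continuous_realCoord (i : Fin m × Bool) : Continuous (realCoord i) := by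
  unfold realCoord
  split_ifs <;> fun_prop

theorem abs_realCoord_le_norm (i : Fin m × Bool) (x : Fin m → ℂ) : |realCoord i x| ≤ ‖x‖ := by
  unfold realCoord
  split_ifs
  exacts [(abs_im_le_norm _).trans (norm_le_pi_norm x _),
    (abs_re_le_norm _).trans (norm_le_pi_norm x _)]

theorem dist_le_of_forall_abs_realCoord_sub_le {y : Fin m → ℂ} {η : ℝ} (hη : 0 ≤ η)
    (h : ∀ i, |realCoord i x - realCoord i y| ≤ η) : dist x y ≤ 2 * η := by
  refine (dist_pi_le_iff (by positivity)).2 fun j => ?_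
  rw [dist_eq_norm, two_mul]
  exact (norm_le_abs_re_add_abs_im _).trans (add_le_add (h (j, false)) (h (j, true)))

/-- The polyhedron in `ℂᵐ` cut out of the box with bounds `lo` and `hi` by the conditions that the
functions in `ps` take values in the square `[-R, R]²`. -/
def polyhedron (R : ℝ) (lo hi : Fin m × Bool → ℝ) (ps : List ((Fin m → ℂ) → ℂ)) :
    Set (Fin m → ℂ) :=
  {x | (∀ i, realCoord i x ∈ Icc (lo i) (hi i)) ∧ ∀ p ∈ ps, p x ∈ Icc (-R) R ×ℂ Icc (-R) R}

theorem mem_reProdIm_of_norm_le {z : ℂ} (hz : ‖z‖ ≤ R) : z ∈ Icc (-R) R ×ℂ Icc (-R) R :=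
  ⟨abs_le.1 ((abs_re_le_norm z).trans hz), abs_le.1 ((abs_im_le_norm z).trans hz)⟩

theorem mem_polyhedron_of_norm_le (hx : ‖x‖ ≤ R) (hp : ∀ p ∈ ps, ‖p x‖ ≤ R) :
    x ∈ polyhedron R (fun _ => -R) (fun _ => R) ps :=
  ⟨fun i => abs_le.1 ((abs_realCoord_le_norm i x).trans hx),
    fun p hps => mem_reProdIm_of_norm_le (hp p hps)⟩

theorem mem_polyhedron_cons : x ∈ polyhedron R lo hi (p :: ps) ↔
    p x ∈ Icc (-R) R ×ℂ Icc (-R) R ∧ x ∈ polyhedron R lo hi ps := by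
  simp only [polyhedron, mem_ofPred_eq, List.forall_mem_cons]
  tauto

theorem polyhedron_mono {lo₀ hi₀ : Fin m × Bool → ℝ} (hlo : lo₀ ≤ lo) (hhi : hi ≤ hi₀) :
    polyhedron R lo hi ps ⊆ polyhedron R lo₀ hi₀ ps :=
  fun _ hx => ⟨fun i => Icc_subset_Icc (hlo i) (hhi i) (hx.1 i), hx.2⟩

theorem isCompact_polyhedron (hps : ∀ p ∈ ps, Differentiable ℂ p) :
    IsCompact (polyhedron R lo hi ps) := by
  have hbox : IsCompact (univ.pi fun j : Fin m => Icc (lo (j, false)) (hi (j, false)) ×ℂ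
      Icc (lo (j, true)) (hi (j, true))) :=
    isCompact_univ_pi fun j => isCompact_Icc.reProdIm isCompact_Icc
  refine hbox.of_isClosed_subset ?_ fun x hx j _ => ⟨hx.1 (j, false), hx.1 (j, true)⟩
  have : polyhedron R lo hi ps = (⋂ i, realCoord i ⁻¹' Icc (lo i) (hi i)) ∩
      ⋂ p ∈ ps, p ⁻¹' (Icc (-R) R ×ℂ Icc (-R) R) := by
    ext x; simp [polyhedron]
  rw [this]
  exact (isClosed_iInter fun i => isClosed_Icc.preimage (continuous_realCoord i)).inter
    (isClosed_biInter fun p hp => (isClosed_Icc.reProdIm isClosed_Icc).preimage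
      (hps p hp).continuous)

theorem polyhedron_update_hi (hc : c ≤ hi i) :
    polyhedron R lo (update hi i c) ps = polyhedron R lo hi ps ∩ {x | realCoord i x ≤ c} := by
  refine Subset.antisymm (fun x hx => ⟨polyhedron_mono le_rfl (update_le_self_iff.2 hc) hx, ?_⟩)
    fun x hx => ⟨fun j => ?_, hx.1.2⟩
  · simpa using (hx.1 i).2
  · rcases eq_or_ne j i with rfl | hj
    · simpa using And.intro (hx.1.1 j).1 hx.2
    · simpa [hj] using hx.1.1 j

theorem polyhedron_update_lo (hc : lo i ≤ c) :
    polyhedron R (update lo i c) hi ps = polyhedron R lo hi ps ∩ {x | c ≤ realCoord i x} := by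
  refine Subset.antisymm (fun x hx => ⟨polyhedron_mono (le_update_self_iff.2 hc) le_rfl hx, ?_⟩)
    fun x hx => ⟨fun j => ?_, hx.1.2⟩
  · simpa using (hx.1 i).1
  · rcases eq_or_ne j i with rfl | hj
    · simpa using And.intro hx.2 (hx.1.1 j).2
    · simpa [hj] using hx.1.1 j

theorem update_mem_polyhedron_nil (hx : x ∈ polyhedron R lo hi []) {j : Fin m} {z : ℂ}
    (hre : z.re ∈ Icc (lo (j, false)) (hi (j, false)))
    (him : z.im ∈ Icc (lo (j, true)) (hi (j, true))) : update x j z ∈ polyhedron R lo hi [] := by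
  refine ⟨fun ⟨k, b⟩ => ?_, by simp⟩
  rcases eq_or_ne k j with rfl | hk
  · cases b <;> simpa [realCoord]
  · simpa [realCoord, hk] using hx.1 (k, b)

end Polyhedron

section SlicesSplit

open Function

variable {m : ℕ} {R : ℝ} {lo hi : Fin m × Bool → ℝ} {p : (Fin m → ℂ) → ℂ}
  {ps : List ((Fin m → ℂ) → ℂ)} {i : Fin m × Bool} {c : ℝ} {U : Set (Fin m → ℂ)}
  {φ : (Fin m → ℂ) → ℂ}

/-- Every function holomorphic near a slice of a polyhedron by a real coordinate hyperplane is
a difference of functions holomorphic near the two halves. -/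
def SlicesSplit (R : ℝ) (ps : List ((Fin m → ℂ) → ℂ)) : Prop :=
  ∀ (lo hi : Fin m × Bool → ℝ) (i : Fin m × Bool), ∀ c ∈ Icc (lo i) (hi i),
    ∀ (U : Set (Fin m → ℂ)) (φ : (Fin m → ℂ) → ℂ), IsOpen U → DifferentiableOn ℂ φ U →
    polyhedron R lo hi ps ∩ {x | realCoord i x = c} ⊆ U →
    SplitsAcross U φ (polyhedron R lo hi ps ∩ {x | realCoord i x ≤ c})
      (polyhedron R lo hi ps ∩ {x | c ≤ realCoord i x})

theorem slide_smul_proj_single (x : Fin m → ℂ) (j : Fin m) {ω : ℂ} (hω : ω ≠ 0) (μ : ℂ) :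
    slide (ω • ContinuousLinearMap.proj j) (Pi.single j ω⁻¹) x μ = update x j (ω⁻¹ * μ) := by
  ext k
  rcases eq_or_ne k j with rfl | hk
  · simp [slide]
    field_simp
    ring
  · simp [slide, hk]

theorem slicesSplit_nil (R : ℝ) (m : ℕ) : SlicesSplit R ([] : List ((Fin m → ℂ) → ℂ)) := by
  rintro lo hi ⟨j, b⟩ c hc U φ hU hφ hsl
  have hS : IsCompact (polyhedron R lo hi []) := isCompact_polyhedron (by simp)
  have hupdate : ∀ x ∈ polyhedron R lo hi [], ∀ z : ℂ,
      z.re ∈ Icc (lo (j, false)) (hi (j, false)) → z.im ∈ Icc (lo (j, true)) (hi (j, true)) →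
      realCoord (j, b) (update x j z) = c → update x j z ∈ U := fun x hx z hre him hz =>
    hsl ⟨update_mem_polyhedron_nil hx hre him, hz⟩
  cases b
  · have := splitsAcross_of_slide_mem (ℓ := (1 : ℂ) • ContinuousLinearMap.proj j)
      (v := Pi.single j 1⁻¹) (c := c) (α := lo (j, true)) (β := hi (j, true)) hS hU hφ
      (fun x hx t ht => ?_) fun x hx => by simpa [realCoord] using hx.1 (j, true)
    · simpa [realCoord] using this
    · rw [slide_smul_proj_single _ _ one_ne_zero]
      exact hupdate x hx _ (by simpa using hc) (by simpa using ht) (by simp [realCoord])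
  · have := splitsAcross_of_slide_mem (ℓ := (-I) • ContinuousLinearMap.proj j)
      (v := Pi.single j (-I)⁻¹) (c := c) (α := -hi (j, false)) (β := -lo (j, false)) hS hU hφ
      (fun x hx t ht => ?_) fun x hx => by simpa [realCoord, and_comm] using hx.1 (j, false)
    · simpa [realCoord] using this
    · rw [slide_smul_proj_single _ _ (neg_ne_zero.2 I_ne_zero)]
      exact hupdate x hx _ (by simpa [neg_le, le_neg, and_comm] using ht) (by simpa using hc)
        (by simp [realCoord])

theorem SlicesSplit.cousinSolvable (hsplit : SlicesSplit R ps) (hps : ∀ p ∈ ps, Differentiable ℂ p)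
    {U₁ U₂ : Set (Fin m → ℂ)} (hU₁ : IsOpen U₁) (hU₂ : IsOpen U₂)
    (hφ : DifferentiableOn ℂ φ (U₁ ∩ U₂)) (hsub : polyhedron R lo hi ps ⊆ U₁ ∪ U₂) :
    CousinSolvable (polyhedron R lo hi ps) U₁ U₂ φ := by
  obtain ⟨δ, hδ, hleb⟩ := lebesgue_number_lemma_of_metric (isCompact_polyhedron hps)
    (c := fun b : Bool => cond b U₁ U₂) (Bool.forall_bool.2 ⟨hU₂, hU₁⟩)
    (union_eq_iUnion ▸ hsub)
  suffices ∀ lo' hi', lo ≤ lo' → hi' ≤ hi → CousinSolvable (polyhedron R lo' hi' ps) U₁ U₂ φ from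
    this lo hi le_rfl le_rfl
  refine box_induction (η := δ / 3) (by positivity) (fun lo' hi' hsmall hlo hhi => ?_)
    fun lo' hi' i c hc hleft hright hlo hhi => ?_
  · refine cousinSolvable_of_subset hU₁ hU₂ hφ ?_
    rcases (polyhedron R lo' hi' ps).eq_empty_or_nonempty with h | ⟨x, hx⟩
    · exact Or.inl (h ▸ empty_subset _)
    have hball : polyhedron R lo' hi' ps ⊆ ball x δ := fun y hy => by
      refine (dist_le_of_forall_abs_realCoord_sub_le (by positivity) fun i =>
        (abs_sub_le_of_le_of_le (hy.1 i).1 (hy.1 i).2 (hx.1 i).1 (hx.1 i).2).trans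
          (hsmall i)).trans_lt ?_
      linarith
    obtain ⟨b, hb⟩ := hleb x (polyhedron_mono hlo hhi hx)
    cases b
    exacts [Or.inr (hball.trans hb), Or.inl (hball.trans hb)]
  · have hlo' := hlo.trans (le_update_self_iff.2 hc.1)
    have hhi' := (update_le_self_iff.2 hc.2).trans hhi
    have hunion : polyhedron R lo' hi' ps =
        polyhedron R lo' (update hi' i c) ps ∪ polyhedron R (update lo' i c) hi' ps := by
      rw [polyhedron_update_hi hc.2, polyhedron_update_lo hc.1, ← inter_union_distrib_left]
      exact (inter_eq_left.2 fun x _ => le_total (realCoord i x) c).symm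
    rw [hunion]
    refine (hleft hlo hhi').union hU₁ hU₂ (hright hlo' hhi)
      (inter_subset_left.trans ((polyhedron_mono hlo hhi').trans hsub)) fun U ψ hU hψ hAB => ?_
    rw [polyhedron_update_hi hc.2, polyhedron_update_lo hc.1] at hAB ⊢
    exact hsplit lo' hi' i c hc U ψ hU hψ fun x hx => hAB ⟨⟨hx.1, hx.2.le⟩, hx.1, hx.2.ge⟩

/-- The bounds `lo` together with the bound `c` for both real coordinates of a new complex
variable, which is put in front. -/
def consBound (c : ℝ) (lo : Fin m × Bool → ℝ) : Fin (m + 1) × Bool → ℝ :=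
  fun i => Fin.cases c (fun j => lo (j, i.2)) i.1

theorem consBound_const (c : ℝ) : consBound c (fun _ : Fin m × Bool => c) = fun _ => c := by
  funext ⟨i, b⟩
  refine Fin.cases ?_ (fun _ => ?_) i <;> simp [consBound]

theorem differentiable_finTail : Differentiable ℂ (Fin.tail : (Fin (m + 1) → ℂ) → Fin m → ℂ) :=
  differentiable_pi.2 fun i => by simp only [Fin.tail]; fun_prop

theorem differentiable_finCons_self (hp : Differentiable ℂ p) :
    Differentiable ℂ (fun x => (Fin.cons (p x) x : Fin (m + 1) → ℂ)) :=
  differentiable_pi.2 (Fin.cases (by simpa using hp) fun j => by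
    simp only [Fin.cons_succ]; fun_prop)

theorem forall_mem_map_comp_finTail_differentiable (hps : ∀ q ∈ ps, Differentiable ℂ q) :
    ∀ q ∈ ps.map (· ∘ Fin.tail (α := fun _ : Fin (m + 1) => ℂ)), Differentiable ℂ q :=
  List.forall_mem_map.2 fun q hq => (hps q hq).comp differentiable_finTail

theorem mem_polyhedron_consBound {y : Fin (m + 1) → ℂ} :
    y ∈ polyhedron R (consBound (-R) lo) (consBound R hi) (ps.map (· ∘ Fin.tail)) ↔
      y 0 ∈ Icc (-R) R ×ℂ Icc (-R) R ∧ Fin.tail y ∈ polyhedron R lo hi ps := by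
  simp only [polyhedron, mem_ofPred_eq, List.forall_mem_map, Prod.forall, Fin.forall_fin_succ,
    Bool.forall_bool, realCoord, consBound, mem_reProdIm]
  simp [Fin.tail, and_assoc]

theorem finCons_mem_polyhedron_consBound {x : Fin m → ℂ} :
    (Fin.cons (p x) x : Fin (m + 1) → ℂ) ∈
      polyhedron R (consBound (-R) lo) (consBound R hi) (ps.map (· ∘ Fin.tail)) ↔
      x ∈ polyhedron R lo hi (p :: ps) := by
  rw [mem_polyhedron_consBound, mem_polyhedron_cons, Fin.cons_zero, Fin.tail_cons]

/-- **Oka's extension theorem**, for the graph of one of the functions defining a polyhedron. -/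
theorem exists_extension_of_slicesSplit (hp : Differentiable ℂ p)
    (hps : ∀ q ∈ ps, Differentiable ℂ q)
    (hsplit : SlicesSplit R (ps.map (· ∘ Fin.tail (α := fun _ : Fin (m + 1) => ℂ))))
    (hU : IsOpen U) (hφ : DifferentiableOn ℂ φ U) (hsub : polyhedron R lo hi (p :: ps) ⊆ U) :
    ∃ (W : Set (Fin (m + 1) → ℂ)) (F : (Fin (m + 1) → ℂ) → ℂ), IsOpen W ∧
      polyhedron R (consBound (-R) lo) (consBound R hi) (ps.map (· ∘ Fin.tail)) ⊆ W ∧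
      DifferentiableOn ℂ F W ∧
      ∀ x ∈ U, (Fin.cons (p x) x : Fin (m + 1) → ℂ) ∈ W → F (Fin.cons (p x) x) = φ x := by
  let tail : (Fin (m + 1) → ℂ) → Fin m → ℂ := Fin.tail
  let t : (Fin (m + 1) → ℂ) → ℂ := fun y => y 0 - p (tail y)
  have ht : Differentiable ℂ t :=
    Differentiable.sub (by fun_prop) (hp.comp differentiable_finTail)
  have hU₁ : IsOpen (tail ⁻¹' U) := hU.preimage differentiable_finTail.continuous
  have hφ₁ : DifferentiableOn ℂ (φ ∘ tail) (tail ⁻¹' U) :=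
    hφ.comp differentiable_finTail.differentiableOn fun y hy => hy
  have hcover : polyhedron R (consBound (-R) lo) (consBound R hi) (ps.map (· ∘ Fin.tail)) ⊆
      tail ⁻¹' U ∪ {y | t y ≠ 0} := fun y hy => by
    by_cases h : t y = 0
    · rw [mem_polyhedron_consBound, sub_eq_zero.1 h] at hy
      exact Or.inl (hsub (mem_polyhedron_cons.2 hy))
    · exact Or.inr h
  obtain ⟨W, F, hW, hsubW, hF, hFφ⟩ := exists_extension_of_cousinSolvable hU₁ ht hφ₁ hcover
    (hsplit.cousinSolvable (forall_mem_map_comp_finTail_differentiable hps) hU₁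
      (isOpen_ne_fun ht.continuous continuous_const)
      (differentiableOn_fun_div (hφ₁.mono inter_subset_left) ht.differentiableOn
        fun y hy => hy.2) hcover)
  exact ⟨W, F, hW, hsubW, hF, fun x hx hxW => by
    simpa [tail] using hFφ (Fin.cons (p x) x) (by simpa [tail] using hx) hxW (by simp [t, tail])⟩

theorem SlicesSplit.cons (hp : Differentiable ℂ p) (hps : ∀ q ∈ ps, Differentiable ℂ q)
    (hsplit : SlicesSplit R (ps.map (· ∘ Fin.tail (α := fun _ : Fin (m + 1) => ℂ)))) :
    SlicesSplit R (p :: ps) := by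
  intro lo hi i c hc U φ hU hφ hslice
  have hS : IsCompact (polyhedron R lo hi (p :: ps)) :=
    isCompact_polyhedron (List.forall_mem_cons.2 ⟨hp, hps⟩)
  have hslab : ∀ {n : ℕ} {lo hi : Fin n × Bool → ℝ} {qs : List ((Fin n → ℂ) → ℂ)} {i},
      c ∈ Icc (lo i) (hi i) → polyhedron R (update lo i c) (update hi i c) qs =
        polyhedron R lo hi qs ∩ {x | realCoord i x = c} := fun hc => by
    ext x
    rw [polyhedron_update_lo hc.1, polyhedron_update_hi hc.2]
    simp only [mem_inter_iff, mem_ofPred_eq, and_assoc, le_antisymm_iff]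
  obtain ⟨W, F, hW, hSW, hF, hFφ⟩ := exists_extension_of_slicesSplit hp hps hsplit hU hφ
    ((hslab hc).trans_subset hslice)
  have hsplitF := hsplit (consBound (-R) lo) (consBound R hi) (i.1.succ, i.2) c hc W F hW hF
    fun y ⟨hy, hyc⟩ => hSW <| by
      rw [mem_polyhedron_consBound] at hy ⊢
      exact ⟨hy.1, (hslab hc).symm ▸ ⟨hy.2, hyc⟩⟩
  exact hsplitF.comp (differentiable_finCons_self hp)
    (hS.inter_right (isClosed_le (continuous_realCoord i) continuous_const))
    (hS.inter_right (isClosed_le continuous_const (continuous_realCoord i))) hU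
    (fun x hx => hslice ⟨hx.1.1, le_antisymm hx.1.2 hx.2.2⟩)
    (fun x hx => ⟨finCons_mem_polyhedron_consBound.2 hx.1, hx.2⟩)
    (fun x hx => ⟨finCons_mem_polyhedron_consBound.2 hx.1, hx.2⟩) hFφ

theorem slicesSplit (R : ℝ) {m : ℕ} (ps : List ((Fin m → ℂ) → ℂ))
    (hps : ∀ q ∈ ps, Differentiable ℂ q) : SlicesSplit R ps := by
  induction hk : ps.length generalizing m ps with
  | zero =>
    rw [List.length_eq_zero_iff.1 hk]
    exact slicesSplit_nil R m
  | succ k ih =>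
    obtain ⟨p, ps, rfl⟩ := List.exists_cons_of_length_eq_add_one hk
    obtain ⟨hp, hps⟩ := List.forall_mem_cons.1 hps
    exact SlicesSplit.cons hp hps (ih _ (forall_mem_map_comp_finTail_differentiable hps)
      (by simpa using hk))

theorem cousinSolvable_polyhedron (hps : ∀ p ∈ ps, Differentiable ℂ p) {U₁ U₂ : Set (Fin m → ℂ)}
    (hU₁ : IsOpen U₁) (hU₂ : IsOpen U₂) (hφ : DifferentiableOn ℂ φ (U₁ ∩ U₂))
    (hsub : polyhedron R lo hi ps ⊆ U₁ ∪ U₂) :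
    CousinSolvable (polyhedron R lo hi ps) U₁ U₂ φ :=
  (slicesSplit R ps hps).cousinSolvable hps hU₁ hU₂ hφ hsub

theorem norm_finCons_le {r : ℝ} {z : ℂ} {x : Fin m → ℂ} (hz : ‖z‖ ≤ r) (hx : ‖x‖ ≤ r) :
    ‖(Fin.cons z x : Fin (m + 1) → ℂ)‖ ≤ r :=
  (pi_norm_le_iff_of_nonneg ((norm_nonneg z).trans hz)).2
    (Fin.cases hz fun j => (norm_le_pi_norm x j).trans hx)

theorem exists_entire_approx_on_polyhedron {r : ℝ} (hr : 0 < r) (hrR : r < R)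
    (hps : ∀ q ∈ ps, Differentiable ℂ q) (hU : IsOpen U) (hφ : DifferentiableOn ℂ φ U)
    (hsub : polyhedron R (fun _ => -R) (fun _ => R) ps ⊆ U) {ε : ℝ} (hε : 0 < ε) :
    ∃ G : (Fin m → ℂ) → ℂ, Differentiable ℂ G ∧ ∀ x : Fin m → ℂ, ‖x‖ ≤ r →
      (∀ p ∈ ps, ‖p x‖ ≤ r) → dist (φ x) (G x) < ε := by
  induction hk : ps.length generalizing m ps with
  | zero =>
    obtain rfl := List.length_eq_zero_iff.1 hk
    have hball : ball 0 R ⊆ U := fun x hx => hsub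
      (mem_polyhedron_of_norm_le (mem_ball_zero_iff.1 hx).le (by simp))
    obtain ⟨G, hG, hφG⟩ := exists_differentiable_forall_closedBall_dist_lt hr hrR
      (hφ.mono hball) hε
    exact ⟨G, hG, fun x hx _ => hφG x (mem_closedBall_zero_iff.2 hx)⟩
  | succ k ih =>
    obtain ⟨p, ps, rfl⟩ := List.exists_cons_of_length_eq_add_one hk
    obtain ⟨hp, hps⟩ := List.forall_mem_cons.1 hps
    have hlift := forall_mem_map_comp_finTail_differentiable hps
    obtain ⟨W, F, hW, hSW, hF, hFφ⟩ := exists_extension_of_slicesSplit hp hps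
      (slicesSplit R _ hlift) hU hφ hsub
    obtain ⟨G, hG, hFG⟩ := ih hlift hW hF (by rwa [consBound_const, consBound_const] at hSW)
      (by simpa using hk)
    refine ⟨fun x => G (Fin.cons (p x) x), hG.comp (differentiable_finCons_self hp),
      fun x hx hpx => ?_⟩
    have hxP := mem_polyhedron_of_norm_le (hx.trans hrR.le) fun q hq => (hpx q hq).trans hrR.le
    obtain ⟨hpx, hpsx⟩ := List.forall_mem_cons.1 hpx
    rw [← hFφ x (hsub hxP) (hSW (finCons_mem_polyhedron_consBound.2 hxP))]
    exact hFG _ (norm_finCons_le hpx hx) (List.forall_mem_map.2 fun q hq => by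
      simpa using hpsx q hq)

end SlicesSplit

section EntireHull

variable {E : Type*} [NormedAddCommGroup E] [NormedSpace ℂ E] {L M C : Set E} {y : E}

/-- The holomorphically convex hull of `L` in a complex normed space. The bound by a supremum over
`L` is replaced by the bound by some value on `L`: for compact nonempty `L` this is the same, and
unbounded or empty `L` need no convention about suprema. -/
def entireHull (L : Set E) : Set E :=
  {z | ∀ f : E → ℂ, Differentiable ℂ f → ∃ w ∈ L, ‖f z‖ ≤ ‖f w‖}

theorem subset_entireHull (L : Set E) : L ⊆ entireHull L :=
  fun z hz _ _ => ⟨z, hz, le_rfl⟩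

theorem entireHull_mono (h : L ⊆ M) : entireHull L ⊆ entireHull M :=
  fun _ hz f hf => let ⟨w, hw, hle⟩ := hz f hf; ⟨w, h hw, hle⟩

theorem entireHull_entireHull_subset (L : Set E) : entireHull (entireHull L) ⊆ entireHull L :=
  fun _ hz f hf =>
    let ⟨_, hw, hzw⟩ := hz f hf
    let ⟨v, hv, hwv⟩ := hw f hf
    ⟨v, hv, hzw.trans hwv⟩

theorem entireHull_empty : entireHull (∅ : Set E) = ∅ :=
  eq_empty_of_forall_notMem fun _ hz => by simpa using hz 0 (differentiable_const 0)

theorem exists_norm_le_of_mem_entireHull (hy : y ∈ entireHull L) : ∃ w ∈ L, ‖y‖ ≤ ‖w‖ := by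
  obtain ⟨g, hg, hgy⟩ := exists_dual_vector'' ℂ y
  obtain ⟨w, hw, hle⟩ := hy g g.differentiable
  rw [hgy, RCLike.norm_ofReal, abs_norm] at hle
  exact ⟨w, hw, hle.trans (by simpa using g.le_of_opNorm_le hg w)⟩

theorem isClosed_entireHull (hL : IsCompact L) : IsClosed (entireHull L) := by
  rcases L.eq_empty_or_nonempty with rfl | hne
  · simp [entireHull_empty]
  simp only [entireHull, ofPred_forall]
  refine isClosed_iInter fun f => isClosed_iInter fun hf => ?_
  obtain ⟨w, hw, hmax⟩ := hL.exists_isMaxOn hne hf.continuous.norm.continuousOn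
  convert isClosed_le hf.continuous.norm (continuous_const (y := ‖f w‖)) with z
  exact ⟨fun ⟨v, hv, h⟩ => h.trans (hmax hv), fun h => ⟨w, hw, h⟩⟩

theorem isCompact_entireHull [ProperSpace E] (hL : IsCompact L) : IsCompact (entireHull L) := by
  obtain ⟨r, hr⟩ := hL.isBounded.subset_closedBall 0
  refine isCompact_of_isClosed_isBounded (isClosed_entireHull hL)
    (isBounded_closedBall.subset (t := closedBall (0 : E) r) fun z hz => ?_)
  obtain ⟨w, hw, hzw⟩ := exists_norm_le_of_mem_entireHull hz
  exact mem_closedBall_zero_iff.2 (hzw.trans (mem_closedBall_zero_iff.1 (hr hw)))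

theorem exists_entire_norm_le_lt_norm (hL : IsCompact L) (hy : y ∉ entireHull L) {a b : ℝ}
    (ha : 0 < a) :
    ∃ p : E → ℂ, Differentiable ℂ p ∧ (∀ w ∈ L, ‖p w‖ ≤ a) ∧ b < ‖p y‖ := by
  obtain ⟨f, q, hf, hq, hLq, hqy⟩ : ∃ (f : E → ℂ) (q : ℝ), Differentiable ℂ f ∧ 0 < q ∧
      (∀ w ∈ L, ‖f w‖ ≤ q) ∧ q < ‖f y‖ := by
    rcases L.eq_empty_or_nonempty with rfl | hne
    · exact ⟨fun _ => 2, 1, differentiable_const _, one_pos, by simp, by simp⟩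
    obtain ⟨f, hf, hlt⟩ : ∃ f : E → ℂ, Differentiable ℂ f ∧ ∀ w ∈ L, ‖f w‖ < ‖f y‖ := by
      simpa [entireHull] using hy
    obtain ⟨w, hw, hmax⟩ := hL.exists_isMaxOn hne hf.continuous.norm.continuousOn
    obtain ⟨q, hwq, hqy⟩ := exists_between (hlt w hw)
    exact ⟨f, q, hf, (norm_nonneg _).trans_lt hwq, fun v hv => (hmax hv).trans hwq.le, hqy⟩
  obtain ⟨N, hN⟩ := pow_unbounded_of_one_lt (b / a) ((one_lt_div hq).2 hqy)
  have hnorm (x : E) : ‖(a : ℂ) * (f x / q) ^ N‖ = a * (‖f x‖ / q) ^ N := by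
    simp [abs_of_pos, ha, hq]
  refine ⟨fun x => a * (f x / q) ^ N, by fun_prop, fun w hw => ?_, ?_⟩
  · rw [hnorm]
    exact mul_le_of_le_one_right ha.le (pow_le_one₀ (by positivity) ((div_le_one hq).2 (hLq w hw)))
  · rw [hnorm]
    exact (div_lt_iff₀' ha).1 hN

theorem exists_list_entire_norm_le_lt_norm (hL : IsCompact L) (hC : IsCompact C)
    (hCL : Disjoint C (entireHull L)) {a : ℝ} (ha : 0 < a) (b : ℝ) :
    ∃ ps : List (E → ℂ), (∀ p ∈ ps, Differentiable ℂ p) ∧ (∀ p ∈ ps, ∀ w ∈ L, ‖p w‖ ≤ a) ∧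
      ∀ y ∈ C, ∃ p ∈ ps, b < ‖p y‖ := by
  choose! p hp hpL hpy using fun y (hy : y ∈ C) =>
    exists_entire_norm_le_lt_norm hL (disjoint_left.1 hCL hy) (b := b) ha
  obtain ⟨t, ht, hCt⟩ := hC.elim_nhds_subcover (fun y => {x | b < ‖p y x‖}) fun y hy =>
    (isOpen_lt continuous_const (hp y hy).continuous.norm).mem_nhds (hpy y hy)
  refine ⟨t.toList.map p, ?_, ?_, fun y hy => ?_⟩
  · simpa using fun y hy => hp y (ht y hy)
  · simpa using fun y hy => hpL y (ht y hy)
  · simpa using hCt hy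

end EntireHull

section OkaWeil

variable {E : Type*} [NormedAddCommGroup E] [NormedSpace ℂ E] {X U U₁ U₂ : Set E} {f φ : E → ℂ}

theorem exists_polyhedron_subset {m : ℕ} (e : E ≃L[ℂ] (Fin m → ℂ)) (hX : IsCompact X)
    (hXc : entireHull X ⊆ X) (hU : IsOpen U) (hXU : X ⊆ U) :
    ∃ (r R : ℝ) (ps : List ((Fin m → ℂ) → ℂ)), 0 < r ∧ r < R ∧ (∀ p ∈ ps, Differentiable ℂ p) ∧
      (∀ x ∈ X, ‖e x‖ ≤ r ∧ ∀ p ∈ ps, ‖p (e x)‖ ≤ r) ∧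
      polyhedron R (fun _ => -R) (fun _ => R) ps ⊆ e.symm ⁻¹' U := by
  obtain ⟨r, hr, hXr⟩ := (hX.image e.continuous).isBounded.exists_pos_norm_le
  rw [forall_mem_image] at hXr
  have hB : IsCompact (polyhedron (2 * r) (fun _ : Fin m × Bool => -(2 * r)) (fun _ => 2 * r) []) :=
    isCompact_polyhedron (by simp)
  obtain ⟨ps, hps, hpsX, hpsB⟩ := exists_list_entire_norm_le_lt_norm hX
    ((hB.image e.symm.continuous).diff hU)
    (disjoint_left.2 fun y hy hyX => hy.2 (hXU (hXc hyX))) hr (2 * (2 * r))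
  refine ⟨r, 2 * r, ps.map (· ∘ e.symm), hr, by linarith, ?_, fun x hx => ⟨hXr hx, ?_⟩,
    fun x hx => by_contra fun hxU => ?_⟩
  · exact List.forall_mem_map.2 fun p hp => (hps p hp).comp e.symm.differentiable
  · exact List.forall_mem_map.2 fun p hp => by simpa using hpsX p hp x hx
  · obtain ⟨p, hp, hpx⟩ := hpsB (e.symm x) ⟨mem_image_of_mem _ ⟨hx.1, by simp⟩, hxU⟩
    obtain ⟨hre, him⟩ := mem_reProdIm.1 (hx.2 _ (List.mem_map_of_mem hp))
    rw [Function.comp_apply, mem_Icc, ← abs_le] at hre him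
    linarith [norm_le_abs_re_add_abs_im (p (e.symm x))]

variable [FiniteDimensional ℂ E]

/-- **Oka–Weil approximation.** -/
theorem exists_entire_approx (hX : IsCompact X) (hXc : entireHull X ⊆ X) (hU : IsOpen U)
    (hXU : X ⊆ U) (hf : DifferentiableOn ℂ f U) {ε : ℝ} (hε : 0 < ε) :
    ∃ F : E → ℂ, Differentiable ℂ F ∧ ∀ x ∈ X, dist (f x) (F x) < ε := by
  let e := (Module.finBasis ℂ E).equivFunL
  obtain ⟨r, R, ps, hr, hrR, hps, hXr, hsub⟩ := exists_polyhedron_subset e hX hXc hU hXU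
  obtain ⟨G, hG, hGf⟩ := exists_entire_approx_on_polyhedron hr hrR hps
    (hU.preimage e.symm.continuous) (hf.comp e.symm.differentiable.differentiableOn fun x hx => hx)
    hsub hε
  exact ⟨G ∘ e, hG.comp e.differentiable, fun x hx => by
    simpa using hGf (e x) (hXr x hx).1 (hXr x hx).2⟩

theorem cousinSolvable_of_entireHull_subset (hX : IsCompact X) (hXc : entireHull X ⊆ X)
    (hU₁ : IsOpen U₁) (hU₂ : IsOpen U₂) (hXU : X ⊆ U₁ ∪ U₂)
    (hφ : DifferentiableOn ℂ φ (U₁ ∩ U₂)) : CousinSolvable X U₁ U₂ φ := by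
  let e := (Module.finBasis ℂ E).equivFunL
  obtain ⟨r, R, ps, -, hrR, hps, hXr, hsub⟩ :=
    exists_polyhedron_subset e hX hXc (hU₁.union hU₂) hXU
  obtain ⟨V, a₁, a₂, hV, hPV, ha⟩ := cousinSolvable_polyhedron hps
    (hU₁.preimage e.symm.continuous) (hU₂.preimage e.symm.continuous)
    (hφ.comp e.symm.differentiable.differentiableOn fun x hx => hx) hsub
  have hmaps {W : Set E} : MapsTo e (W ∩ e ⁻¹' V) (e.symm ⁻¹' W ∩ V) := fun x hx => by
    simpa using hx
  refine ⟨e ⁻¹' V, a₁ ∘ e, a₂ ∘ e, hV.preimage e.continuous, fun x hx => hPV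
      (mem_polyhedron_of_norm_le ((hXr x hx).1.trans hrR.le)
        fun p hp => ((hXr x hx).2 p hp).trans hrR.le),
    ha.1.comp e.differentiable.differentiableOn hmaps,
    ha.2.comp e.differentiable.differentiableOn hmaps, fun x hx => ?_⟩
  simpa using ha.3 (e x) (by simpa using hx)

end OkaWeil

section Rossi

open scoped ComplexConjugate

variable {E : Type*} [NormedAddCommGroup E] [NormedSpace ℂ E] {L N P U X : Set E}
  {κ : E → ℂ} {x : E}

theorem exists_cousin_inv [FiniteDimensional ℂ E] (hX : IsCompact X) (hXc : entireHull X ⊆ X)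
    (hU : IsOpen U) (hκ : DifferentiableOn ℂ κ U) (hP : IsCompact P) (hPX : P ⊆ X) (hPU : P ⊆ U)
    (hκP : ∀ x ∈ X ∩ U, κ x = 0 → x ∈ P) :
    ∃ (V₁ V₂ : Set E) (a₁ a₂ : E → ℂ), IsOpen V₁ ∧ IsOpen V₂ ∧ P ⊆ V₁ ∧ V₁ ⊆ U ∧ X \ P ⊆ V₂ ∧
      DifferentiableOn ℂ a₁ V₁ ∧ DifferentiableOn ℂ a₂ V₂ ∧
      ∀ x ∈ V₁ ∩ V₂, κ x ≠ 0 ∧ (κ x)⁻¹ = a₁ x - a₂ x := by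
  have := FiniteDimensional.proper_rclike ℂ E
  obtain ⟨W, hW, hPW, hWU, -⟩ := exists_open_between_and_isCompact_closure hP hU hPU
  set Q := (closure W)ᶜ ∪ U ∩ κ ⁻¹' {0}ᶜ
  have hQ : IsOpen Q := isClosed_closure.isOpen_compl.union
    (hκ.continuousOn.isOpen_inter_preimage hU isOpen_compl_singleton)
  have hXQ : X \ P ⊆ Q := fun x hx => by
    by_cases hxW : x ∈ closure W
    · exact Or.inr ⟨hWU hxW, fun h => hx.2 (hκP x ⟨hx.1, hWU hxW⟩ h)⟩
    · exact Or.inl hxW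
  have hne : ∀ x ∈ W ∩ Q, κ x ≠ 0 := by
    rintro x ⟨hx, hx' | hx'⟩
    exacts [absurd (subset_closure hx) hx', hx'.2]
  obtain ⟨V, a₁, a₂, hV, hXV, ha⟩ := cousinSolvable_of_entireHull_subset hX hXc hW hQ
    (fun x hx => (em (x ∈ P)).imp (fun h => hPW h) fun h => hXQ ⟨hx, h⟩)
    ((hκ.mono fun x hx => hWU (subset_closure hx.1)).fun_inv hne)
  exact ⟨W ∩ V, Q ∩ V, a₁, a₂, hW.inter hV, hQ.inter hV, subset_inter hPW (hPX.trans hXV),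
    fun x hx => hWU (subset_closure hx.1), fun x hx => ⟨hXQ hx, hXV hx.1⟩, ha.1, ha.2,
    fun x ⟨hx₁, hx₂⟩ => ⟨hne x ⟨hx₁.1, hx₂.1⟩, ha.3 x ⟨⟨hx₁.1, hx₂.1⟩, hx₁.2⟩⟩⟩

theorem exists_forall_lt_re {T : Type*} [TopologicalSpace T] [T2Space T] [LocallyCompactSpace T]
    {P V₁ V₂ X : Set T} {a₁ a₂ : T → ℂ} (hX : IsCompact X) (hP : IsCompact P)
    (hV₁ : IsOpen V₁) (hPV : P ⊆ V₁) (hXV : X \ P ⊆ V₂) (ha₁ : ContinuousOn a₁ V₁)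
    (ha₂ : ContinuousOn a₂ V₂) (hre : ∀ x ∈ X ∩ (V₁ ∩ V₂), (a₁ x).re ≤ (a₂ x).re) :
    ∃ C : ℝ, ∀ x ∈ X \ P, C < (a₂ x).re := by
  obtain ⟨W, hW, hPW, hWV, hWc⟩ := exists_open_between_and_isCompact_closure hP hV₁ hPV
  obtain ⟨C₁, hC₁⟩ := hWc.exists_bound_of_continuousOn (ha₁.mono hWV)
  obtain ⟨C₂, hC₂⟩ := (hX.diff hW).exists_bound_of_continuousOn
    (ha₂.mono fun x hx => hXV ⟨hx.1, fun h => hx.2 (hPW h)⟩)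
  refine ⟨-max C₁ C₂ - 1, fun x hx => ?_⟩
  by_cases hxW : x ∈ W
  · have hxW := subset_closure hxW
    linarith [hre x ⟨hx.1, hWV hxW, hXV hx⟩, le_max_left C₁ C₂,
      neg_le_of_abs_le ((abs_re_le_norm _).trans (hC₁ x hxW))]
  · linarith [le_max_right C₁ C₂, neg_le_of_abs_le ((abs_re_le_norm _).trans (hC₂ x ⟨hx.1, hxW⟩))]

theorem div_one_sub_mul_eq_neg_inv {𝕜 : Type*} [Field 𝕜] {k b c : 𝕜} (hk : k ≠ 0)
    (h : k⁻¹ = b - c) : k / (1 - b * k) = -c⁻¹ := by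
  have hden : 1 - b * k = -(c * k) := by
    rw [← inv_mul_cancel₀ hk, h]
    ring
  rw [hden, div_neg, div_mul_cancel_right₀ hk]

/- With `a₁` and `a₂` as in `exists_cousin_inv`, shifted so that `Re a₂ > 0`, the peak function is
`-1 / a₂ = κ / (1 - a₁ κ)`. -/
theorem exists_peak [FiniteDimensional ℂ E] (hX : IsCompact X) (hXc : entireHull X ⊆ X)
    (hU : IsOpen U) (hκ : DifferentiableOn ℂ κ U) (hre : ∀ x ∈ X ∩ U, (κ x).re ≤ 0)
    (hP : IsCompact P) (hPX : P ⊆ X) (hPU : P ⊆ U) (hκP : ∀ x ∈ X ∩ U, κ x = 0 ↔ x ∈ P) :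
    ∃ (V : Set E) (G : E → ℂ), IsOpen V ∧ X ⊆ V ∧ DifferentiableOn ℂ G V ∧
      (∀ x ∈ P, G x = 0) ∧ ∀ x ∈ X \ P, (G x).re < 0 := by
  have := FiniteDimensional.proper_rclike ℂ E
  obtain ⟨V₁, V₂, a₁, a₂, hV₁, hV₂, hPV₁, hV₁U, hXV₂, ha₁, ha₂, he⟩ := exists_cousin_inv hX hXc hU
    hκ hP hPX hPU fun x hx => (hκP x hx).1
  obtain ⟨C, hC⟩ := exists_forall_lt_re hX hP hV₁ hPV₁ hXV₂ ha₁.continuousOn ha₂.continuousOn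
    fun x ⟨hx, hxV⟩ => by
      have h : (κ x)⁻¹.re ≤ 0 := by
        rw [inv_re]
        exact div_nonpos_of_nonpos_of_nonneg (hre x ⟨hx, hV₁U hxV.1⟩) (normSq_nonneg _)
      rwa [(he x hxV).2, sub_re, sub_nonpos] at h
  set W₁ := V₁ ∩ (fun x => 1 - (a₁ x - C) * κ x) ⁻¹' {0}ᶜ
  set W₂ := V₂ ∩ a₂ ⁻¹' {w | C < w.re}
  have hd₁ : DifferentiableOn ℂ (fun x => 1 - (a₁ x - C) * κ x) V₁ :=
    ((ha₁.sub_const _).mul (hκ.mono hV₁U)).const_sub _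
  have ha₂C {x : E} (hx : C < (a₂ x).re) : a₂ x - C ≠ 0 := fun h => hx.ne'
    (by simpa using congrArg re (sub_eq_zero.1 h))
  have hW₁ : IsOpen W₁ := hd₁.continuousOn.isOpen_inter_preimage hV₁ isOpen_compl_singleton
  have hW₂ : IsOpen W₂ := ha₂.continuousOn.isOpen_inter_preimage hV₂
    (isOpen_lt continuous_const continuous_re)
  obtain ⟨G, hG, hG₁, hG₂⟩ := exists_differentiableOn_union hW₁ hW₂
    (differentiableOn_fun_div (hκ.mono (inter_subset_left.trans hV₁U))
      (hd₁.mono inter_subset_left) fun x hx => hx.2)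
    (((ha₂.mono inter_subset_left).sub_const (C : ℂ)).fun_inv fun x hx => ha₂C hx.2).neg
    fun x ⟨hx₁, hx₂⟩ => by
      obtain ⟨hκx, hκa⟩ := he x ⟨hx₁.1, hx₂.1⟩
      exact div_one_sub_mul_eq_neg_inv hκx (by rw [hκa, sub_sub_sub_cancel_right])
  have hP₁ : ∀ x ∈ P, κ x = 0 ∧ x ∈ W₁ := fun x hx => by
    have hκx := (hκP x ⟨hPX hx, hPU hx⟩).2 hx
    exact ⟨hκx, hPV₁ hx, by simp [hκx]⟩
  refine ⟨W₁ ∪ W₂, G, hW₁.union hW₂, fun x hx => ?_, hG, fun x hx => ?_, fun x hx => ?_⟩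
  · exact (em (x ∈ P)).imp (fun h => (hP₁ x h).2) fun h => ⟨hXV₂ ⟨hx, h⟩, hC x ⟨hx, h⟩⟩
  · simp [hG₁ (hP₁ x hx).2, (hP₁ x hx).1]
  · have hxC : 0 < (a₂ x - C).re := by simpa using hC x hx
    rw [hG₂ ⟨hXV₂ hx, hC x hx⟩, Pi.neg_apply, neg_re, inv_re, neg_lt_zero]
    exact div_pos hxC (normSq_pos.2 (ha₂C (hC x hx)))

theorem exists_norm_le_of_differentiableOn [FiniteDimensional ℂ E] (hL : IsCompact L)
    (hU : IsOpen U) (hLU : entireHull L ⊆ U) {f : E → ℂ} (hf : DifferentiableOn ℂ f U)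
    (hx : x ∈ entireHull L) : ∃ w ∈ L, ‖f x‖ ≤ ‖f w‖ := by
  have := FiniteDimensional.proper_rclike ℂ E
  have hLX := subset_entireHull L
  by_contra! hlt
  obtain ⟨v, hv, -⟩ := hx 0 (differentiable_const 0)
  obtain ⟨w, hw, hmax⟩ := hL.exists_isMaxOn ⟨v, hv⟩ (hf.continuousOn.mono (hLX.trans hLU)).norm
  obtain ⟨F, hF, hfF⟩ := exists_entire_approx (isCompact_entireHull hL)
    (entireHull_entireHull_subset L) hU hLU hf (half_pos (sub_pos.2 (hlt w hw)))
  obtain ⟨u, hu, huF⟩ := hx F hF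
  have hxF := (norm_sub_norm_le (f x) (F x)).trans_lt (dist_eq_norm (f x) _ ▸ hfF x hx)
  have huF' := (norm_sub_norm_le (F u) (f u)).trans_lt (dist_eq_norm' (f u) _ ▸ hfF u (hLX hu))
  have huw : ‖f u‖ ≤ ‖f w‖ := hmax hu
  linarith

theorem re_conj_mul_sub_le (a b : ℂ) : (conj a * (b - a)).re ≤ ‖a‖ * (‖b‖ - ‖a‖) := by
  rw [mul_sub, mul_sub, sub_re, ← normSq_eq_conj_mul_self, ofReal_re, normSq_eq_norm_sq, sq]
  gcongr
  exact (re_le_norm _).trans_eq (by rw [norm_mul, norm_conj])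

theorem re_conj_mul_sub_nonpos {a b : ℂ} (h : ‖b‖ ≤ ‖a‖) : (conj a * (b - a)).re ≤ 0 :=
  (re_conj_mul_sub_le a b).trans
    (mul_nonpos_of_nonneg_of_nonpos (norm_nonneg a) (sub_nonpos.2 h))

theorem re_conj_mul_sub_neg {a b : ℂ} (h : ‖b‖ < ‖a‖) : (conj a * (b - a)).re < 0 :=
  (re_conj_mul_sub_le a b).trans_lt
    (mul_neg_of_pos_of_neg ((norm_nonneg b).trans_lt h) (sub_neg.2 h))

/-- **Rossi's local maximum modulus principle.** -/
theorem exists_mem_frontier_union_norm_le [FiniteDimensional ℂ E] (hL : IsCompact L)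
    (hN : IsCompact N) (hU : IsOpen U) (hNU : entireHull L ∩ N ⊆ U) {h : E → ℂ}
    (hh : DifferentiableOn ℂ h U) (hx : x ∈ entireHull L) (hxN : x ∈ N) :
    ∃ y ∈ entireHull L ∩ N, y ∈ frontier N ∪ L ∧ ‖h x‖ ≤ ‖h y‖ := by
  have := FiniteDimensional.proper_rclike ℂ E
  have hX := isCompact_entireHull hL
  obtain ⟨x₁, hx₁, hmax⟩ := (hX.inter hN).exists_isMaxOn ⟨x, hx, hxN⟩
    (hh.continuousOn.mono hNU).norm
  by_contra! hlt
  let κ y := conj (h x₁) * (h y - h x₁)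
  have hκ : DifferentiableOn ℂ κ U := (hh.sub_const _).const_mul _
  have hκre : ∀ y ∈ entireHull L ∩ N, (κ y).re ≤ 0 := fun y hy =>
    re_conj_mul_sub_nonpos (hmax hy)
  have hκne : ∀ y ∈ entireHull L ∩ N, y ∈ frontier N ∪ L → κ y ≠ 0 := fun y hy hyL h₀ =>
    (re_conj_mul_sub_neg ((hlt y hy hyL).trans_le (hmax ⟨hx, hxN⟩))).ne (congrArg re h₀)
  set P := (entireHull L ∩ N) ∩ κ ⁻¹' {0}
  have hPint : P ⊆ interior N := fun y ⟨hy, hκy⟩ =>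
    by_contra fun hyN => hκne y hy (Or.inl ⟨subset_closure hy.2, hyN⟩) hκy
  obtain ⟨V, G, hV, hXV, hG, hGP, hGre⟩ := exists_peak hX (entireHull_entireHull_subset L)
    (isOpen_interior.inter hU) (hκ.mono inter_subset_right)
    (fun y hy => hκre y ⟨hy.1, interior_subset hy.2.1⟩)
    ((hκ.continuousOn.mono hNU).preimage_isClosed_of_isClosed (hX.inter hN).isClosed
      isClosed_singleton |> (hX.inter hN).of_isClosed_subset <| inter_subset_left)
    (fun y hy => hy.1.1) (fun y hy => ⟨hPint hy, hNU hy.1⟩)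
    (fun y hy => ⟨fun h => ⟨⟨hy.1, interior_subset hy.2.1⟩, h⟩, fun h => h.2⟩)
  obtain ⟨w, hw, hle⟩ := exists_norm_le_of_differentiableOn hL hV hXV hG.cexp hx₁.1
  have hwX := subset_entireHull L hw
  rw [hGP x₁ ⟨hx₁, by simp [κ]⟩, exp_zero, norm_one, norm_exp, Real.one_le_exp_iff] at hle
  exact (hGre w ⟨hwX, fun hwP => hκne w hwP.1 (Or.inr hw) hwP.2⟩).not_ge hle

end Rossi

section DominatedNear

open scoped ComplexConjugate

variable {E : Type*} [NormedAddCommGroup E] [NormedSpace ℂ E] {L F O Y Y' : Set E} {y : E}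

/-- Near `y`, entire functions satisfy a maximum principle on `Y`: their value at `y` is dominated
by their values on compact subsets of `Y \ {y}` arbitrarily close to `y`. -/
def DominatedNear (Y : Set E) (y : E) : Prop :=
  ∀ O ∈ 𝓝 y, ∃ M : Set E, IsCompact M ∧ M ⊆ Y ∩ O ∧ y ∉ M ∧
    ∀ f : E → ℂ, Differentiable ℂ f → ∃ x ∈ M, ‖f y‖ ≤ ‖f x‖

theorem DominatedNear.mono_nhds (h : DominatedNear Y y) (hO : O ∈ 𝓝 y) (hsub : Y ∩ O ⊆ Y') :
    DominatedNear Y' y := fun Q hQ =>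
  let ⟨M, hM, hMs, hyM, hf⟩ := h (Q ∩ O) (inter_mem hQ hO)
  ⟨M, hM, fun _ hx => ⟨hsub ⟨(hMs hx).1, (hMs hx).2.2⟩, (hMs hx).2.1⟩, hyM, hf⟩

theorem dominatedNear_entireHull [FiniteDimensional ℂ E] (hL : IsCompact L)
    (hy : y ∈ entireHull L) (hyL : y ∉ L) : DominatedNear (entireHull L) y := by
  have := FiniteDimensional.proper_rclike ℂ E
  intro O hO
  obtain ⟨r, hr, hrOL⟩ := nhds_basis_closedBall.mem_iff.1
    (inter_mem hO (hL.isClosed.isOpen_compl.mem_nhds hyL))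
  refine ⟨entireHull L ∩ sphere y r, (isCompact_entireHull hL).inter (isCompact_sphere y r),
    fun x hx => ⟨hx.1, (hrOL (sphere_subset_closedBall hx.2)).1⟩,
    fun h => hr.ne (by simpa using h.2), fun f hf => ?_⟩
  obtain ⟨x, hx, hx' | hx', hle⟩ := exists_mem_frontier_union_norm_le hL (isCompact_closedBall y r)
    isOpen_univ (subset_univ _) hf.differentiableOn hy (mem_closedBall_self hr.le)
  · exact ⟨x, ⟨hx.1, frontier_closedBall_subset_sphere hx'⟩, hle⟩
  · exact absurd hx' (hrOL hx.2).2

theorem dominatedNear_of_disc {g : ℂ → E} {z₀ : ℂ} {ρ : ℝ} (hρ : 0 < ρ)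
    (hg : DifferentiableOn ℂ g (ball z₀ ρ)) (hinj : InjOn g (ball z₀ ρ))
    (hY : MapsTo g (ball z₀ ρ) Y) : DominatedNear Y (g z₀) := by
  intro O hO
  have hc : ContinuousAt g z₀ := hg.continuousOn.continuousAt (ball_mem_nhds _ hρ)
  obtain ⟨r, hr, h⟩ := nhds_basis_closedBall.mem_iff.1
    (inter_mem (hc.preimage_mem_nhds hO) (ball_mem_nhds z₀ hρ))
  have hb : closedBall z₀ r ⊆ ball z₀ ρ := fun z hz => (h hz).2
  have hs : sphere z₀ r ⊆ closedBall z₀ r := sphere_subset_closedBall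
  refine ⟨g '' sphere z₀ r, (isCompact_sphere z₀ r).image_of_continuousOn
    (hg.continuousOn.mono (hs.trans hb)), ?_, ?_, fun f hf => ?_⟩
  · exact image_subset_iff.2 fun z hz => ⟨hY (hb (hs hz)), (h (hs hz)).1⟩
  · rintro ⟨z, hz, he⟩
    exact hr.ne (by simpa [hinj (hb (hs hz)) (mem_ball_self hρ) he] using hz)
  · have hd : DiffContOnCl ℂ (f ∘ g) (ball z₀ r) :=
      (hf.comp_differentiableOn (hg.mono hb)).diffContOnCl_ball subset_rfl
    obtain ⟨w, hw, hmax⟩ := exists_mem_frontier_isMaxOn_norm isBounded_ball (nonempty_ball.2 hr) hd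
    exact ⟨g w, mem_image_of_mem g (frontier_ball_subset_sphere hw),
      hmax (subset_closure (mem_ball_self hr))⟩

theorem exists_eq_zero_of_forall_le_mul_add {T : Type*} [TopologicalSpace T] [T2Space T]
    {M : Set T} (hM : IsCompact M) {u v : T → ℝ} (hu : Continuous u) (hv : Continuous v)
    (hv₀ : ∀ x ∈ M, v x ≤ 0) {a : ℝ} (h : ∀ k : ℕ, ∃ x ∈ M, a ≤ k * v x + u x) :
    ∃ x ∈ M, v x = 0 ∧ a ≤ u x := by
  have hcpt (k : ℕ) : IsCompact (M ∩ {x | a ≤ k * v x + u x}) :=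
    hM.inter_right (isClosed_le continuous_const (by fun_prop))
  obtain ⟨x, hx⟩ := IsCompact.nonempty_iInter_of_sequence_nonempty_isCompact_isClosed
    (fun k : ℕ => M ∩ {x | a ≤ k * v x + u x})
    (fun k x ⟨hx, hle⟩ => ⟨hx, by
      rw [mem_ofPred_eq, Nat.cast_succ] at hle
      exact hle.trans (by linarith [hv₀ x hx])⟩) h (hcpt 0) fun k => (hcpt k).isClosed
  rw [mem_iInter] at hx
  refine ⟨x, (hx 0).1, (hv₀ x (hx 0).1).eq_of_not_lt fun hlt => ?_, by simpa using (hx 0).2⟩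
  obtain ⟨k, hk⟩ := exists_nat_gt ((u x - a) / -v x)
  have hle : a ≤ k * v x + u x := (hx k).2
  rw [div_lt_iff₀ (neg_pos.2 hlt)] at hk
  linarith

theorem re_inner_lt_of_norm_le_of_ne {H : Type*} [NormedAddCommGroup H] [InnerProductSpace ℂ H]
    {x y : H} (hle : ‖x‖ ≤ ‖y‖) (hne : x ≠ y) : (inner ℂ y x).re < (inner ℂ y y).re := by
  have hpos : 0 < ‖y - x‖ ^ 2 := by
    have := norm_pos_iff.2 (sub_ne_zero.2 hne.symm)
    positivity
  have hsq : ‖x‖ ^ 2 ≤ ‖y‖ ^ 2 := by gcongr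
  rw [norm_sub_sq (𝕜 := ℂ)] at hpos
  have hyy : (inner ℂ y y).re = ‖y‖ ^ 2 := by
    simpa only [RCLike.re_eq_complex_re] using inner_self_eq_norm_sq (𝕜 := ℂ) y
  simp only [RCLike.re_eq_complex_re] at hpos
  linarith

/- At a point `y` where `Re (conj (h y₁) * h)` is maximal on `Y` and, among such points, a Hilbert
norm is maximal, the functions `exp (k * conj (h y₁) * h + ⟪y, ·⟫)` violate domination near `y`
for large `k`, so `y ∈ F`. -/
theorem subset_entireHull_of_dominatedNear [FiniteDimensional ℂ E] (hY : IsCompact Y)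
    (hdom : ∀ y ∈ Y, y ∉ F → DominatedNear Y y) : Y ⊆ entireHull (Y ∩ F) := by
  intro y₀ hy₀ h hh
  by_contra! hlt
  obtain ⟨y₁, hy₁, hmax⟩ := hY.exists_isMaxOn ⟨y₀, hy₀⟩ hh.continuous.norm.continuousOn
  obtain ⟨κ, hκ⟩ : ∃ κ : E → ℂ, ∀ x, κ x = conj (h y₁) * (h x - h y₁) := ⟨_, fun _ => rfl⟩
  have hκd : Differentiable ℂ κ := by
    rw [funext hκ]
    exact (hh.sub_const _).const_mul _
  have hκc : Continuous fun x => (κ x).re := continuous_re.comp hκd.continuous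
  have hκre : ∀ x ∈ Y, (κ x).re ≤ 0 := fun x hx => hκ x ▸ re_conj_mul_sub_nonpos (hmax hx)
  obtain ⟨e⟩ : Nonempty (E ≃L[ℂ] EuclideanSpace ℂ (Fin (Module.finrank ℂ E))) :=
    ⟨.ofFinrankEq (by simp)⟩
  obtain ⟨y, ⟨hyY, hyκ⟩, hymax⟩ :=
    (hY.inter_right (isClosed_eq hκc continuous_const)).exists_isMaxOn
      ⟨y₁, hy₁, (by simp [hκ] : (κ y₁).re = 0)⟩ e.continuous.norm.continuousOn
  have hyF : y ∉ F := fun hyF =>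
    (re_conj_mul_sub_neg ((hlt y ⟨hyY, hyF⟩).trans_le (hmax hy₀))).ne (hκ y ▸ hyκ)
  obtain ⟨M, hM, hMY, hyM, hMdom⟩ := hdom y hyY hyF univ univ_mem
  have hℓ : Differentiable ℂ fun x => inner ℂ (e y) (e x) :=
    (innerSL ℂ (e y)).differentiable.comp e.differentiable
  obtain ⟨x, hxM, hxκ, hyx⟩ := exists_eq_zero_of_forall_le_mul_add hM
    (continuous_re.comp hℓ.continuous) hκc (fun x hx => hκre x (hMY hx).1)
    (a := (inner ℂ (e y) (e y)).re) fun k => by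
      obtain ⟨x, hx, hle⟩ := hMdom _ ((hκd.const_mul (k : ℂ)).add hℓ).cexp
      refine ⟨x, hx, ?_⟩
      have hyκ : (κ y).re = 0 := hyκ
      simpa [norm_exp, hyκ] using hle
  exact hyx.not_gt (re_inner_lt_of_norm_le_of_ne (hymax ⟨(hMY hxM).1, hxκ⟩)
    (e.injective.ne fun h => hyM (h ▸ hxM)))

end DominatedNear

section Weights

open scoped ComplexConjugate

theorem convexHull_range_eq_linearCombination_image {E ι : Type*} [AddCommGroup E] [Module ℝ E]
    [Fintype ι] (z : ι → E) :
    convexHull ℝ (range z) = Fintype.linearCombination ℝ z '' stdSimplex ℝ ι := by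
  classical
  rw [← convexHull_rangle_single_eq_stdSimplex, LinearMap.image_convexHull, ← range_comp]
  congr 2
  ext i
  simp [Fintype.linearCombination_apply_single]

theorem convexHull_eq_image_stdSimplex_prod_pi {E : Type*} [AddCommGroup E] [Module ℝ E]
    [FiniteDimensional ℝ E] (s : Set E) :
    convexHull ℝ s =
      (fun q : (Fin (Module.finrank ℝ E + 1) → ℝ) × (Fin (Module.finrank ℝ E + 1) → E) =>
        ∑ i, q.1 i • q.2 i) '' (stdSimplex ℝ _ ×ˢ univ.pi fun _ => s) := by
  apply Subset.antisymm
  · rw [convexHull_eq_union]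
    simp only [iUnion_subset_iff]
    intro t hts ht x hx
    have : Nonempty t := (convexHull_nonempty_iff.1 ⟨x, hx⟩).to_subtype
    obtain ⟨e⟩ : Nonempty (t ↪ Fin (Module.finrank ℝ E + 1)) :=
      Function.Embedding.nonempty_of_card_le <| by
        rw [Fintype.card_fin]
        exact ht.card_le_finrank_succ.trans (Nat.succ_le_succ (Submodule.finrank_le _))
    have hz : range ((↑) ∘ Function.invFun e : _ → E) = t := by
      rw [(Function.invFun_surjective e.injective).range_comp, Subtype.range_coe]
    rw [← hz, convexHull_range_eq_linearCombination_image] at hx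
    obtain ⟨w, hw, rfl⟩ := hx
    exact ⟨(w, _), ⟨hw, fun i _ => hts (Subtype.coe_prop _)⟩, rfl⟩
  · rintro _ ⟨⟨w, z⟩, ⟨hw, hz⟩, rfl⟩
    exact mem_convexHull_of_exists_fintype w z hw.1 hw.2 (fun i => hz i (mem_univ i)) rfl

theorem isCompact_convexHull_of_isCompact {E : Type*} [NormedAddCommGroup E] [NormedSpace ℝ E]
    [FiniteDimensional ℝ E] {s : Set E} (hs : IsCompact s) : IsCompact (convexHull ℝ s) := by
  rw [convexHull_eq_image_stdSimplex_prod_pi]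
  exact ((isCompact_stdSimplex ℝ _).prod (isCompact_univ_pi fun _ => hs)).image (by fun_prop)

theorem exists_weights_of_mem_entireHull {E κ : Type*} [NormedAddCommGroup E] [NormedSpace ℂ E]
    [Finite κ] {S : Set E} (hS : IsCompact S) {x : E} (hx : x ∈ entireHull S)
    {h : κ → E → ℂ} (hh : ∀ j, Differentiable ℂ (h j)) :
    ∃ (ι : Type) (_ : Fintype ι) (w : ι → ℝ) (s : ι → E), (∀ i, 0 ≤ w i) ∧ ∑ i, w i = 1 ∧
      (∀ i, s i ∈ S) ∧ ∀ j, ∑ i, w i * h j (s i) = h j x := by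
  have := Fintype.ofFinite κ
  obtain ⟨Φ, hΦ⟩ : ∃ Φ : E → κ → ℂ, ∀ y j, Φ y j = h j y := ⟨fun y j => h j y, fun _ _ => rfl⟩
  have hΦd : Differentiable ℂ Φ := differentiable_pi.2 fun j => by simpa only [hΦ] using hh j
  have hmem : Φ x ∈ convexHull ℝ (Φ '' S) := by
    by_contra hnot
    obtain ⟨ℓ, u, hlt, hu⟩ := RCLike.geometric_hahn_banach_closed_point (𝕜 := ℂ)
      (convex_convexHull ℝ (Φ '' S))
      (isCompact_convexHull_of_isCompact (hS.image hΦd.continuous)).isClosed hnot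
    obtain ⟨y, hy, hle⟩ := hx _ (ℓ.differentiable.comp hΦd).cexp
    rw [norm_exp, norm_exp, Real.exp_le_exp] at hle
    exact (hle.trans_lt (hlt (Φ y) (subset_convexHull ℝ _ (mem_image_of_mem Φ hy)))).not_gt hu
  obtain ⟨ι, hι, w, z, hw, hw1, hz, hsum⟩ := mem_convexHull_iff_exists_fintype.1 hmem
  choose s hs hsz using hz
  refine ⟨ι, hι, w, s, hw, hw1, hs, fun j => ?_⟩
  simpa [← hsz, hΦ] using congrFun hsum j

theorem sum_mul_pow_mul_conj_pow {ι : Type*} [Fintype ι] {v u : ι → ℂ} (hu : ∀ a, ‖u a‖ = 1)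
    {c : ℂ} {p q : ℕ} (hqp : q ≤ p) (h : ∑ a, v a * u a ^ (p - q) = c * 0 ^ (p - q)) :
    ∑ a, v a * (u a ^ p * conj (u a) ^ q) = if p = q then c else 0 := by
  have hpow (a : ι) : u a ^ p * conj (u a) ^ q = u a ^ (p - q) := by
    rw [← Nat.sub_add_cancel hqp, pow_add, mul_assoc, ← mul_pow, mul_conj, normSq_eq_norm_sq, hu]
    simp
  simp only [hpow, h]
  split_ifs with hpq
  · simp [hpq]
  · rw [zero_pow (by lia), mul_zero]

variable {I : Type*} [Fintype I] [DecidableEq I] {N : ℕ}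

theorem sum_prod_mul_pow_mul_conj_pow {ι : I → Type*} [∀ i, Fintype (ι i)] {v u : ∀ i, ι i → ℂ}
    (hu : ∀ i a, ‖u i a‖ = 1) {c : I → ℂ}
    (h : ∀ i, ∀ l ≤ N, ∑ a, v i a * u i a ^ l = c i * 0 ^ l) {a b : I → ℕ}
    (ha : ∑ i, a i = N) (hb : ∑ i, b i = N) :
    ∑ p : ∀ i, ι i, ∏ i, v i (p i) * (u i (p i) ^ a i * conj (u i (p i)) ^ b i) =
      if a = b then ∏ i, c i else 0 := by
  have hle (i : I) : a i - b i ≤ N :=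
    (Nat.sub_le _ _).trans (ha ▸ Finset.single_le_sum (by simp) (Finset.mem_univ i))
  rw [← Fintype.prod_sum fun i x => v i x * (u i x ^ a i * conj (u i x) ^ b i)]
  split_ifs with hab
  · subst hab
    refine Finset.prod_congr rfl fun i _ => ?_
    rw [sum_mul_pow_mul_conj_pow (hu i) le_rfl (h i _ (hle i)), if_pos rfl]
  · obtain ⟨i, hi⟩ : ∃ i, b i < a i := by
      by_contra! hab'
      have heq := (Finset.sum_eq_sum_iff_of_le fun i _ => hab' i).1 (ha.trans hb.symm)
      exact hab (funext fun i => heq i (Finset.mem_univ i))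
    refine Finset.prod_eq_zero (Finset.mem_univ i) ?_
    rw [sum_mul_pow_mul_conj_pow (hu i) hi.le (h i _ (hle i)), if_neg hi.ne']

/-- The sum of the squares of the multinomial coefficients of degree `N` in variables indexed by
`I`, i.e. the mean of `‖∑ i, u i‖ ^ (2 * N)` over the torus `‖u i‖ = 1`. -/
def sqMultinomialSum (I : Type*) [Fintype I] [DecidableEq I] (N : ℕ) : ℕ :=
  ∑ a ∈ Finset.piAntidiag (Finset.univ : Finset I) N, Nat.multinomial Finset.univ a ^ 2

theorem norm_sum_pow_eq_sum_multinomial (u : I → ℂ) (N : ℕ) :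
    ((‖∑ i, u i‖ ^ (2 * N) : ℝ) : ℂ) =
      ∑ a ∈ Finset.piAntidiag Finset.univ N, ∑ b ∈ Finset.piAntidiag Finset.univ N,
        Nat.multinomial Finset.univ a * Nat.multinomial Finset.univ b *
          ∏ i, u i ^ a i * conj (u i) ^ b i := by
  rw [pow_mul, ofReal_pow, ← normSq_eq_norm_sq, ← mul_conj, mul_pow, map_sum,
    Finset.sum_pow_eq_sum_piAntidiag, Finset.sum_pow_eq_sum_piAntidiag, Finset.sum_mul_sum]
  refine Finset.sum_congr rfl fun a _ => Finset.sum_congr rfl fun b _ => ?_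
  rw [Finset.prod_mul_distrib]
  ring

theorem sum_prod_mul_norm_sum_pow {ι : I → Type*} [∀ i, Fintype (ι i)] {v u : ∀ i, ι i → ℂ}
    (hu : ∀ i a, ‖u i a‖ = 1) {c : I → ℂ}
    (h : ∀ i, ∀ l ≤ N, ∑ a, v i a * u i a ^ l = c i * 0 ^ l) :
    ∑ p : ∀ i, ι i, (∏ i, v i (p i)) * (‖∑ i, u i (p i)‖ ^ (2 * N) : ℝ) =
      sqMultinomialSum I N * ∏ i, c i := by
  calc
    _ = ∑ a ∈ Finset.piAntidiag Finset.univ N, ∑ b ∈ Finset.piAntidiag Finset.univ N,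
        (Nat.multinomial Finset.univ a * Nat.multinomial Finset.univ b : ℂ) *
          ∑ p : ∀ i, ι i, ∏ i, v i (p i) * (u i (p i) ^ a i * conj (u i (p i)) ^ b i) := by
      simp only [norm_sum_pow_eq_sum_multinomial, Finset.mul_sum]
      rw [Finset.sum_comm]
      refine Finset.sum_congr rfl fun a _ => ?_
      rw [Finset.sum_comm]
      refine Finset.sum_congr rfl fun b _ => Finset.sum_congr rfl fun p _ => ?_
      simp only [Finset.prod_mul_distrib]
      ring
    _ = ∑ a ∈ Finset.piAntidiag Finset.univ N, ∑ b ∈ Finset.piAntidiag Finset.univ N,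
        (Nat.multinomial Finset.univ a * Nat.multinomial Finset.univ b : ℂ) *
          if a = b then ∏ i, c i else 0 := by
      refine Finset.sum_congr rfl fun a ha => Finset.sum_congr rfl fun b hb => ?_
      rw [sum_prod_mul_pow_mul_conj_pow hu h (Finset.mem_piAntidiag.1 ha).1
        (Finset.mem_piAntidiag.1 hb).1]
    _ = _ := by
      rw [sqMultinomialSum, Nat.cast_sum, Finset.sum_mul]
      refine Finset.sum_congr rfl fun a ha => ?_
      simp [ha, sq]

theorem card_pow_le_mul_sqMultinomialSum (I : Type*) [Fintype I] [DecidableEq I] (N : ℕ) :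
    Fintype.card I ^ (2 * N) ≤ (N + 1) ^ Fintype.card I * sqMultinomialSum I N := by
  have hpow : Fintype.card I ^ N =
      ∑ a ∈ Finset.piAntidiag (Finset.univ : Finset I) N, Nat.multinomial Finset.univ a := by
    simpa using Finset.sum_pow_eq_sum_piAntidiag (Finset.univ : Finset I) (fun _ => (1 : ℕ)) N
  have hcard : (Finset.piAntidiag (Finset.univ : Finset I) N).card ≤ (N + 1) ^ Fintype.card I := by
    have hsub : Finset.piAntidiag (Finset.univ : Finset I) N ⊆
        Fintype.piFinset fun _ => Finset.range (N + 1) := fun a ha =>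
      Fintype.mem_piFinset.2 fun i => Finset.mem_range_succ_iff.2 <|
        (Finset.mem_piAntidiag.1 ha).1 ▸ Finset.single_le_sum (by simp) (Finset.mem_univ i)
    simpa using Finset.card_le_card hsub
  rw [pow_mul', hpow]
  exact sq_sum_le_card_mul_sum_sq.trans (Nat.mul_le_mul_right _ hcard)

theorem sum_prod_mul_norm_sum_pow_le {ι : I → Type*} [∀ i, Fintype (ι i)] {w : ∀ i, ι i → ℝ}
    (hw : ∀ i a, 0 ≤ w i a) (hw₁ : ∀ i, ∑ a, w i a = 1) (u : ∀ i, ι i → ℂ) {t : ℝ} (ht : 0 ≤ t) :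
    ∑ p : ∀ i, ι i with ‖∑ i, u i (p i)‖ ≤ t, (∏ i, w i (p i)) * ‖∑ i, u i (p i)‖ ^ N ≤
      t ^ N := by
  calc
    _ ≤ ∑ p : ∀ i, ι i with ‖∑ i, u i (p i)‖ ≤ t, (∏ i, w i (p i)) * t ^ N := by
      refine Finset.sum_le_sum fun p hp => mul_le_mul_of_nonneg_left ?_
        (Finset.prod_nonneg fun i _ => hw i _)
      exact pow_le_pow_left₀ (norm_nonneg _) (Finset.mem_filter.1 hp).2 N
    _ ≤ ∑ p : ∀ i, ι i, (∏ i, w i (p i)) * t ^ N :=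
      Finset.sum_le_univ_sum_of_nonneg fun p =>
        mul_nonneg (Finset.prod_nonneg fun i _ => hw i _) (pow_nonneg ht N)
    _ = t ^ N := by
      rw [← Finset.sum_mul, ← Fintype.prod_sum fun i a => w i a]
      simp [hw₁]

theorem sqMultinomialSum_pos (I : Type*) [Fintype I] [DecidableEq I] [Nonempty I] (N : ℕ) :
    0 < sqMultinomialSum I N :=
  pos_of_mul_pos_right ((pow_pos Fintype.card_pos (2 * N)).trans_le
    (card_pow_le_mul_sqMultinomialSum I N)) zero_le

end Weights

theorem norm_sum_lt_card_of_ne {I V : Type*} [Fintype I] [NormedAddCommGroup V] [NormedSpace ℝ V]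
    [StrictConvexSpace ℝ V] {u : I → V} (hu : ∀ i, ‖u i‖ = 1) {i j : I} (hij : u i ≠ u j) :
    ‖∑ i, u i‖ < Fintype.card I := by
  classical
  have hj : j ∈ Finset.univ.erase i :=
    Finset.mem_erase.2 ⟨fun h => hij (h ▸ rfl), Finset.mem_univ j⟩
  have hlt : ‖u i + u j‖ < 1 + 1 := by
    refine ((norm_add_le _ _).lt_of_ne fun h => hij ?_).trans_eq (by rw [hu, hu])
    exact eq_of_norm_eq_of_norm_add_eq ((hu i).trans (hu j).symm) h
  have hrest : ‖∑ l ∈ (Finset.univ.erase i).erase j, u l‖ ≤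
      ∑ _l ∈ (Finset.univ.erase i).erase j, (1 : ℝ) :=
    norm_sum_le_of_le _ fun l _ => (hu l).le
  calc
    ‖∑ i, u i‖ = ‖u i + u j + ∑ l ∈ (Finset.univ.erase i).erase j, u l‖ := by
      rw [add_assoc, Finset.add_sum_erase _ _ hj, Finset.add_sum_erase _ _ (Finset.mem_univ i)]
    _ < 1 + 1 + ∑ _l ∈ (Finset.univ.erase i).erase j, (1 : ℝ) :=
      (norm_add_le _ _).trans_lt (add_lt_add_of_lt_of_le hlt hrest)
    _ = Fintype.card I := by
      rw [add_assoc, Finset.add_sum_erase _ (fun _ => 1) hj,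
        Finset.add_sum_erase _ (fun _ => 1) (Finset.mem_univ i)]
      simp

theorem tendsto_succ_pow_mul_pow_zero (k : ℕ) {r : ℝ} (hr : 0 < r) (hr₁ : r < 1) :
    Tendsto (fun N : ℕ => ((N : ℝ) + 1) ^ k * r ^ N) atTop (𝓝 0) := by
  have h := ((tendsto_pow_const_mul_const_pow_of_lt_one k hr.le hr₁).comp
    (tendsto_add_atTop_nat 1)).const_mul r⁻¹
  rw [mul_zero] at h
  refine h.congr fun N => ?_
  simp only [Function.comp_apply, Nat.cast_add, Nat.cast_one, pow_succ r]
  field_simp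

theorem exists_lt_one_norm_sum_le {I E : Type*} [Fintype I] [Nonempty I]
    [TopologicalSpace E] {T : Set (I → E)} (hT : IsCompact T) {u : E → ℂ}
    (hu : Continuous u) (huT : ∀ y ∈ T, ∀ i, ‖u (y i)‖ = 1)
    (hne : ∀ y ∈ T, ∃ i j, u (y i) ≠ u (y j)) :
    ∃ r : ℝ, 0 < r ∧ r < 1 ∧ ∀ y ∈ T, ‖∑ i, u (y i)‖ ≤ r * Fintype.card I := by
  have hI : (0 : ℝ) < Fintype.card I := by exact_mod_cast Fintype.card_pos
  obtain rfl | hTne := T.eq_empty_or_nonempty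
  · exact ⟨1 / 2, by norm_num, by norm_num, by simp⟩
  obtain ⟨y₁, hy₁, hmax⟩ := hT.exists_isMaxOn hTne
    (f := fun y => ‖∑ i, u (y i)‖) (by fun_prop)
  obtain ⟨i, j, hij⟩ := hne y₁ hy₁
  obtain ⟨r, hr, hr₁⟩ := exists_between
    ((div_lt_one hI).2 (norm_sum_lt_card_of_ne (huT y₁ hy₁) hij))
  exact ⟨r, (div_nonneg (norm_nonneg _) hI.le).trans_lt hr, hr₁,
    fun y hy => (hmax hy).trans ((div_lt_iff₀ hI).1 hr).le⟩

section Concentration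

universe u

variable {I : Type u} [Fintype I] [Nonempty I]
  {E : Type*} [NormedAddCommGroup E] [NormedSpace ℂ E] {S : Set E} {x : I → E}

/- The product of measures representing the `x i` is reweighted by the density `‖∑ i, u‖ ^ (2 * N)`,
which concentrates where the `u (y i)` agree. Since `u (x i) = 0`, every nontrivial monomial of this
density integrates to `0`, so the new measure still represents `x`. -/
theorem exists_weights_norm_sum_le {κ : Type*} [Finite κ] (hS : IsCompact S)
    {u : E → ℂ} (hu : Differentiable ℂ u) (huS : ∀ y ∈ S, ‖u y‖ = 1)
    (hx : ∀ i, x i ∈ entireHull S) (hx₀ : ∀ i, u (x i) = 0) {h : κ → E → ℂ}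
    (hh : ∀ j, Differentiable ℂ (h j)) (N : ℕ) :
    ∃ (ι : Type u) (_ : Fintype ι) (W : ι → ℝ) (s : ι → I → E), (∀ p, 0 ≤ W p) ∧ ∑ p, W p = 1 ∧
      (∀ p i, s p i ∈ S) ∧
      (∀ o : I → κ, ∑ p, W p * ∏ i, h (o i) (s p i) = ∏ i, h (o i) (x i)) ∧
      ∀ r ≥ 0, ∑ p with ‖∑ i, u (s p i)‖ ≤ r * Fintype.card I, W p ≤
        (N + 1) ^ Fintype.card I * (r ^ 2) ^ N := by
  classical
  have hA : (0 : ℝ) < sqMultinomialSum I N := by exact_mod_cast sqMultinomialSum_pos I N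
  let h' : Option κ → E → ℂ := fun o => o.elim (fun _ => 1) h
  have hh' : ∀ o, Differentiable ℂ (h' o) := by
    rintro (_ | j)
    exacts [differentiable_const 1, hh j]
  choose ι _ w s hw hw₁ hsS hws using fun i => exists_weights_of_mem_entireHull hS (hx i)
    (h := fun (j : Option κ × Fin (N + 1)) y => h' j.1 y * u y ^ (j.2 : ℕ))
    fun j => (hh' j.1).mul (hu.pow _)
  let W (p : ∀ i, ι i) : ℝ :=
    (sqMultinomialSum I N : ℝ)⁻¹ * ((∏ i, w i (p i)) * ‖∑ i, u (s i (p i))‖ ^ (2 * N))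
  have hW (o : I → Option κ) : ∑ p, W p * ∏ i, h' (o i) (s i (p i)) = ∏ i, h' (o i) (x i) := by
    have hsum := sum_prod_mul_norm_sum_pow (N := N) (u := fun i a => u (s i a))
      (v := fun i a => w i a * h' (o i) (s i a)) (c := fun i => h' (o i) (x i))
      (fun i a => huS _ (hsS i a)) fun i l hl => by
        simpa [hx₀, mul_assoc] using hws i (o i, ⟨l, Nat.lt_succ_of_le hl⟩)
    have hAc : (sqMultinomialSum I N : ℂ) ≠ 0 := by exact_mod_cast hA.ne'
    rw [← inv_mul_cancel_left₀ hAc (∏ i, h' (o i) (x i)), ← hsum, Finset.mul_sum]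
    refine Finset.sum_congr rfl fun p _ => ?_
    simp only [W, Finset.prod_mul_distrib]
    push_cast
    ring
  refine ⟨∀ i, ι i, inferInstance, W, fun p i => s i (p i), fun p => ?_, ?_, fun p i => hsS i _,
    fun o => hW fun i => some (o i), fun r hr => ?_⟩
  · exact mul_nonneg (by positivity)
      (mul_nonneg (Finset.prod_nonneg fun i _ => hw i (p i)) (by positivity))
  · simpa [h', ← ofReal_sum] using hW fun _ => none
  · have hcard : (Fintype.card I : ℝ) ^ (2 * N) ≤ (N + 1) ^ Fintype.card I * sqMultinomialSum I N :=
      mod_cast card_pow_le_mul_sqMultinomialSum I N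
    rw [← Finset.mul_sum, inv_mul_le_iff₀ hA]
    calc
      _ ≤ (r * Fintype.card I) ^ (2 * N) :=
        sum_prod_mul_norm_sum_pow_le hw hw₁ (fun i a => u (s i a)) (by positivity)
      _ = (r ^ 2) ^ N * (Fintype.card I : ℝ) ^ (2 * N) := by rw [mul_pow, pow_mul]
      _ ≤ (r ^ 2) ^ N * ((N + 1) ^ Fintype.card I * sqMultinomialSum I N) := by gcongr
      _ = _ := by ring

variable {A : Type*} [Fintype A] {u : E → ℂ} {h : A → I → E → ℂ} {c : A → ℂ} {H : (I → E) → ℂ}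

theorem norm_le_of_norm_le_near_diagonal (hS : IsCompact S)
    (hu : Differentiable ℂ u) (huS : ∀ y ∈ S, ‖u y‖ = 1)
    (hx : ∀ i, x i ∈ entireHull S) (hx₀ : ∀ i, u (x i) = 0)
    (hh : ∀ a i, Differentiable ℂ (h a i)) (hH : ∀ y, H y = ∑ a, c a * ∏ i, h a i (y i))
    {q r : ℝ} (hq : 0 ≤ q) (hr : 0 < r) (hr₁ : r < 1)
    (hHq : ∀ y : I → E, (∀ i, y i ∈ S) → r * Fintype.card I < ‖∑ i, u (y i)‖ → ‖H y‖ ≤ q) :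
    ‖H x‖ ≤ q := by
  have hHc : Continuous H := by
    have (a : A) (i : I) : Continuous (h a i) := (hh a i).continuous
    rw [funext hH]
    fun_prop
  obtain ⟨C, hC⟩ := (isCompact_univ_pi fun _ : I => hS).exists_bound_of_continuousOn
    hHc.continuousOn
  have hlim := ((tendsto_succ_pow_mul_pow_zero (Fintype.card I) (pow_pos hr 2)
    (pow_lt_one₀ hr.le hr₁ two_ne_zero)).mul_const C).const_add q
  rw [zero_mul, add_zero] at hlim
  refine ge_of_tendsto' hlim fun N => ?_
  obtain ⟨ι, _, W, s, hW, hW₁, hsS, hWh, hWr⟩ := exists_weights_norm_sum_le hS hu huS hx hx₀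
    (h := fun j : A × I => h j.1 j.2) (fun j => hh j.1 j.2) N
  have hrep : H x = ∑ p, W p * H (s p) := by
    simp only [hH, Finset.mul_sum]
    rw [Finset.sum_comm]
    refine Finset.sum_congr rfl fun a _ => ?_
    rw [← hWh fun i => (a, i), Finset.mul_sum]
    exact Finset.sum_congr rfl fun p _ => mul_left_comm _ _ _
  have hterm (p : ι) : ‖W p * H (s p)‖ ≤
      W p * q + if ‖∑ i, u (s p i)‖ ≤ r * Fintype.card I then W p * C else 0 := by
    rw [norm_mul, norm_real, Real.norm_of_nonneg (hW p)]
    split_ifs with hp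
    · exact (mul_le_mul_of_nonneg_left (hC _ fun i _ => hsS p i) (hW p)).trans
        (le_add_of_nonneg_left (mul_nonneg (hW p) hq))
    · rw [add_zero]
      exact mul_le_mul_of_nonneg_left (hHq _ (hsS p) (not_le.1 hp)) (hW p)
  obtain ⟨s₀, hs₀, -⟩ := hx (Classical.arbitrary I) (fun _ => 0) (by fun_prop)
  have hC₀ : 0 ≤ C := (norm_nonneg _).trans (hC (fun _ => s₀) fun _ _ => hs₀)
  calc
    ‖H x‖ ≤ ∑ p, (W p * q + if ‖∑ i, u (s p i)‖ ≤ r * Fintype.card I then W p * C else 0) :=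
      hrep ▸ norm_sum_le_of_le _ fun p _ => hterm p
    _ = q + (∑ p with ‖∑ i, u (s p i)‖ ≤ r * Fintype.card I, W p) * C := by
      rw [Finset.sum_add_distrib, ← Finset.sum_mul, hW₁, one_mul, ← Finset.sum_filter,
        Finset.sum_mul]
    _ ≤ _ := by gcongr; exact hWr r hr.le

theorem exists_norm_le_of_eq_sum_prod (hS : IsCompact S)
    (hu : Differentiable ℂ u) (huS : ∀ y ∈ S, ‖u y‖ = 1)
    (hx : ∀ i, x i ∈ entireHull S) (hx₀ : ∀ i, u (x i) = 0)
    (hh : ∀ a i, Differentiable ℂ (h a i)) (hH : ∀ y, H y = ∑ a, c a * ∏ i, h a i (y i)) :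
    ∃ y : I → E, (∀ i, y i ∈ S) ∧ (∀ i j, u (y i) = u (y j)) ∧ ‖H x‖ ≤ ‖H y‖ := by
  by_contra! hcon
  have hHc : Continuous H := by
    have (a : A) (i : I) : Continuous (h a i) := (hh a i).continuous
    rw [funext hH]
    fun_prop
  have huc := hu.continuous
  have hT : IsCompact (univ.pi fun _ : I => S) := isCompact_univ_pi fun _ => hS
  have hD : IsCompact ((univ.pi fun _ : I => S) ∩ {y | ∀ i j, u (y i) = u (y j)}) := by
    refine hT.inter_right ?_
    simp only [ofPred_forall]
    exact isClosed_iInter fun i => isClosed_iInter fun j => isClosed_eq (by fun_prop) (by fun_prop)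
  obtain ⟨q, hqx, hq₀, hq⟩ : ∃ q < ‖H x‖, 0 ≤ q ∧ ∀ y ∈ univ.pi fun _ : I => S,
      (∀ i j, u (y i) = u (y j)) → ‖H y‖ < q := by
    obtain ⟨s, hs, -⟩ := hx (Classical.arbitrary I) (fun _ => 0) (by fun_prop)
    obtain ⟨y, hy, hmax⟩ := hD.exists_isMaxOn ⟨fun _ => s, fun _ _ => hs, fun _ _ => rfl⟩
      hHc.norm.continuousOn
    obtain ⟨q, hyq, hqx⟩ := exists_between (hcon y (fun i => hy.1 i (mem_univ i)) hy.2)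
    exact ⟨q, hqx, (norm_nonneg _).trans hyq.le, fun z hz hzu => (hmax ⟨hz, hzu⟩).trans_lt hyq⟩
  have hfar : IsCompact ((univ.pi fun _ : I => S) ∩ {y | q ≤ ‖H y‖}) :=
    hT.inter_right (isClosed_le continuous_const hHc.norm)
  obtain ⟨r, hr, hr₁, hrT⟩ := exists_lt_one_norm_sum_le hfar huc
    (fun y hy i => huS _ (hy.1 i (mem_univ i))) fun y hy => by
      by_contra! heq
      exact (hq y hy.1 heq).not_ge hy.2
  refine hqx.not_ge (norm_le_of_norm_le_near_diagonal hS hu huS hx hx₀ hh hH hq₀ hr hr₁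
    fun y hy hlt => le_of_not_ge fun hge => hlt.not_ge (hrT y ⟨fun i _ => hy i, hge⟩))

end Concentration

section UniqueContinuation

open scoped ComplexConjugate

theorem re_add_two_thirds_mul_sq_le {U : ℂ} (hU : ‖U‖ = 1) (hre : U.re ≤ 1 / 3) :
    (U + 2 / 3 * U ^ 2).re ≤ -(1 / 6) := by
  have hsq : U.re ^ 2 + U.im ^ 2 = 1 := by
    rw [← one_pow (M := ℝ) 2, ← hU, ← normSq_eq_norm_sq, normSq_apply]
    ring
  have hlow : -1 ≤ U.re := hU ▸ neg_le_of_abs_le (abs_re_le_norm U)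
  have hval : (U + 2 / 3 * U ^ 2).re = U.re + 2 / 3 * (U.re ^ 2 - U.im ^ 2) := by
    rw [show (2 / 3 : ℂ) = ((2 / 3 : ℝ) : ℂ) by push_cast; rfl, add_re, re_ofReal_mul, pow_two U,
      mul_re]
    ring
  rw [hval]
  nlinarith

theorem re_mul_conj_le_of_le_norm_sub {p q : ℂ} {d D : ℝ} (hd : 0 < d) (hp : ‖p‖ = D)
    (hq : ‖q‖ = d / 2) (hD : d ≤ D) (hD' : D < d * (1 + 1 / 50)) (hpq : d ≤ ‖q - p‖) :
    (q * conj p).re ≤ D * (d / 2) / 3 := by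
  have hsub : ‖q - p‖ ^ 2 = ‖q‖ ^ 2 + ‖p‖ ^ 2 - 2 * (q * conj p).re := by
    simp only [← normSq_eq_norm_sq, normSq_sub]
  rw [hp, hq] at hsub
  nlinarith

theorem re_quadratic_le_of_le_norm_sub {p q : ℂ} {d D : ℝ} (hd : 0 < d) (hp : ‖p‖ = D)
    (hq : ‖q‖ = d / 2) (hD : d ≤ D) (hD' : D < d * (1 + 1 / 50)) (hpq : d ≤ ‖q - p‖) :
    (q * (conj p / (D * (d / 2) : ℝ)) + 2 / 3 * (q * (conj p / (D * (d / 2) : ℝ))) ^ 2).re ≤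
      -(1 / 6) := by
  have hpos : 0 < D * (d / 2) := mul_pos (hd.trans_le hD) (half_pos hd)
  refine re_add_two_thirds_mul_sq_le ?_ ?_
  · rw [norm_mul, norm_div, norm_conj, norm_real, Real.norm_of_nonneg hpos.le, hp, hq,
      ← mul_div_assoc, mul_comm (d / 2), div_self hpos.ne']
  · rw [← mul_div_assoc, div_ofReal_re, div_le_iff₀ hpos]
    linarith [re_mul_conj_le_of_le_norm_sub hd hp hq hD hD' hpq]

theorem disjoint_of_forall_exists_lt_re {T B O : Set ℂ} (hBo : IsOpen B) (hBc : IsPreconnected B)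
    (hT : ∀ τ ∈ T, ∀ ρ > 0, closedBall τ ρ ⊆ B → ∀ α : ℂ → ℂ, Differentiable ℂ α →
      ∀ b < (α τ).re, ∃ c ∈ T ∩ sphere τ ρ, b < (α c).re)
    (hO : IsOpen O) (hOne : O.Nonempty) (hOB : O ⊆ B) (hOT : Disjoint O T) : Disjoint B T := by
  have hOW : O ⊆ interior Tᶜ := interior_maximal hOT.subset_compl_right hO
  suffices h : B ⊆ interior Tᶜ from
    (disjoint_compl_left (a := T)).mono_left (h.trans interior_subset)
  refine hBc.subset_of_closure_inter_subset isOpen_interior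
    (hOne.mono fun z hz => ⟨hOB hz, hOW hz⟩) ?_
  rintro c ⟨hc, hcB⟩
  by_contra hcW
  rw [interior_compl, notMem_compl_iff] at hcW
  obtain ⟨η, hη, hηB⟩ := Metric.isOpen_iff.1 hBo c hcB
  obtain ⟨c₂, hc₂, hcc⟩ := Metric.mem_closure_iff.1 hc (η / 4) (by linarith)
  have hTne : T.Nonempty := closure_nonempty_iff.1 ⟨c, hcW⟩
  rw [interior_compl, mem_compl_iff] at hc₂
  set d := infDist c₂ T with hd
  have hd₀ : 0 < d := (infDist_pos_iff_notMem_closure hTne).1 hc₂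
  have hdη : d < η / 4 := by
    have hle : infDist c₂ (closure T) ≤ dist c₂ c := infDist_le_dist_of_mem hcW
    rw [infDist_closure] at hle
    exact hle.trans_lt (dist_comm c c₂ ▸ hcc)
  obtain ⟨τ, hτ, hτd⟩ := (infDist_lt_iff (x := c₂) (r := d * (1 + 1 / 50)) hTne).1 (by
    rw [← hd]; linarith)
  have hdD : d ≤ dist c₂ τ := infDist_le_dist_of_mem hτ
  have hsub : closedBall τ (d / 2) ⊆ B := by
    refine (closedBall_subset_ball' ?_).trans hηB
    have := dist_triangle_left τ c c₂
    rw [dist_comm c₂ c] at this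
    linarith
  obtain ⟨z, ⟨hz, hzs⟩, hlt⟩ := hT τ hτ (d / 2) (half_pos hd₀) hsub
    (fun z => (z - τ) * (conj (c₂ - τ) / (dist c₂ τ * (d / 2) : ℝ)) +
      2 / 3 * ((z - τ) * (conj (c₂ - τ) / (dist c₂ τ * (d / 2) : ℝ))) ^ 2)
    (by fun_prop) (-(1 / 6)) (by simp)
  refine (re_quadratic_le_of_le_norm_sub hd₀ (dist_eq_norm _ _).symm ?_ hdD hτd ?_).not_gt hlt
  · rwa [← dist_eq_norm]
  · rw [sub_sub_sub_cancel_right, ← dist_eq_norm, dist_comm]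
    exact infDist_le_dist_of_mem hz

variable {E : Type*} [NormedAddCommGroup E] [NormedSpace ℂ E] {Z S : Set E} {f P : E → ℂ}
  {B : Set ℂ} {k : ℕ}

/-- The values over which `f` has `k` points of `Z` separated by `P`. -/
def separatedValues {X : Type*} (Z : Set X) (f P : X → ℂ) (k : ℕ) : Set ℂ :=
  {c | ∃ x : Fin k → X, (∀ i, x i ∈ Z ∧ f (x i) = c) ∧ Function.Injective fun i => P (x i)}

theorem inter_preimage_closedBall_subset_entireHull [FiniteDimensional ℂ E] (hZ : IsCompact Z)
    (hf : Continuous f) {τ : ℂ} {ρ : ℝ}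
    (hdom : ∀ x ∈ Z, f x ∈ ball τ ρ → DominatedNear Z x) :
    Z ∩ f ⁻¹' closedBall τ ρ ⊆ entireHull (Z ∩ f ⁻¹' sphere τ ρ) := by
  refine (subset_entireHull_of_dominatedNear (hZ.inter_right (isClosed_closedBall.preimage hf))
    (F := (f ⁻¹' ball τ ρ)ᶜ) fun y hy hyF => ?_).trans (entireHull_mono ?_)
  · rw [notMem_compl_iff] at hyF
    exact (hdom y hy.1 hyF).mono_nhds ((isOpen_ball.preimage hf).mem_nhds hyF)
      fun z ⟨hz, hzb⟩ => ⟨hz, ball_subset_closedBall hzb⟩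
  · rintro y ⟨⟨hyZ, hyc⟩, hyb⟩
    exact ⟨hyZ, le_antisymm hyc (not_lt.1 hyb)⟩

theorem exists_norm_prod_mul_vandermonde_le (hk : 0 < k) (hS : IsCompact S)
    (hf : Differentiable ℂ f) (hP : Differentiable ℂ P) {τ : ℂ} {ρ : ℝ} (hρ : 0 < ρ)
    (hfS : MapsTo f S (sphere τ ρ)) {x : Fin k → E} (hx : ∀ i, x i ∈ entireHull S)
    (hfx : ∀ i, f (x i) = τ) {β : E → ℂ} (hβ : Differentiable ℂ β) :
    ∃ y : Fin k → E, (∀ i, y i ∈ S) ∧ (∀ i j, f (y i) = f (y j)) ∧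
      ‖(∏ i, β (x i)) * (Matrix.vandermonde fun i => P (x i)).det‖ ≤
        ‖(∏ i, β (y i)) * (Matrix.vandermonde fun i => P (y i)).det‖ := by
  have : Nonempty (Fin k) := ⟨⟨0, hk⟩⟩
  have hρc : (ρ : ℂ) ≠ 0 := by exact_mod_cast hρ.ne'
  obtain ⟨y, hyS, hyu, hle⟩ := exists_norm_le_of_eq_sum_prod (u := fun y => (f y - τ) / ρ)
    (A := Equiv.Perm (Fin k)) (c := fun σ => ((Equiv.Perm.sign σ : ℤ) : ℂ))
    (h := fun σ i z => β z * P z ^ (σ i : ℕ))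
    (H := fun y => (∏ i, β (y i)) * (Matrix.vandermonde fun i => P (y i)).det) hS
    (by simpa only [div_eq_mul_inv] using (hf.sub_const τ).mul_const _) (fun y hy => by
      rw [norm_div, norm_real, Real.norm_of_nonneg hρ.le, ← dist_eq_norm, hfS hy, div_self hρ.ne'])
    hx (fun i => by simp [hfx i]) (fun σ i => hβ.mul (hP.pow _)) fun y => by
      rw [← Matrix.det_transpose, Matrix.det_apply', Finset.mul_sum]
      refine Finset.sum_congr rfl fun σ _ => ?_
      simp only [Matrix.transpose_apply, Matrix.vandermonde_apply, Finset.prod_mul_distrib]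
      ring
  exact ⟨y, hyS, fun i j => sub_left_injective ((div_left_inj' hρc).1 (hyu i j)), hle⟩

theorem continuous_det_vandermonde {X : Type*} [TopologicalSpace X] {P : X → ℂ}
    (hP : Continuous P) :
    Continuous fun y : Fin k → X => (Matrix.vandermonde fun i => P (y i)).det := by
  simp only [Matrix.det_vandermonde]
  fun_prop

theorem exists_lt_re_of_mem_separatedValues [FiniteDimensional ℂ E] (hk : 0 < k)
    (hZ : IsCompact Z) (hf : Differentiable ℂ f) (hP : Differentiable ℂ P) {τ : ℂ} {ρ : ℝ}
    (hρ : 0 < ρ) (hdom : ∀ x ∈ Z, f x ∈ ball τ ρ → DominatedNear Z x)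
    (hτ : τ ∈ separatedValues Z f P k) {α : ℂ → ℂ} (hα : Differentiable ℂ α) {b : ℝ}
    (hb : b < (α τ).re) : ∃ c ∈ separatedValues Z f P k ∩ sphere τ ρ, b < (α c).re := by
  by_contra! hle
  obtain ⟨x, hx, hxP⟩ := hτ
  set S := Z ∩ f ⁻¹' sphere τ ρ
  have hS : IsCompact S := hZ.inter_right (isClosed_sphere.preimage hf.continuous)
  have hxS : ∀ i, x i ∈ entireHull S := fun i =>
    inter_preimage_closedBall_subset_entireHull hZ hf.continuous hdom
      ⟨(hx i).1, by rw [mem_preimage, (hx i).2]; exact mem_closedBall_self hρ.le⟩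
  set V : (Fin k → E) → ℂ := fun y => (Matrix.vandermonde fun i => P (y i)).det
  have hVx : V x ≠ 0 := Matrix.det_vandermonde_ne_zero_iff.2 hxP
  obtain ⟨C, hC⟩ := (isCompact_univ_pi fun _ : Fin k => hS).exists_bound_of_continuousOn
    (continuous_det_vandermonde hP.continuous).continuousOn
  set r := Real.exp (b - (α τ).re)
  have hr : r < 1 := Real.exp_lt_one_iff.2 (sub_neg.2 hb)
  -- The weight `exp (M * (α ∘ f - α τ))` is `1` at `x` and at most `r ^ M` on the sphere.
  have hbound : ∀ M : ℕ, ‖V x‖ ≤ (r ^ k) ^ M * C := fun M => by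
    obtain ⟨y, hyS, hfy, hVy⟩ := exists_norm_prod_mul_vandermonde_le (x := x) hk hS hf hP hρ
      (fun y hy => hy.2) hxS (fun i => (hx i).2)
      (((hα.comp hf).sub_const (α τ)).const_mul (M : ℂ)).cexp
    simp only [Function.comp_apply, (hx _).2, sub_self, mul_zero, exp_zero, Finset.prod_const_one,
      one_mul, norm_mul, norm_prod] at hVy
    have hVy₀ : V y ≠ 0 := fun h0 => by
      rw [show (Matrix.vandermonde fun i => P (y i)).det = 0 from h0, norm_zero, mul_zero] at hVy
      exact hVx (norm_le_zero_iff.1 hVy)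
    have hexp : ∀ i, ‖cexp (M * (α (f (y i)) - α τ))‖ ≤ r ^ M := fun i => by
      have := hle (f (y i)) ⟨⟨y, fun j => ⟨(hyS j).1, hfy j i⟩,
        Matrix.det_vandermonde_ne_zero_iff.1 hVy₀⟩, (hyS i).2⟩
      rw [norm_exp, ← Real.exp_nat_mul, ← ofReal_natCast, re_ofReal_mul, sub_re]
      gcongr
    calc ‖V x‖ ≤ (∏ i, ‖cexp (M * (α (f (y i)) - α τ))‖) * ‖V y‖ := hVy
      _ ≤ (∏ _i : Fin k, r ^ M) * C := by
        gcongr with i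
        · exact hexp i
        · exact hC y fun i _ => hyS i
      _ = (r ^ k) ^ M * C := by simp [← pow_mul, mul_comm]
  have hlim := (tendsto_pow_atTop_nhds_zero_of_lt_one (by positivity)
    (pow_lt_one₀ (Real.exp_pos _).le hr hk.ne')).mul_const C
  rw [zero_mul] at hlim
  exact hVx (norm_le_zero_iff.1 (ge_of_tendsto' hlim hbound))

theorem disjoint_separatedValues [FiniteDimensional ℂ E] (hk : 0 < k) (hZ : IsCompact Z)
    (hf : Differentiable ℂ f) (hP : Differentiable ℂ P)
    (hdom : ∀ x ∈ Z, f x ∈ B → DominatedNear Z x) (hBo : IsOpen B) (hBc : IsPreconnected B)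
    {O : Set ℂ} (hO : IsOpen O) (hOne : O.Nonempty) (hOB : O ⊆ B)
    (hOT : Disjoint O (separatedValues Z f P k)) : Disjoint B (separatedValues Z f P k) :=
  disjoint_of_forall_exists_lt_re hBo hBc
    (fun _ hτ _ hρ hρB _ hα _ hb => exists_lt_re_of_mem_separatedValues hk hZ hf hP hρ
      (fun x hx hfx => hdom x hx (hρB (ball_subset_closedBall hfx))) hτ hα hb)
    hO hOne hOB hOT

theorem exists_differentiable_injective [FiniteDimensional ℂ E] {ι : Type*} [Finite ι] {x : ι → E}
    (hx : Function.Injective x) :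
    ∃ P : E → ℂ, Differentiable ℂ P ∧ Function.Injective fun i => P (x i) := by
  obtain ⟨P, hP⟩ := Module.exists_dual_forall_apply_ne_zero (K := ℂ)
    (fun p : {p : ι × ι // p.1 ≠ p.2} => x p.1.1 - x p.1.2) fun p => sub_ne_zero.2 (hx.ne p.2)
  refine ⟨P, (LinearMap.toContinuousLinearMap P).differentiable, fun i j hij => ?_⟩
  by_contra hne
  exact hP ⟨(i, j), hne⟩ (by simpa [sub_eq_zero] using hij)

theorem exists_embedding_fin_of_lt_encard {X : Type*} {s : Set X} (h : (k : ℕ∞) < s.encard) :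
    ∃ x : Fin (k + 1) → X, Function.Injective x ∧ ∀ i, x i ∈ s := by
  obtain ⟨t, hts, htk⟩ := exists_subset_encard_eq (k := ((k + 1 : ℕ) : ℕ∞))
    (by push_cast; exact Order.add_one_le_of_lt h)
  have := (finite_of_encard_eq_coe htk).to_subtype
  have hcard : Nat.card t = k + 1 := by
    rw [Nat.card_coe_set_eq, ncard, htk, ENat.toNat_natCast]
  let e : Fin (k + 1) ≃ t := (Finite.equivFinOfCardEq hcard).symm
  exact ⟨fun i => e i, Subtype.val_injective.comp e.injective, fun i => hts (e i).2⟩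

theorem disjoint_separatedValues_succ {X : Type*} {Z : Set X} {f P : X → ℂ} {O : Set ℂ}
    (hle : ∀ c ∈ O, (Z ∩ f ⁻¹' {c}).encard ≤ k) :
    Disjoint O (separatedValues Z f P (k + 1)) := by
  rw [disjoint_left]
  rintro c hc ⟨x, hx, hxP⟩
  have hxi : Function.Injective x := fun i j hij => hxP (congrArg P hij)
  have hcard := hxi.encard_range.trans
    ((encard_le_encard (range_subset_iff.2 fun i => hx i)).trans (hle c hc))
  simp only [ENat.card_eq_coe_fintype_card, Fintype.card_fin] at hcard
  exact absurd (ENat.natCast_le_natCast.1 hcard) (by omega)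

theorem encard_inter_preimage_le [FiniteDimensional ℂ E] (hZ : IsCompact Z)
    (hf : Differentiable ℂ f) (hdom : ∀ x ∈ Z, f x ∈ B → DominatedNear Z x) (hBo : IsOpen B)
    (hBc : IsPreconnected B) {O : Set ℂ} (hO : IsOpen O) (hOne : O.Nonempty) (hOB : O ⊆ B)
    (hle : ∀ c ∈ O, (Z ∩ f ⁻¹' {c}).encard ≤ k) {c : ℂ} (hc : c ∈ B) :
    (Z ∩ f ⁻¹' {c}).encard ≤ k := by
  by_contra! hlt
  obtain ⟨x, hx, hxZ⟩ := exists_embedding_fin_of_lt_encard hlt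
  obtain ⟨P, hP, hPi⟩ := exists_differentiable_injective hx
  exact disjoint_left.1 (disjoint_separatedValues k.succ_pos hZ hf hP hdom hBo hBc hO hOne hOB
    (disjoint_separatedValues_succ hle)) hc ⟨x, hxZ, hPi⟩

end UniqueContinuation

section EmbeddedDisc

theorem exists_local_inverse_of_deriv_ne_zero {φ : ℂ → ℂ} {a : ℂ} (hφ : AnalyticAt ℂ φ a)
    (h : deriv φ a ≠ 0) : ∃ ψ : ℂ → ℂ, ψ (φ a) = a ∧ AnalyticAt ℂ ψ (φ a) ∧
      (∀ᶠ c in 𝓝 (φ a), φ (ψ c) = c) ∧ ∀ᶠ z in 𝓝 a, ψ (φ z) = z :=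
  have hl := hφ.hasStrictDerivAt.eventually_left_inverse h
  ⟨_, hl.self_of_nhds, hφ.analyticAt_localInverse h,
    hφ.hasStrictDerivAt.eventually_right_inverse h, hl⟩

theorem finite_inter_preimage_zero {h : ℂ → ℂ} {S U : Set ℂ} (hS : IsCompact S) (hSU : S ⊆ U)
    (hh : AnalyticOnNhd ℂ h U) (hU : IsPreconnected U) {a : ℂ} (ha : a ∈ U) (hha : h a ≠ 0) :
    (S ∩ h ⁻¹' {0}).Finite := by
  by_contra hinf
  obtain ⟨z, hz, hacc⟩ := Set.Infinite.exists_accPt_of_subset_isCompact hinf hS inter_subset_left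
  rw [accPt_iff_frequently_nhdsNE] at hacc
  exact hha (hh.eqOn_zero_of_preconnected_of_frequently_eq_zero hU (hSU hz)
    (hacc.mono fun w hw => hw.2) ha)

variable {E : Type*} [NormedAddCommGroup E] [NormedSpace ℂ E] {g : ℂ → E} {r ρ : ℝ} {z₀ : ℂ}

theorem exists_dual_deriv_comp_ne_zero (hg : DifferentiableAt ℂ g z₀) (h : deriv g z₀ ≠ 0) :
    ∃ ℓ : E →L[ℂ] ℂ, deriv (fun z => ℓ (g z)) z₀ ≠ 0 := by
  obtain ⟨ℓ, hℓ⟩ := SeparatingDual.exists_ne_zero (R := ℂ) h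
  exact ⟨ℓ, (ℓ.hasFDerivAt.comp_hasDerivAt z₀ hg.hasDerivAt).deriv.trans_ne hℓ⟩

theorem exists_mem_nhds_injOn_of_deriv_ne_zero {D : Set ℂ} (hD : D ∈ 𝓝 z₀)
    (hg : DifferentiableOn ℂ g D) (h : deriv g z₀ ≠ 0) : ∃ u ∈ 𝓝 z₀, InjOn g u := by
  obtain ⟨ℓ, hℓ⟩ := exists_dual_deriv_comp_ne_zero (hg.differentiableAt hD) h
  obtain ⟨ψ, -, -, -, hψ⟩ := exists_local_inverse_of_deriv_ne_zero
    ((ℓ.differentiable.comp_differentiableOn hg).analyticAt hD) hℓ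
  exact ⟨_, hψ, fun z hz w hw hzw => by rw [← show ψ (ℓ (g z)) = z from hz, hzw]; exact hw⟩

/-- `g` restricts to an injective holomorphic immersion of the open disc of radius `ρ` about `0`
into `E`. -/
structure IsEmbeddedDisc (g : ℂ → E) (ρ : ℝ) : Prop where
  differentiableOn : DifferentiableOn ℂ g (ball 0 ρ)
  injOn : InjOn g (ball 0 ρ)
  deriv_ne_zero : ∀ z ∈ ball 0 ρ, deriv g z ≠ 0

namespace IsEmbeddedDisc

theorem differentiableAt (h : IsEmbeddedDisc g ρ) (hz : z₀ ∈ ball 0 ρ) :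
    DifferentiableAt ℂ g z₀ :=
  h.differentiableOn.differentiableAt (isOpen_ball.mem_nhds hz)

theorem continuousOn_closedBall (h : IsEmbeddedDisc g ρ) (hr : r < ρ) :
    ContinuousOn g (closedBall 0 r) :=
  h.differentiableOn.continuousOn.mono (closedBall_subset_ball hr)

theorem isCompact_image_closedBall (h : IsEmbeddedDisc g ρ) (hr : r < ρ) :
    IsCompact (g '' closedBall 0 r) :=
  (isCompact_closedBall _ _).image_of_continuousOn (h.continuousOn_closedBall hr)

theorem isCompact_image_sphere (h : IsEmbeddedDisc g ρ) (hr : r < ρ) :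
    IsCompact (g '' sphere 0 r) :=
  (isCompact_sphere _ _).image_of_continuousOn
    ((h.continuousOn_closedBall hr).mono sphere_subset_closedBall)

theorem notMem_image (h : IsEmbeddedDisc g ρ) {S : Set ℂ} (hS : S ⊆ ball 0 ρ)
    (hz : z₀ ∈ ball 0 ρ) (hzS : z₀ ∉ S) : g z₀ ∉ g '' S :=
  fun ⟨_, hw, hwz⟩ => hzS (h.injOn (hS hw) hz hwz ▸ hw)

theorem exists_isOpen_forall_mem (h : IsEmbeddedDisc g ρ) (hr : r < ρ) (hz₀ : z₀ ∈ ball 0 ρ)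
    {V : Set ℂ} (hV : V ∈ 𝓝 z₀) :
    ∃ O, IsOpen O ∧ g z₀ ∈ O ∧ ∀ z ∈ closedBall 0 r, g z ∈ O → z ∈ V := by
  have hc : IsCompact (g '' (closedBall 0 r \ interior V)) :=
    ((isCompact_closedBall _ _).diff isOpen_interior).image_of_continuousOn
      ((h.continuousOn_closedBall hr).mono sdiff_subset)
  refine ⟨_, hc.isClosed.isOpen_compl, h.notMem_image
    (sdiff_subset.trans (closedBall_subset_ball hr)) hz₀ fun hz =>
      hz.2 (mem_interior_iff_mem_nhds.2 hV), fun z hz hgz => ?_⟩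
  by_contra hzV
  exact hgz ⟨z, ⟨hz, fun hi => hzV (interior_subset hi)⟩, rfl⟩

theorem exists_chart (h : IsEmbeddedDisc g ρ) (hr : r < ρ) (hz₀ : z₀ ∈ ball 0 r) :
    ∃ (O : Set E) (π : E → ℂ), IsOpen O ∧ g z₀ ∈ O ∧ DifferentiableOn ℂ π O ∧
      MapsTo π O (ball 0 r) ∧ ∀ z ∈ closedBall 0 r, g z ∈ O → π (g z) = z := by
  have hz₀ρ : z₀ ∈ ball 0 ρ := ball_subset_ball hr.le hz₀
  obtain ⟨ℓ, hℓ⟩ :=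
    exists_dual_deriv_comp_ne_zero (h.differentiableAt hz₀ρ) (h.deriv_ne_zero z₀ hz₀ρ)
  obtain ⟨ψ, hψ₀, hψ, -, hψl⟩ := exists_local_inverse_of_deriv_ne_zero
    ((ℓ.differentiable.comp_differentiableOn h.differentiableOn).analyticAt
      (isOpen_ball.mem_nhds hz₀ρ)) hℓ
  obtain ⟨O, hO, hzO, hOl⟩ := h.exists_isOpen_forall_mem hr hz₀ρ hψl
  obtain ⟨W, hWψ, hW, hzW⟩ := _root_.eventually_nhds_iff.1 (hψ.eventually_analyticAt.and
    (hψ.continuousAt.eventually_mem (hψ₀.symm ▸ isOpen_ball.mem_nhds hz₀)))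
  refine ⟨O ∩ ℓ ⁻¹' W, fun x => ψ (ℓ x), hO.inter (hW.preimage ℓ.continuous), ⟨hzO, hzW⟩,
    fun x hx => ?_, fun x hx => (hWψ _ hx.2).2, fun z hz hgz => hOl z hz hgz.1⟩
  exact ((hWψ _ hx.2).1.differentiableAt.comp x ℓ.differentiableAt).differentiableWithinAt

theorem exists_differentiableOn_ne_zero (h : IsEmbeddedDisc g ρ) (hr : r < ρ) {O : Set E}
    {π : E → ℂ} (hπ : DifferentiableOn ℂ π O) (hπr : MapsTo π O (ball 0 r))
    (hπg : ∀ z ∈ closedBall 0 r, g z ∈ O → π (g z) = z) {x : E} (hx : x ∈ O)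
    (hxg : x ∉ g '' closedBall 0 r) :
    ∃ w : E → ℂ, DifferentiableOn ℂ w O ∧ w x ≠ 0 ∧ ∀ y ∈ g '' closedBall 0 r ∩ O, w y = 0 := by
  have hne : x - g (π x) ≠ 0 := sub_ne_zero.2 fun he =>
    hxg ⟨π x, ball_subset_closedBall (hπr hx), he.symm⟩
  obtain ⟨ℓ, hℓ⟩ := SeparatingDual.exists_ne_zero (R := ℂ) hne
  refine ⟨fun y => ℓ (y - g (π y)), ?_, hℓ, ?_⟩
  · exact ℓ.differentiable.comp_differentiableOn (differentiableOn_id.sub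
      (h.differentiableOn.comp hπ fun y hy => ball_subset_ball hr.le (hπr hy)))
  · rintro _ ⟨⟨z, hz, rfl⟩, hzO⟩
    simp only [hπg z hz hzO, sub_self, map_zero]

end IsEmbeddedDisc

end EmbeddedDisc

section ClosureDiff

theorem le_of_forall_pow_mul_le_mul {a b c C : ℝ} (hb : 0 ≤ b) (hc : 0 < c)
    (h : ∀ p : ℕ, a ^ p * c ≤ b ^ p * C) : a ≤ b := by
  by_contra! hlt
  have ha : 0 < a := hb.trans_lt hlt
  have hlim := (tendsto_pow_atTop_nhds_zero_of_lt_one (div_nonneg hb ha.le)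
    ((div_lt_one ha).2 hlt)).mul_const C
  rw [zero_mul] at hlim
  refine hc.not_ge (ge_of_tendsto' hlim fun p => ?_)
  rw [div_pow, div_mul_eq_mul_div, le_div_iff₀ (pow_pos ha p), mul_comm]
  exact h p

theorem exists_closedBall_subset_disjoint {X : Type*} [PseudoMetricSpace X] {K O : Set X} {y : X}
    (hK : IsClosed K) (hO : O ∈ 𝓝 y) (hy : y ∉ K) :
    ∃ s > 0, closedBall y s ⊆ O ∧ Disjoint K (closedBall y s) := by
  obtain ⟨s, hs, h⟩ := nhds_basis_closedBall.mem_iff.1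
    (inter_mem hO (hK.isOpen_compl.mem_nhds hy))
  exact ⟨s, hs, fun x hx => (h hx).1, disjoint_right.2 fun x hx => (h hx).2⟩

variable {E : Type*} [NormedAddCommGroup E] [NormedSpace ℂ E] [FiniteDimensional ℂ E]
  {A K L O : Set E} {y : E} {s : ℝ} {g : ℂ → E} {r ρ : ℝ} {z₀ : ℂ}

/- Rossi's principle is applied to `f ^ p * w`, where `w` vanishes on `A`: the maximum is attained
off `A`, and letting `p → ∞` removes the factor `w`. -/
theorem diff_inter_closedBall_subset_entireHull (hL : IsCompact L) (hO : IsOpen O)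
    (hsO : closedBall y s ⊆ O) (hLA : L ∩ closedBall y s ⊆ A)
    (hA : ∀ x ∈ O, x ∉ A →
      ∃ w : E → ℂ, DifferentiableOn ℂ w O ∧ w x ≠ 0 ∧ ∀ a ∈ A ∩ O, w a = 0) :
    (entireHull L \ A) ∩ closedBall y s ⊆
      entireHull (closure (entireHull L \ A) ∩ sphere y s) := by
  have := FiniteDimensional.proper_rclike ℂ E
  rintro x ⟨⟨hxL, hxA⟩, hxs⟩ f hf
  obtain ⟨w, hw, hwx, hwA⟩ := hA x (hsO hxs) hxA
  set M := closure (entireHull L \ A) ∩ sphere y s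
  have key : ∀ F : E → ℂ, Differentiable ℂ F → F x ≠ 0 → ∃ v ∈ M, ‖F x * w x‖ ≤ ‖F v * w v‖ := by
    intro F hF hFx
    obtain ⟨v, ⟨hvL, hvs⟩, hv, hle⟩ := exists_mem_frontier_union_norm_le hL
      (isCompact_closedBall y s) hO (fun v hv => hsO hv.2) (hF.differentiableOn.mul hw) hxL hxs
    have hvA : v ∉ A := fun hvA => mul_ne_zero hFx hwx <| norm_le_zero_iff.1 <| by
      simpa [hwA v ⟨hvA, hsO hvs⟩] using hle
    exact ⟨v, ⟨subset_closure ⟨hvL, hvA⟩, hv.elim (fun h => frontier_closedBall_subset_sphere h)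
      fun h => absurd (hLA ⟨h, hvs⟩) hvA⟩, hle⟩
  have hM : IsCompact M := (isCompact_sphere y s).inter_left isClosed_closure
  obtain ⟨v₁, hv₁, -⟩ := key 1 (differentiable_const 1) one_ne_zero
  obtain ⟨v, hv, hmax⟩ := hM.exists_isMaxOn ⟨v₁, hv₁⟩ hf.continuous.norm.continuousOn
  refine ⟨v, hv, ?_⟩
  rcases eq_or_ne (f x) 0 with h₀ | h₀
  · simp [h₀]
  obtain ⟨C, hC⟩ := hM.exists_bound_of_continuousOn
    (hw.continuousOn.mono fun u hu => hsO (sphere_subset_closedBall hu.2))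
  refine le_of_forall_pow_mul_le_mul (norm_nonneg _) (norm_pos_iff.2 hwx) (C := C) fun p => ?_
  obtain ⟨u, hu, hle⟩ := key (fun z => f z ^ p) (hf.pow p) (pow_ne_zero p h₀)
  have hfu : ‖f u‖ ≤ ‖f v‖ := hmax hu
  rw [norm_mul, norm_mul, norm_pow, norm_pow] at hle
  exact hle.trans (by gcongr; exact hC u hu)

theorem dominatedNear_closure_diff_apply (h : IsEmbeddedDisc g ρ) (hr : r < ρ) (hL : IsCompact L)
    (hK : IsClosed K) (hLK : L ⊆ K ∪ g '' closedBall 0 r) (hz₀ : z₀ ∈ ball 0 r)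
    (hzK : g z₀ ∉ K) (hcl : g z₀ ∈ closure (entireHull L \ g '' closedBall 0 r)) :
    DominatedNear (closure (entireHull L \ g '' closedBall 0 r)) (g z₀) := by
  have := FiniteDimensional.proper_rclike ℂ E
  obtain ⟨O, π, hO, hzO, hπ, hπr, hπg⟩ := h.exists_chart hr hz₀
  intro Q hQ
  obtain ⟨s, hs, hsO, hsK⟩ := exists_closedBall_subset_disjoint hK
    (inter_mem hQ (hO.mem_nhds hzO)) hzK
  have hM : IsCompact (closure (entireHull L \ g '' closedBall 0 r) ∩ sphere (g z₀) s) :=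
    (isCompact_sphere _ s).inter_left isClosed_closure
  refine ⟨_, hM, fun x hx => ⟨hx.1, (hsO (sphere_subset_closedBall hx.2)).1⟩,
    fun hx => hs.ne (by simpa using hx.2), ?_⟩
  have hsub := diff_inter_closedBall_subset_entireHull hL hO (hsO.trans inter_subset_right)
    (fun x hx => (hLK hx.1).resolve_left fun hxK => disjoint_left.1 hsK hxK hx.2)
    fun x hx hxg => h.exists_differentiableOn_ne_zero hr hπ hπr hπg hx hxg
  refine closure_minimal hsub (isClosed_entireHull hM) (mem_closure_iff_nhds.2 fun V hV => ?_)
  obtain ⟨x, ⟨hxV, hxs⟩, hx⟩ := mem_closure_iff_nhds.1 hcl _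
    (inter_mem hV (closedBall_mem_nhds _ hs))
  exact ⟨x, hxV, hx, hxs⟩

theorem dominatedNear_closure_diff (h : IsEmbeddedDisc g ρ) (hr : r < ρ) (hL : IsCompact L)
    (hK : IsClosed K) (hLK : L ⊆ K ∪ g '' closedBall 0 r) (hyK : y ∉ K) (hyr : y ∉ g '' sphere 0 r)
    (hcl : y ∈ closure (entireHull L \ g '' closedBall 0 r)) :
    DominatedNear (closure (entireHull L \ g '' closedBall 0 r)) y := by
  by_cases hyg : y ∈ g '' closedBall 0 r
  · obtain ⟨z, hz, rfl⟩ := hyg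
    refine dominatedNear_closure_diff_apply h hr hL hK hLK ?_ hyK hcl
    exact mem_ball.2 ((mem_closedBall.1 hz).lt_of_ne fun he => hyr ⟨z, he, rfl⟩)
  · exact (dominatedNear_entireHull hL
        (closure_minimal sdiff_subset (isClosed_entireHull hL) hcl)
        fun hyL => (hLK hyL).elim hyK hyg).mono_nhds
      ((h.isCompact_image_closedBall hr).isClosed.isOpen_compl.mem_nhds hyg)
      fun z hz => subset_closure hz

theorem exists_mem_sphere_dist_le (hL : IsCompact L) (hO : IsOpen O) (hs : 0 ≤ s)
    (hsO : closedBall y s ⊆ O) (hsL : Disjoint L (closedBall y s)) {π : E → ℂ}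
    (hπ : DifferentiableOn ℂ π O) (hy : y ∈ entireHull L) {c : ℂ}
    (hc : ∀ x ∈ entireHull L ∩ closedBall y s, π x ≠ c) :
    ∃ x ∈ entireHull L ∩ sphere y s, dist (π x) c ≤ dist (π y) c := by
  have := FiniteDimensional.proper_rclike ℂ E
  obtain ⟨x, ⟨hxL, hxs⟩, hx, hle⟩ := exists_mem_frontier_union_norm_le hL (isCompact_closedBall y s)
    (hπ.continuousOn.isOpen_inter_preimage hO isOpen_compl_singleton)
    (fun x hx => ⟨hsO hx.2, hc x hx⟩)
    (fun x hx => (((hπ x hx.1).mono inter_subset_left).sub_const c).inv (sub_ne_zero.2 hx.2))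
    hy (mem_closedBall_self hs)
  refine ⟨x, ⟨hxL, hx.elim (fun h => frontier_closedBall_subset_sphere h)
    fun h => absurd hxs (disjoint_left.1 hsL h)⟩, ?_⟩
  rw [Pi.inv_apply, Pi.inv_apply, norm_inv, norm_inv, ← dist_eq_norm, ← dist_eq_norm] at hle
  exact (inv_le_inv₀ (dist_pos.2 (hc y ⟨hy, mem_closedBall_self hs⟩))
    (dist_pos.2 (hc x ⟨hxL, hxs⟩))).1 hle

theorem preimage_entireHull_mem_nhds (h : IsEmbeddedDisc g ρ) (hr : r < ρ) (hL : IsCompact L)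
    (hz₀ : z₀ ∈ ball 0 r) (hzL : g z₀ ∉ L) (hzX : g z₀ ∈ entireHull L)
    (hcl : g z₀ ∉ closure (entireHull L \ g '' closedBall 0 r)) :
    g ⁻¹' entireHull L ∈ 𝓝 z₀ := by
  obtain ⟨O, π, hO, hzO, hπ, -, hπg⟩ := h.exists_chart hr hz₀
  obtain ⟨s, hs, hsO, hsL⟩ := exists_closedBall_subset_disjoint hL.isClosed
    (inter_mem (isClosed_closure.isOpen_compl.mem_nhds hcl) (hO.mem_nhds hzO)) hzL
  have hdisc : ∀ x ∈ entireHull L ∩ closedBall (g z₀) s, ∃ ζ, π x = ζ ∧ g ζ = x := by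
    rintro x ⟨hx, hxs⟩
    obtain ⟨ζ, hζ, rfl⟩ : x ∈ g '' closedBall 0 r :=
      by_contra fun hxg => (hsO hxs).1 (subset_closure ⟨hx, hxg⟩)
    exact ⟨ζ, hπg ζ hζ (hsO hxs).2, rfl⟩
  have hgc := (h.differentiableAt (ball_subset_ball hr.le hz₀)).continuousAt
  obtain ⟨t, ht, htb⟩ := Metric.mem_nhds_iff.1 (hgc.preimage_mem_nhds (ball_mem_nhds (g z₀) hs))
  refine Metric.mem_nhds_iff.2 ⟨t / 2, half_pos ht, fun z₁ hz₁ => ?_⟩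
  by_contra hz₁X
  obtain ⟨x, ⟨hxX, hxs⟩, hle⟩ := exists_mem_sphere_dist_le (c := z₁) hL hO hs.le
    (hsO.trans inter_subset_right) hsL hπ hzX fun x hx hxz => by
      obtain ⟨ζ, hζ, hgζ⟩ := hdisc x hx
      exact hz₁X (show g z₁ ∈ _ from hxz ▸ hζ ▸ hgζ ▸ hx.1)
  obtain ⟨ζ, hζ, rfl⟩ := hdisc x ⟨hxX, sphere_subset_closedBall hxs⟩
  rw [hζ, hπg z₀ (ball_subset_closedBall hz₀) hzO] at hle
  have hζt : ζ ∈ ball z₀ t := by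
    have := dist_triangle_right ζ z₀ z₁
    rw [mem_ball, dist_comm] at hz₁
    rw [mem_ball]
    linarith
  exact (mem_ball.1 (htb hζt)).ne hxs

end ClosureDiff

section BoundedFibers

variable {α β : Type*} [TopologicalSpace α] {S T X : Set α} {f : α → β} {x : α}

/-- Near `x`, the fibers of the restriction of `f` to `S` have uniformly bounded cardinality. -/
def BoundedFibersNear (S : Set α) (f : α → β) (x : α) : Prop :=
  ∃ N ∈ 𝓝 x, ∃ k : ℕ, ∀ c, (S ∩ N ∩ f ⁻¹' {c}).encard ≤ k

theorem isOpen_setOf_boundedFibersNear : IsOpen {x | BoundedFibersNear S f x} := by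
  refine isOpen_iff_mem_nhds.2 fun x ⟨N, hN, hk⟩ => ?_
  filter_upwards [eventually_mem_nhds_iff.2 hN] with z hz using ⟨N, hz, hk⟩

theorem BoundedFibersNear.mono (hT : BoundedFibersNear T f x) (hST : S ⊆ T) :
    BoundedFibersNear S f x :=
  let ⟨N, hN, k, hk⟩ := hT
  ⟨N, hN, k, fun c => (encard_le_encard (by gcongr)).trans (hk c)⟩

theorem BoundedFibersNear.union (hS : BoundedFibersNear S f x) (hT : BoundedFibersNear T f x) :
    BoundedFibersNear (S ∪ T) f x := by
  obtain ⟨N, hN, k, hk⟩ := hS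
  obtain ⟨N', hN', k', hk'⟩ := hT
  refine ⟨N ∩ N', inter_mem hN hN', k + k', fun c => ?_⟩
  rw [union_inter_distrib_right, union_inter_distrib_right, Nat.cast_add]
  refine (encard_union_le _ _).trans (add_le_add ((encard_le_encard ?_).trans (hk c))
    ((encard_le_encard ?_).trans (hk' c)))
  · gcongr; exact inter_subset_left
  · gcongr; exact inter_subset_right

theorem boundedFibersNear_of_injOn {N : Set α} (hN : N ∈ 𝓝 x) (hf : InjOn f (S ∩ N)) :
    BoundedFibersNear S f x :=
  ⟨N, hN, 1, fun _ => encard_le_one_iff.2 fun _ _ ha hb => hf ha.1 hb.1 (ha.2.trans hb.2.symm)⟩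

theorem boundedFibersNear_of_forall_encard_le [TopologicalSpace β] {B : Set β} {k : ℕ}
    (hf : ContinuousAt f x) (hB : B ∈ 𝓝 (f x)) (hk : ∀ c ∈ B, (S ∩ f ⁻¹' {c}).encard ≤ k) :
    BoundedFibersNear S f x := by
  refine ⟨f ⁻¹' B, hf hB, k, fun c => ?_⟩
  by_cases hc : c ∈ B
  · exact (encard_le_encard (by gcongr; exact inter_subset_left)).trans (hk c hc)
  · refine (encard_eq_zero.2 (eq_empty_of_forall_notMem ?_)).trans_le zero_le
    rintro y ⟨⟨-, hy⟩, rfl⟩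
    exact hc hy

theorem exists_isOpen_encard_inter_preimage_le [T2Space α] [TopologicalSpace β] [T2Space β]
    {c₀ : β} (hX : IsCompact X) (hf : ContinuousOn f X) (hSX : S ⊆ X)
    (hloc : ∀ x ∈ X, f x = c₀ → BoundedFibersNear S f x) :
    ∃ O, IsOpen O ∧ c₀ ∈ O ∧ ∃ k : ℕ, ∀ c ∈ O, (S ∩ f ⁻¹' {c}).encard ≤ k := by
  have hF : IsCompact (X ∩ f ⁻¹' {c₀}) := hX.of_isClosed_subset
    (hf.preimage_isClosed_of_isClosed hX.isClosed isClosed_singleton) inter_subset_left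
  obtain ⟨N, hNo, hFN, k, hk⟩ : ∃ N, IsOpen N ∧ X ∩ f ⁻¹' {c₀} ⊆ N ∧
      ∃ k : ℕ, ∀ c, (S ∩ N ∩ f ⁻¹' {c}).encard ≤ k := by
    refine hF.induction_on (p := fun t => ∃ N, IsOpen N ∧ t ⊆ N ∧
      ∃ k : ℕ, ∀ c, (S ∩ N ∩ f ⁻¹' {c}).encard ≤ k) ⟨∅, isOpen_empty, Subset.rfl, 0, by simp⟩
      (fun s t hst ⟨N, hN, htN, hk⟩ => ⟨N, hN, hst.trans htN, hk⟩) ?_ ?_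
    · rintro s t ⟨N, hN, hsN, k, hk⟩ ⟨N', hN', htN', k', hk'⟩
      refine ⟨N ∪ N', hN.union hN', union_subset_union hsN htN', k + k', fun c => ?_⟩
      rw [inter_union_distrib_left, union_inter_distrib_right, Nat.cast_add]
      exact (encard_union_le _ _).trans (add_le_add (hk c) (hk' c))
    · rintro x ⟨hxX, hxc⟩
      obtain ⟨N, hN, k, hk⟩ := hloc x hxX hxc
      refine ⟨interior N, mem_nhdsWithin_of_mem_nhds (interior_mem_nhds.2 hN), interior N,
        isOpen_interior, Subset.rfl, k, fun c => (encard_le_encard ?_).trans (hk c)⟩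
      gcongr
      exact interior_subset
  have hc : IsCompact (f '' (X \ N)) :=
    (hX.diff hNo).image_of_continuousOn (hf.mono sdiff_subset)
  refine ⟨_, hc.isClosed.isOpen_compl, fun ⟨x, ⟨hxX, hxN⟩, hx⟩ => hxN (hFN ⟨hxX, hx⟩), k,
    fun c hcO => (encard_le_encard ?_).trans (hk c)⟩
  rintro x ⟨hxS, hxc⟩
  refine ⟨⟨hxS, ?_⟩, hxc⟩
  by_contra hxN
  exact hcO ⟨x, ⟨hSX hxS, hxN⟩, hxc⟩

end BoundedFibers

section DiscFibers

variable {E : Type*} [NormedAddCommGroup E] [NormedSpace ℂ E] {f : E → ℂ} {g : ℂ → E}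
  {b r R ρ : ℝ} {a : ℂ}

namespace IsEmbeddedDisc

theorem analyticOnNhd_comp (h : IsEmbeddedDisc g ρ) (hf : Differentiable ℂ f) :
    AnalyticOnNhd ℂ (fun z => f (g z)) (ball 0 ρ) :=
  (hf.comp_differentiableOn h.differentiableOn).analyticOnNhd isOpen_ball

theorem exists_forall_mem_sphere_ne (h : IsEmbeddedDisc g ρ) (hrR : r < R) (hR : R < ρ)
    (hf : Differentiable ℂ f) (ha : a ∈ ball 0 ρ) (hda : deriv (fun z => f (g z)) a ≠ 0) (c : ℂ) :
    ∃ s ∈ Ioo r R, ∀ z ∈ sphere 0 s, f (g z) ≠ c := by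
  obtain ⟨z₁, hz₁, hne⟩ : ∃ z ∈ ball 0 ρ, f (g z) - c ≠ 0 := by
    by_contra! hall
    have hc : (fun z => f (g z)) =ᶠ[𝓝 a] fun _ => c := by
      filter_upwards [isOpen_ball.mem_nhds ha] with z hz using sub_eq_zero.1 (hall z hz)
    exact hda (hc.deriv_eq.trans (deriv_const a c))
  have hfin := finite_inter_preimage_zero (isCompact_closedBall 0 R) (closedBall_subset_ball hR)
    ((h.analyticOnNhd_comp hf).sub analyticOnNhd_const) (convex_ball 0 ρ).isPreconnected hz₁ hne
  obtain ⟨s, hs, hsn⟩ := ((Ioo_infinite hrR).sdiff (hfin.image norm)).nonempty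
  refine ⟨s, hs, fun z hz hzc => hsn ⟨z, ⟨?_, sub_eq_zero.2 hzc⟩, mem_sphere_zero_iff_norm.1 hz⟩⟩
  exact sphere_subset_closedBall.trans (closedBall_subset_closedBall hs.2.le) hz

theorem boundedFibersNear (h : IsEmbeddedDisc g ρ) (hr : r < ρ) (hf : Differentiable ℂ f)
    (ha : a ∈ ball 0 ρ) (hda : deriv (fun z => f (g z)) a ≠ 0) :
    BoundedFibersNear (g '' closedBall 0 r) f (g a) := by
  obtain ⟨ψ, -, -, -, hψ⟩ :=
    exists_local_inverse_of_deriv_ne_zero (h.analyticOnNhd_comp hf a ha) hda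
  obtain ⟨O, hO, haO, hOψ⟩ := h.exists_isOpen_forall_mem hr ha hψ
  refine boundedFibersNear_of_injOn (hO.mem_nhds haO) ?_
  rintro _ ⟨⟨z, hz, rfl⟩, hzO⟩ _ ⟨⟨w, hw, rfl⟩, hwO⟩ hzw
  rw [← hOψ z hz hzO, ← hOψ w hw hwO, hzw]

theorem exists_regular_value (h : IsEmbeddedDisc g ρ) (hr : r < ρ) (hf : Differentiable ℂ f)
    (ha : a ∈ ball 0 ρ) (hda : deriv (fun z => f (g z)) a ≠ 0) {U : Set ℂ} (hU : IsOpen U)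
    (hUne : U.Nonempty) :
    ∃ c ∈ U, ∀ x ∈ g '' closedBall 0 r, f x = c → BoundedFibersNear (g '' closedBall 0 r) f x := by
  have hfin := finite_inter_preimage_zero (isCompact_closedBall 0 r) (closedBall_subset_ball hr)
    (h.analyticOnNhd_comp hf).deriv (convex_ball 0 ρ).isPreconnected ha hda
  obtain ⟨c, hcU, hc⟩ := ((hfin.image fun z => f (g z)).countable.dense_compl ℝ).inter_open_nonempty
    U hU hUne
  refine ⟨c, hcU, ?_⟩
  rintro _ ⟨z, hz, rfl⟩ hzc
  exact h.boundedFibersNear hr hf (closedBall_subset_ball hr hz) fun h₀ => hc ⟨z, ⟨hz, h₀⟩, hzc⟩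

end IsEmbeddedDisc

theorem exists_isOpen_subset_encard_le (h : IsEmbeddedDisc g ρ) (hr : r < ρ)
    (hf : Differentiable ℂ f) (ha : a ∈ ball 0 ρ) (hda : deriv (fun z => f (g z)) a ≠ 0)
    {X : Set E} (hX : IsCompact X) {U : Set ℂ} (hU : IsOpen U) (hUne : U.Nonempty)
    (hfib : ∀ x ∈ X, f x ∈ U → BoundedFibersNear (X \ g '' closedBall 0 r) f x) :
    ∃ O ⊆ U, IsOpen O ∧ O.Nonempty ∧ ∃ k : ℕ, ∀ c ∈ O, (X ∩ f ⁻¹' {c}).encard ≤ k := by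
  obtain ⟨c, hcU, hc⟩ := h.exists_regular_value hr hf ha hda hU hUne
  obtain ⟨O₁, hO₁, hcO₁, k₁, hk₁⟩ := exists_isOpen_encard_inter_preimage_le
    (h.isCompact_image_closedBall hr) hf.continuous.continuousOn Subset.rfl hc
  obtain ⟨O₂, hO₂, hcO₂, k₂, hk₂⟩ := exists_isOpen_encard_inter_preimage_le hX
    hf.continuous.continuousOn sdiff_subset fun x hx hxc => hfib x hx (hxc ▸ hcU)
  refine ⟨O₁ ∩ O₂ ∩ U, inter_subset_right, (hO₁.inter hO₂).inter hU, ⟨c, ⟨hcO₁, hcO₂⟩, hcU⟩,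
    k₁ + k₂, fun b hb => ?_⟩
  rw [Nat.cast_add]
  refine (encard_le_encard ?_).trans
    ((encard_union_le _ _).trans (add_le_add (hk₁ b hb.1.1) (hk₂ b hb.1.2)))
  rw [← union_inter_distrib_right, union_sdiff_self]
  gcongr
  exact subset_union_right

variable [FiniteDimensional ℂ E] {L : Set E} {y : E}

theorem boundedFibersNear_of_forall_norm_lt (h : IsEmbeddedDisc g ρ) (hrR : r < R) (hR : R < ρ)
    (hL : IsCompact L) (hf : Differentiable ℂ f) (ha : a ∈ ball 0 ρ)
    (hda : deriv (fun z => f (g z)) a ≠ 0) (hLb : L ⊆ {x | ‖f x‖ ≤ b} ∪ g '' closedBall 0 r)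
    (hby : b < ‖f y‖) (hfib : ∀ x ∈ entireHull L, ‖f y‖ < ‖f x‖ →
      BoundedFibersNear (entireHull L \ g '' closedBall 0 R) f x) :
    BoundedFibersNear (entireHull L \ g '' closedBall 0 R) f y := by
  have := FiniteDimensional.proper_rclike ℂ E
  obtain ⟨s, ⟨hrs, hsR⟩, hsne⟩ := h.exists_forall_mem_sphere_ne hrR hR hf ha hda (f y)
  have hsρ := hsR.trans hR
  have hsR' : g '' closedBall 0 s ⊆ g '' closedBall 0 R :=
    image_mono (closedBall_subset_closedBall hsR.le)
  obtain ⟨δ, hδ, hδs⟩ := Metric.mem_nhds_iff.1 (inter_mem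
    (((h.isCompact_image_sphere hsρ).image hf.continuous).isClosed.isOpen_compl.mem_nhds
      (by rintro ⟨_, ⟨z, hz, rfl⟩, hzy⟩; exact hsne z hz hzy))
    ((isOpen_lt continuous_const continuous_norm).mem_nhds hby))
  have hX := isCompact_entireHull hL
  have hfy : f y ∈ closure (closedBall 0 ‖f y‖)ᶜ := by
    rw [closure_compl, interior_closedBall']
    simp
  obtain ⟨O, hOU, hO, hOne, k, hk⟩ := exists_isOpen_subset_encard_le h hR hf ha hda hX
    (U := ball (f y) δ ∩ (closedBall 0 ‖f y‖)ᶜ) (isOpen_ball.inter isClosed_closedBall.isOpen_compl)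
    (mem_closure_iff_nhds.1 hfy _ (ball_mem_nhds _ hδ))
    fun x hx hxU => hfib x hx (by simpa using hxU.2)
  have hsub : closure (entireHull L \ g '' closedBall 0 s) ⊆ entireHull L :=
    closure_minimal sdiff_subset hX.isClosed
  refine boundedFibersNear_of_forall_encard_le hf.continuous.continuousAt (ball_mem_nhds _ hδ)
    fun c hc => (encard_le_encard ?_).trans <| encard_inter_preimage_le
      (hX.of_isClosed_subset isClosed_closure hsub) hf (fun x hx hxB => ?_) isOpen_ball
      (convex_ball _ _).isPreconnected hO hOne (hOU.trans inter_subset_left)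
      (fun c hc => (encard_le_encard (inter_subset_inter_left _ hsub)).trans (hk c hc)) hc
  · exact inter_subset_inter_left _ ((sdiff_subset_sdiff_right hsR').trans subset_closure)
  · refine dominatedNear_closure_diff h hsρ hL (isClosed_le hf.continuous.norm continuous_const)
      (hLb.trans (union_subset_union_right _ (image_mono (closedBall_subset_closedBall hrs.le))))
      (fun hxb : ‖f x‖ ≤ b => hxb.not_gt (hδs hxB).2) (fun hxs => (hδs hxB).1 ⟨x, hxs, rfl⟩) hx

theorem boundedFibersNear_entireHull_diff (h : IsEmbeddedDisc g ρ) (hrR : r < R) (hR : R < ρ)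
    (hL : IsCompact L) (hf : Differentiable ℂ f) (ha : a ∈ ball 0 ρ)
    (hda : deriv (fun z => f (g z)) a ≠ 0) (hLb : L ⊆ {x | ‖f x‖ ≤ b} ∪ g '' closedBall 0 r)
    (hy : y ∈ entireHull L) (hby : b < ‖f y‖) :
    BoundedFibersNear (entireHull L \ g '' closedBall 0 R) f y := by
  have := FiniteDimensional.proper_rclike ℂ E
  by_contra hbad
  have hc := (isCompact_entireHull hL).diff
    (isOpen_setOf_boundedFibersNear (S := entireHull L \ g '' closedBall 0 R) (f := f))
  obtain ⟨y₀, hy₀, hmax⟩ := hc.exists_isMaxOn ⟨y, hy, hbad⟩ hf.continuous.norm.continuousOn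
  refine hy₀.2 (boundedFibersNear_of_forall_norm_lt h hrR hR hL hf ha hda hLb
    (hby.trans_le (hmax ⟨hy, hbad⟩)) fun x hx hlt => ?_)
  by_contra hxb
  exact hlt.not_ge (hmax ⟨hx, hxb⟩)

end DiscFibers

section SectionInHull

theorem BoundedFibersNear.exists_radius_notMem_image {α β : Type*} [PseudoMetricSpace α] {X : Set α}
    {f : α → β} {y : α} (h : BoundedFibersNear X f y) {ε : ℝ} (hε : 0 < ε) (c : β) :
    ∃ s ∈ Ioo 0 ε, c ∉ f '' (X ∩ sphere y s) ∧
      ∃ k : ℕ, ∀ b, (X ∩ closedBall y s ∩ f ⁻¹' {b}).encard ≤ k := by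
  obtain ⟨N, hN, k, hk⟩ := h
  obtain ⟨t, ht, htN⟩ := nhds_basis_closedBall.mem_iff.1 hN
  obtain ⟨s, ⟨hs, hst⟩, hsn⟩ := ((Ioo_infinite (lt_min hε ht)).sdiff
    ((finite_of_encard_le_coe (hk c)).image fun x => dist x y)).nonempty
  rw [lt_min_iff] at hst
  have hsN := (closedBall_subset_closedBall hst.2.le).trans htN
  refine ⟨s, ⟨hs, hst.1⟩, ?_, k, fun b => (encard_le_encard (by gcongr)).trans (hk b)⟩
  rintro ⟨x, ⟨hx, hxs⟩, hxc⟩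
  exact hsn ⟨x, ⟨⟨hx, hsN (sphere_subset_closedBall hxs)⟩, hxc⟩, hxs⟩

theorem union_image_inter_preimage_singleton {α β : Type*} {f : α → β} {G : β → α}
    {Z : Set α} {S : Set β} (hfG : ∀ c ∈ S, f (G c) = c) {c : β} (hc : c ∈ S) :
    (Z ∪ G '' S) ∩ f ⁻¹' {c} = insert (G c) (Z ∩ f ⁻¹' {c}) := by
  ext x
  constructor
  · rintro ⟨hx | ⟨c', hc', rfl⟩, hxc⟩
    · exact Or.inr ⟨hx, hxc⟩
    · rw [mem_preimage, hfG c' hc', mem_singleton_iff] at hxc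
      exact Or.inl (congrArg G hxc)
  · rintro (rfl | ⟨hx, hxc⟩)
    · exact ⟨Or.inr ⟨c, hc, rfl⟩, hfG c hc⟩
    · exact ⟨Or.inl hx, hxc⟩

variable {E : Type*} [NormedAddCommGroup E] [NormedSpace ℂ E] {f : E → ℂ} {G : ℂ → E}
  {L Z : Set E} {O : Set ℂ} {c₀ : ℂ} {δ : ℝ}

theorem dominatedNear_union_image (hdom : ∀ x ∈ Z, f x ∈ ball c₀ δ → DominatedNear Z x)
    (hG : DifferentiableOn ℂ G (closedBall c₀ δ)) (hfG : ∀ c ∈ closedBall c₀ δ, f (G c) = c) :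
    ∀ x ∈ Z ∪ G '' closedBall c₀ δ, f x ∈ ball c₀ δ →
      DominatedNear (Z ∪ G '' closedBall c₀ δ) x := by
  rintro x (hx | ⟨c, hc, rfl⟩) hxB
  · exact (hdom x hx hxB).mono_nhds univ_mem (inter_subset_left.trans subset_union_left)
  · rw [hfG c hc] at hxB
    obtain ⟨η, hη, hηB⟩ := Metric.isOpen_iff.1 isOpen_ball c hxB
    have hηB' := hηB.trans ball_subset_closedBall
    exact dominatedNear_of_disc hη (hG.mono hηB')
      ((show LeftInvOn f G (closedBall c₀ δ) from hfG).injOn.mono hηB')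
      fun b hb => Or.inr ⟨b, hηB' hb, rfl⟩

variable [FiniteDimensional ℂ E]

/- If `Z` missed a point of the section, then adding the section to `Z` would leave the fibers over
`O` unchanged but enlarge the fibers over some other open set by one; as the generic bound on
the fibers propagates from any open set to the whole disc, `k` could be lowered indefinitely. -/
theorem mapsTo_of_encard_le (hZ : IsCompact Z) (hf : Differentiable ℂ f)
    (hdom : ∀ x ∈ Z, f x ∈ ball c₀ δ → DominatedNear Z x)
    (hG : DifferentiableOn ℂ G (closedBall c₀ δ)) (hfG : ∀ c ∈ closedBall c₀ δ, f (G c) = c)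
    {k : ℕ} (hfib : ∀ c ∈ ball c₀ δ, (Z ∩ f ⁻¹' {c}).encard ≤ k) (hO : IsOpen O)
    (hOne : O.Nonempty) (hOB : O ⊆ ball c₀ δ) (hGO : MapsTo G O Z) :
    MapsTo G (ball c₀ δ) Z := by
  have hB : ball c₀ δ ⊆ closedBall c₀ δ := ball_subset_closedBall
  by_contra! hG'
  obtain ⟨c₂, hc₂, hc₂Z⟩ : ∃ c ∈ ball c₀ δ, G c ∉ Z := by simpa [MapsTo] using hG'
  have hO₂ : IsOpen (ball c₀ δ ∩ G ⁻¹' Zᶜ) :=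
    (hG.continuousOn.mono hB).isOpen_inter_preimage isOpen_ball hZ.isClosed.isOpen_compl
  have hconn := (convex_ball c₀ δ).isPreconnected
  induction k with
  | zero =>
    obtain ⟨c, hc⟩ := hOne
    have h₀ := hfib c (hOB hc)
    rw [Nat.cast_zero, nonpos_iff_eq_zero, encard_eq_zero] at h₀
    exact h₀.subset ⟨hGO hc, hfG c (hB (hOB hc))⟩
  | succ k ih =>
    refine ih fun c hc => encard_inter_preimage_le hZ hf hdom isOpen_ball hconn hO₂
      ⟨c₂, hc₂, hc₂Z⟩ inter_subset_left (fun b hb => ?_) hc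
    have hle := encard_inter_preimage_le
      (hZ.union ((isCompact_closedBall c₀ δ).image_of_continuousOn hG.continuousOn)) hf
      (dominatedNear_union_image hdom hG hfG) isOpen_ball hconn hO hOne hOB (k := k + 1)
      (fun c hc => by
        rw [union_image_inter_preimage_singleton hfG (hB (hOB hc)),
          insert_eq_of_mem (show G c ∈ Z ∩ f ⁻¹' {c} from ⟨hGO hc, hfG c (hB (hOB hc))⟩)]
        exact hfib c (hOB hc)) hb.1
    rw [union_image_inter_preimage_singleton hfG (hB hb.1),
      encard_insert_of_notMem fun hm => hb.2 hm.1, Nat.cast_succ] at hle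
    exact (ENat.add_le_add_iff_right ENat.one_ne_top).1 hle

theorem eventually_mem_entireHull (hL : IsCompact L) (hf : Differentiable ℂ f)
    (hG : AnalyticAt ℂ G c₀) (hfG : ∀ᶠ c in 𝓝 c₀, f (G c) = c) (hGL : G c₀ ∉ L)
    (hfib : BoundedFibersNear (entireHull L) f (G c₀))
    (hfreq : ∃ᶠ c in 𝓝 c₀, ∀ᶠ b in 𝓝 c, G b ∈ entireHull L) :
    ∀ᶠ c in 𝓝 c₀, G c ∈ entireHull L := by
  have := FiniteDimensional.proper_rclike ℂ E
  have hX := isCompact_entireHull hL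
  obtain ⟨ε, hε, -, hεL⟩ := exists_closedBall_subset_disjoint hL.isClosed univ_mem hGL
  obtain ⟨s, ⟨hs, hsε⟩, hcs, k, hk⟩ := hfib.exists_radius_notMem_image hε c₀
  have hfs : ∀ᶠ c in 𝓝 c₀, c ∉ f '' (entireHull L ∩ sphere (G c₀) s) :=
    ((hX.inter_right isClosed_sphere).image hf.continuous).isClosed.isOpen_compl.mem_nhds hcs
  obtain ⟨δ, hδ, hδG⟩ := nhds_basis_closedBall.mem_iff.1 (hG.eventually_analyticAt.and
    (hfG.and (hfs.and (hG.continuousAt.eventually_mem (ball_mem_nhds (G c₀) hs)))))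
  have hB : ball c₀ δ ⊆ closedBall c₀ δ := ball_subset_closedBall
  obtain ⟨c, hcX, hcB⟩ := (hfreq.and_eventually (ball_mem_nhds c₀ hδ)).exists
  have hmaps : MapsTo G (ball c₀ δ) (entireHull L ∩ closedBall (G c₀) s) :=
    mapsTo_of_encard_le (hX.inter_right isClosed_closedBall) hf (fun x hx hxB => ?_)
      (fun c hc => (hδG hc).1.differentiableAt.differentiableWithinAt) (fun c hc => (hδG hc).2.1)
      (fun c _ => hk c) (isOpen_ball.inter isOpen_interior)
      ⟨c, hcB, mem_interior_iff_mem_nhds.2 hcX⟩ inter_subset_left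
      fun b hb => ⟨interior_subset (s := G ⁻¹' entireHull L) hb.2,
        ball_subset_closedBall (hδG (hB hb.1)).2.2.2⟩
  · filter_upwards [ball_mem_nhds c₀ hδ] with c hc using (hmaps hc).1
  · have hxs : x ∈ ball (G c₀) s := mem_ball.2 ((mem_closedBall.1 hx.2).lt_of_ne fun he =>
      (hδG (hB hxB)).2.2.1 ⟨x, ⟨hx.1, he⟩, rfl⟩)
    exact (dominatedNear_entireHull hL hx.1 fun hxL => disjoint_left.1 hεL hxL
      (closedBall_subset_closedBall hsε.le hx.2)).mono_nhds (isOpen_ball.mem_nhds hxs)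
      (inter_subset_inter_right _ ball_subset_closedBall)

end SectionInHull

section Annulus

variable {E : Type*} [NormedAddCommGroup E] [NormedSpace ℂ E] {K : Set E} {g : ℂ → E}
  {r R ρ ε : ℝ} {a : ℂ} {y : E}

theorem exists_entire_eq_one_norm_le (hK : IsCompact K) (hy : y ∉ entireHull K) (hε : 0 < ε) :
    ∃ p : E → ℂ, Differentiable ℂ p ∧ p y = 1 ∧ ∀ x ∈ K, ‖p x‖ ≤ ε := by
  obtain ⟨p, hp, hpK, hpy⟩ := exists_entire_norm_le_lt_norm (b := 1) hK hy hε
  have hp₀ : p y ≠ 0 := norm_pos_iff.1 (one_pos.trans hpy)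
  refine ⟨fun x => (p y)⁻¹ * p x, hp.const_mul _, inv_mul_cancel₀ hp₀, fun x hx => ?_⟩
  rw [norm_mul, norm_inv]
  exact (mul_le_of_le_one_left (norm_nonneg _) (inv_le_one_of_one_le₀ hpy.le)).trans (hpK x hx)

theorem exists_entire_eq_zero_deriv_comp_ne_zero (hg : DifferentiableAt ℂ g a)
    (hg' : deriv g a ≠ 0) (hK : IsCompact K) (hε : 0 < ε) :
    ∃ q : E → ℂ, Differentiable ℂ q ∧ q (g a) = 0 ∧ (∀ x ∈ K, ‖q x‖ ≤ ε) ∧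
      deriv (fun z => q (g z)) a ≠ 0 := by
  obtain ⟨ℓ, hℓ⟩ := exists_dual_deriv_comp_ne_zero hg hg'
  have hd : Differentiable ℂ fun x => ℓ x - ℓ (g a) := ℓ.differentiable.sub_const _
  obtain ⟨C, hC₀, hC⟩ := (hK.image hd.continuous).isBounded.exists_pos_norm_le
  have hεC : 0 < ε / C := div_pos hε hC₀
  refine ⟨fun x => (ε / C : ℝ) * (ℓ x - ℓ (g a)), hd.const_mul _, by simp, fun x hx => ?_, ?_⟩
  · rw [norm_mul, norm_real, Real.norm_of_nonneg hεC.le, div_mul_eq_mul_div, div_le_iff₀ hC₀]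
    exact mul_le_mul_of_nonneg_left (hC _ (mem_image_of_mem _ hx)) hε.le
  · rw [deriv_const_mul_field, deriv_sub_const]
    exact mul_ne_zero (ofReal_ne_zero.2 hεC.ne') hℓ

theorem exists_entire_eq_one_deriv_comp_ne_zero (hg : DifferentiableAt ℂ g a)
    (hg' : deriv g a ≠ 0) (hK : IsCompact K) (ha : g a ∉ entireHull K) (hε : 0 < ε) :
    ∃ f : E → ℂ, Differentiable ℂ f ∧ f (g a) = 1 ∧ (∀ x ∈ K, ‖f x‖ ≤ ε) ∧
      deriv (fun z => f (g z)) a ≠ 0 := by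
  obtain ⟨p, hp, hpa, hpK⟩ := exists_entire_eq_one_norm_le hK ha (half_pos hε)
  by_cases hp' : deriv (fun z => p (g z)) a = 0
  · obtain ⟨q, hq, hqa, hqK, hq'⟩ :=
      exists_entire_eq_zero_deriv_comp_ne_zero hg hg' hK (half_pos hε)
    refine ⟨fun x => p x + q x, hp.add hq, by simp only [hpa, hqa, add_zero], fun x hx =>
      (norm_add_le _ _).trans ((add_le_add (hpK x hx) (hqK x hx)).trans (add_halves ε).le), ?_⟩
    have hpg : DifferentiableAt ℂ (fun z => p (g z)) a := (hp (g a)).comp a hg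
    have hqg : DifferentiableAt ℂ (fun z => q (g z)) a := (hq (g a)).comp a hg
    rwa [deriv_fun_add hpg hqg, hp', zero_add]
  · exact ⟨p, hp, hpa, fun x hx => (hpK x hx).trans (half_le_self hε.le), hp'⟩

theorem isPreconnected_annulus (hr : 0 < r) : IsPreconnected {z : ℂ | r < ‖z‖ ∧ ‖z‖ < R} := by
  rcases le_or_gt R 0 with hR | hR
  · exact (eq_empty_of_forall_notMem fun (z : ℂ) (hz : r < ‖z‖ ∧ ‖z‖ < R) =>
      (hz.1.trans hz.2).not_ge (hR.trans hr.le)) ▸ isPreconnected_empty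
  have hconv : Convex ℝ (re ⁻¹' Ioo (Real.log r) (Real.log R)) :=
    (convex_Ioo _ _).linear_preimage reLm
  convert hconv.isPreconnected.image exp continuous_exp.continuousOn using 1
  ext z
  constructor
  · rintro ⟨hrz, hzR⟩
    have hz := hr.trans hrz
    refine ⟨log z, ?_, exp_log (norm_pos_iff.1 hz)⟩
    rw [mem_preimage, log_re]
    exact ⟨Real.log_lt_log hr hrz, Real.log_lt_log hz hzR⟩
  · rintro ⟨w, ⟨hrw, hwR⟩, rfl⟩
    rw [mem_ofPred_eq, norm_exp]
    exact ⟨(Real.log_lt_iff_lt_exp hr).1 hrw, (Real.lt_log_iff_exp_lt hR).1 hwR⟩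

variable [FiniteDimensional ℂ E]

theorem preimage_entireHull_mem_nhds_of_mem_closure_interior (h : IsEmbeddedDisc g ρ) (hr : r < ρ)
    (hK : IsCompact K) (ha : a ∈ ball 0 ρ) (haL : g a ∉ K ∪ g '' closedBall 0 r)
    (haK : g a ∉ entireHull K)
    (hcl : a ∈ closure (interior (g ⁻¹' entireHull (K ∪ g '' closedBall 0 r)))) :
    g ⁻¹' entireHull (K ∪ g '' closedBall 0 r) ∈ 𝓝 a := by
  obtain ⟨R, hrR, hR⟩ := exists_between hr
  have hL := hK.union (h.isCompact_image_closedBall hr)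
  have hg := h.differentiableAt ha
  have haX : g a ∈ entireHull (K ∪ g '' closedBall 0 r) := by
    rw [← (isClosed_entireHull hL).closure_eq]
    exact hg.continuousAt.continuousWithinAt.mem_closure hcl
      (interior_subset (s := g ⁻¹' entireHull (K ∪ g '' closedBall 0 r)))
  obtain ⟨f, hf, hfa, hfK, hda⟩ := exists_entire_eq_one_deriv_comp_ne_zero hg
    (h.deriv_ne_zero a ha) hK haK one_half_pos
  have hφ := h.analyticOnNhd_comp hf a ha
  obtain ⟨ψ, hψa, hψ, hfψ, hψf⟩ := exists_local_inverse_of_deriv_ne_zero hφ hda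
  have hfib : BoundedFibersNear (entireHull (K ∪ g '' closedBall 0 r)) f (g (ψ (f (g a)))) := by
    rw [hψa]
    refine ((boundedFibersNear_entireHull_diff h hrR hR hL hf ha hda
      (union_subset_union_left _ hfK) haX (by norm_num [hfa])).union
      (h.boundedFibersNear hR hf ha hda)).mono ?_
    rw [sdiff_union_self]
    exact subset_union_left
  have hX := eventually_mem_entireHull (G := g ∘ ψ) hL hf
    ((h.differentiableOn.analyticAt (isOpen_ball.mem_nhds ha)).comp_of_eq hψ hψa) hfψ
    (by rwa [Function.comp_apply, hψa]) hfib ?_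
  · filter_upwards [hφ.continuousAt.eventually hX, hψf] with z hzX hz
    rwa [Function.comp_apply, hz] at hzX
  · refine hφ.continuousAt.frequently (((mem_closure_iff_frequently.1 hcl).and_eventually
      (hψf.and (hφ.continuousAt.eventually hψ.eventually_analyticAt))).mono ?_)
    rintro z ⟨hz, hzψ, hψz⟩
    exact hψz.continuousAt.eventually_mem (hzψ.symm ▸ mem_interior_iff_mem_nhds.1 hz)

theorem entireHull_subset_of_annulus_subset (h : IsEmbeddedDisc g ρ) (hrR : r < R) (hR : R < ρ)
    (hK : IsCompact K)
    (hann : {z | r < ‖z‖ ∧ ‖z‖ < R} ⊆ g ⁻¹' entireHull (K ∪ g '' closedBall 0 r)) :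
    entireHull (K ∪ g '' closedBall 0 r) ⊆ entireHull K := by
  have := FiniteDimensional.proper_rclike ℂ E
  have hL := hK.union (h.isCompact_image_closedBall (hrR.trans hR))
  have hdisc : MapsTo g (ball 0 R) (entireHull (K ∪ g '' closedBall 0 r)) := fun z hz => by
    rcases le_or_gt ‖z‖ r with hzr | hrz
    · exact subset_entireHull _ (Or.inr ⟨z, mem_closedBall_zero_iff.2 hzr, rfl⟩)
    · exact hann ⟨hrz, mem_ball_zero_iff.1 hz⟩
  refine (subset_entireHull_of_dominatedNear (isCompact_entireHull hL) fun x hx hxK => ?_).trans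
    (entireHull_mono inter_subset_right)
  by_cases hxg : x ∈ g '' closedBall 0 r
  · obtain ⟨z, hz, rfl⟩ := hxg
    obtain ⟨η, hη, hηR⟩ := Metric.isOpen_iff.1 isOpen_ball z (closedBall_subset_ball hrR hz)
    have hηρ := hηR.trans (ball_subset_ball hR.le)
    exact dominatedNear_of_disc hη (h.differentiableOn.mono hηρ) (h.injOn.mono hηρ)
      (hdisc.mono_left hηR)
  · exact dominatedNear_entireHull hL hx fun hxL => hxL.elim hxK hxg

theorem closure_entireHull_diff_subset (h : IsEmbeddedDisc g ρ) (hrR : r < R) (hR : R < ρ)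
    (hK : IsCompact K) (hann : ∀ z : ℂ, r < ‖z‖ → ‖z‖ < R →
      g z ∈ entireHull (K ∪ g '' closedBall 0 r) →
      g z ∈ closure (entireHull (K ∪ g '' closedBall 0 r) \ g '' closedBall 0 R)) :
    closure (entireHull (K ∪ g '' closedBall 0 r) \ g '' closedBall 0 r) ⊆ entireHull K := by
  have := FiniteDimensional.proper_rclike ℂ E
  have hL := hK.union (h.isCompact_image_closedBall (hrR.trans hR))
  have hrR' : g '' closedBall 0 r ⊆ g '' closedBall 0 R :=
    image_mono (closedBall_subset_closedBall hrR.le)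
  set X := entireHull (K ∪ g '' closedBall 0 r)
  have hcover : closure (X \ g '' closedBall 0 r) ⊆
      closure (X \ g '' closedBall 0 R) ∪ g '' sphere 0 R := by
    refine closure_minimal ?_ (isClosed_closure.union (h.isCompact_image_sphere hR).isClosed)
    rintro x ⟨hx, hxr⟩
    by_cases hxR : x ∈ g '' closedBall 0 R
    · obtain ⟨z, hz, rfl⟩ := hxR
      have hrz : r < ‖z‖ := not_le.1 fun hle => hxr ⟨z, mem_closedBall_zero_iff.2 hle, rfl⟩
      exact (mem_closedBall_zero_iff.1 hz).lt_or_eq.imp (fun hzR => hann z hrz hzR hx)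
        fun hzR => ⟨z, mem_sphere_zero_iff_norm.2 hzR, rfl⟩
    · exact Or.inl (subset_closure ⟨hx, hxR⟩)
  refine (subset_entireHull_of_dominatedNear ((isCompact_entireHull hL).of_isClosed_subset
    isClosed_closure (closure_minimal sdiff_subset (isClosed_entireHull hL)))
    fun x hx hxK => ?_).trans (entireHull_mono inter_subset_right)
  by_cases hxr : x ∈ g '' sphere 0 r
  · have hxR : x ∉ g '' sphere 0 R := by
      obtain ⟨z, hz, rfl⟩ := hxr
      rw [mem_sphere_zero_iff_norm] at hz
      refine h.notMem_image (sphere_subset_closedBall.trans (closedBall_subset_ball hR))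
        (mem_ball_zero_iff.2 (hz.trans_lt (hrR.trans hR))) fun hzR => ?_
      exact hrR.ne (hz.symm.trans (mem_sphere_zero_iff_norm.1 hzR))
    exact (dominatedNear_closure_diff h hR hL hK.isClosed (union_subset_union_right _ hrR') hxK hxR
      ((hcover hx).resolve_right hxR)).mono_nhds univ_mem
      (inter_subset_left.trans (closure_mono (sdiff_subset_sdiff_right hrR')))
  · exact dominatedNear_closure_diff h (hrR.trans hR) hL hK.isClosed Subset.rfl hxK hxr hx

theorem entireHull_union_image_closedBall_subset (h : IsEmbeddedDisc g ρ) (hr₀ : 0 < r) (hr : r < ρ)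
    (hK : IsCompact K) (hKc : entireHull K ⊆ K) (hgK : ∀ z ∈ ball 0 ρ, g z ∉ K) :
    entireHull (K ∪ g '' closedBall 0 r) ⊆ K ∪ g '' closedBall 0 r := by
  obtain ⟨R, hrR, hR⟩ := exists_between hr
  have hL := hK.union (h.isCompact_image_closedBall hr)
  set A := {z : ℂ | r < ‖z‖ ∧ ‖z‖ < R}
  have hAρ : A ⊆ ball 0 ρ := fun z hz => mem_ball_zero_iff.2 (hz.2.trans hR)
  have hAL : ∀ z ∈ A, g z ∉ K ∪ g '' closedBall 0 r := fun z hz hzL =>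
    hzL.elim (hgK z (hAρ hz)) (h.notMem_image (closedBall_subset_ball hr) (hAρ hz)
      fun hzr => hz.1.not_ge (mem_closedBall_zero_iff.1 hzr))
  rcases (A ∩ interior (g ⁻¹' entireHull (K ∪ g '' closedBall 0 r))).eq_empty_or_nonempty
    with hemp | hne
  · have hsub := closure_entireHull_diff_subset h hrR hR hK fun z hrz hzR hzX => by
      by_contra hcl
      have hnhds := preimage_entireHull_mem_nhds h hR hL (mem_ball_zero_iff.2 hzR)
        (hAL z ⟨hrz, hzR⟩) hzX hcl
      exact hemp.subset ⟨⟨hrz, hzR⟩, mem_interior_iff_mem_nhds.2 hnhds⟩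
    intro x hx
    by_cases hxg : x ∈ g '' closedBall 0 r
    · exact Or.inr hxg
    · exact Or.inl (hKc (hsub (subset_closure ⟨hx, hxg⟩)))
  · have hA := (isPreconnected_annulus hr₀).subset_of_closure_inter_subset isOpen_interior hne
      fun z ⟨hzc, hzA⟩ => mem_interior_iff_mem_nhds.2 <|
        preimage_entireHull_mem_nhds_of_mem_closure_interior h hr hK (hAρ hzA) (hAL z hzA)
          (fun hzK => hgK z (hAρ hzA) (hKc hzK)) hzc
    exact ((entireHull_subset_of_annulus_subset h hrR hR hK (hA.trans interior_subset)).trans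
      hKc).trans subset_union_left

end Annulus

section EmbeddedDiscHull

variable {E : Type*} [NormedAddCommGroup E] [NormedSpace ℂ E]

theorem exists_isEmbeddedDisc [CompleteSpace E] {D : Set ℂ} {g : ℂ → E} {r : ℝ} (hr : 0 ≤ r)
    (hD : IsOpen D) (hrD : closedBall 0 r ⊆ D) (hg : DifferentiableOn ℂ g D)
    (hinj : InjOn g (closedBall 0 r)) (hderiv : ∀ z ∈ closedBall 0 r, deriv g z ≠ 0) :
    ∃ ρ > r, ball 0 ρ ⊆ D ∧ IsEmbeddedDisc g ρ := by
  have hcpt := isCompact_closedBall (0 : ℂ) r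
  have hDz : ∀ z ∈ closedBall (0 : ℂ) r, D ∈ 𝓝 z := fun z hz => hD.mem_nhds (hrD hz)
  obtain ⟨t, ht, htinj⟩ := hinj.exists_mem_nhdsSet hcpt
    (fun z hz => (hg.differentiableAt (hDz z hz)).continuousAt)
    fun z hz => exists_mem_nhds_injOn_of_deriv_ne_zero (hDz z hz) hg (hderiv z hz)
  obtain ⟨U, hU, hrU, hUt⟩ := mem_nhdsSet_iff_exists.1 ht
  have hV : IsOpen (D ∩ deriv g ⁻¹' {0}ᶜ) :=
    ((hg.deriv hD).continuousOn).isOpen_inter_preimage hD isOpen_compl_singleton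
  obtain ⟨δ, hδ, hsub⟩ := hcpt.exists_thickening_subset_open (hU.inter hV)
    fun z hz => ⟨hrU hz, hrD hz, hderiv z hz⟩
  rw [thickening_closedBall hδ hr] at hsub
  exact ⟨δ + r, by linarith, fun z hz => (hsub hz).2.1, hg.mono fun z hz => (hsub hz).2.1,
    htinj.mono fun z hz => hUt (hsub hz).1, fun z hz => (hsub hz).2.2⟩

theorem hull_union_embedded_disk_general [FiniteDimensional ℂ E] {K : Set E} (hK : IsCompact K)
    (hKconv : entireHull K ⊆ K) {D : Set ℂ} (hD : IsOpen D) (hDdisk : closedBall (0 : ℂ) 1 ⊆ D)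
    {g : ℂ → E} (hghol : DifferentiableOn ℂ g D) (hginj : InjOn g (closedBall 0 1))
    (hgderiv : ∀ z ∈ closedBall 0 1, fderiv ℂ g z ≠ 0)
    (hgK : Disjoint (g '' closedBall 0 1) K) :
    entireHull (K ∪ g '' closedBall 0 1) = K ∪ g '' closedBall 0 1 := by
  have := FiniteDimensional.complete ℂ E
  obtain ⟨ρ, hρ, hρD, hgρ⟩ := exists_isEmbeddedDisc zero_le_one
    (hghol.continuousOn.isOpen_inter_preimage hD hK.isClosed.isOpen_compl)
    (fun z hz => ⟨hDdisk hz, disjoint_left.1 hgK ⟨z, hz, rfl⟩⟩) (hghol.mono inter_subset_left) hginj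
    fun z hz => by
      rw [← norm_ne_zero_iff, norm_deriv_eq_norm_fderiv]
      exact norm_ne_zero_iff.2 (hgderiv z hz)
  exact (entireHull_union_image_closedBall_subset hgρ one_pos hρ hK hKconv
    fun z hz => (hρD hz).2).antisymm (subset_entireHull _)

end EmbeddedDiscHull

section HolomorphicHull

variable {n : ℕ} {K : Set (EuclideanSpace ℂ (Fin n))}

theorem entireHull_subset_holomorphicHull (hK : IsCompact K) :
    entireHull K ⊆ holomorphicHull K := fun _ hz f hf =>
  let ⟨w, hw, hle⟩ := hz f hf
  hle.trans (le_csSup (hK.image hf.continuous.norm).bddAbove ⟨w, hw, rfl⟩)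

theorem holomorphicHull_eq_entireHull (hK : IsCompact K) (hne : K.Nonempty) :
    holomorphicHull K = entireHull K := by
  refine Subset.antisymm (fun z hz f hf => ?_) (entireHull_subset_holomorphicHull hK)
  obtain ⟨w, hw, hmax⟩ := hK.exists_isMaxOn hne hf.continuous.norm.continuousOn
  exact ⟨w, hw, (hz f hf).trans (csSup_le (hne.image _) (forall_mem_image.2 fun v hv => hmax hv))⟩

end HolomorphicHull

/-- **Attaching an embedded closed disk to a holomorphically convex compact set
preserves holomorphic convexity.**  If `K ⊆ ℂⁿ` is compact and `O(ℂⁿ)`-convex,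
`D ⊆ ℂ` is an open neighborhood of the closed unit disk, and `g : D → ℂⁿ` is an
injective holomorphic map with nowhere-vanishing derivative whose image misses
`K`, then `K ∪ g(𝔻̄)` is `O(ℂⁿ)`-convex. -/
theorem hull_union_embedded_disk
    (n : ℕ) (hn : 1 ≤ n)
    (K : Set (EuclideanSpace ℂ (Fin n))) (hK : IsCompact K)
    (hKconv : holomorphicHull K = K)
    (D : Set ℂ) (hD : IsOpen D) (hDdisk : Metric.closedBall (0:ℂ) 1 ⊆ D)
    (g : ℂ → EuclideanSpace ℂ (Fin n))
    (hghol : DifferentiableOn ℂ g D)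
    (hginj : Set.InjOn g D)
    (hgderiv : ∀ z ∈ D, fderiv ℂ g z ≠ 0)
    (hgK : Disjoint (g '' D) K) :
    holomorphicHull (K ∪ g '' Metric.closedBall (0:ℂ) 1)
      = K ∪ g '' Metric.closedBall (0:ℂ) 1 := by
  rw [holomorphicHull_eq_entireHull (hK.union ((isCompact_closedBall 0 1).image_of_continuousOn
    (hghol.continuousOn.mono hDdisk))) (((nonempty_closedBall.2 zero_le_one).image g).inr)]
  exact hull_union_embedded_disk_general hK
    ((entireHull_subset_holomorphicHull hK).trans hKconv.subset) hD hDdisk hghol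
    (hginj.mono hDdisk) (fun z hz => hgderiv z (hDdisk hz)) (hgK.mono_left (image_mono hDdisk))
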